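/- Let d ≥ 2 and assume K ∈ L¹(T^d; ℝ^d) is divergence-free in the sense of distributions and K = ∇·V in distributions for some V ∈ L^∞(T^d; ℝ^{d×d}). Let λ > 1 and let μ₀ be a smooth probability density on T^d with 1/λ ≤ μ₀ ≤ λ. Then the equation ∂_t ρ̄_t = −∇·((K∗ρ̄_t) ρ̄_t) + Δρ̄_t on ℝ⁺ × T^d with ρ̄(0) = μ₀ has, within the class of bounded solutions, a unique solution ρ̄; this solution is smooth on ℝ⁺ × T^d and satisfies 1/λ ≤ ρ̄(t,x) ≤ λ for all t ≥ 0 and x ∈ T^d. -/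

import Mathlib

open MeasureTheory Real Set

noncomputable section

/-- The fundamental domain `[0,1]^d` of the torus `T^d = ℝ^d/ℤ^d`. -/
def cube (d : ℕ) : Set (Fin d → ℝ) := Set.Icc 0 1

/-- A function on `ℝ^d` is `ℤ^d`-periodic, i.e. is a function on the torus `T^d`. -/
def Per {d : ℕ} {E : Type*} (f : (Fin d → ℝ) → E) : Prop :=
  ∀ (k : Fin d → ℤ) (x : Fin d → ℝ), f (x + fun i => (k i : ℝ)) = f x

/-- The partial derivative `∂_α f`. -/
def pdv {d : ℕ} (α : Fin d) (f : (Fin d → ℝ) → ℝ) (x : Fin d → ℝ) : ℝ :=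
  fderiv ℝ f x (Pi.single α 1)

/-- Convolution on the torus: `(f ∗ g)(x) = ∫_{T^d} f(x−y) g(y) dy`. -/
def tconv {d : ℕ} (f g : (Fin d → ℝ) → ℝ) (x : Fin d → ℝ) : ℝ :=
  ∫ y in cube d, f (x - y) * g y

/-- `∇·K = 0` in the sense of distributions on the torus:
`∫ K·∇φ = 0` for all smooth periodic test functions `φ`. -/
def DistDivFree {d : ℕ} (K : (Fin d → ℝ) → (Fin d → ℝ)) : Prop :=
  ∀ φ : (Fin d → ℝ) → ℝ, ContDiff ℝ (⊤ : ℕ∞) φ → Per φ →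
    (∫ x in cube d, ∑ α, K x α * pdv α φ x) = 0

/-- `K = ∇·V` in the sense of distributions on the torus:
`∫ K_α φ = −Σ_β ∫ V_{α,β} ∂_β φ` for all smooth periodic test functions `φ`. -/
def IsDistDivOf {d : ℕ} (K : (Fin d → ℝ) → (Fin d → ℝ))
    (V : (Fin d → ℝ) → Fin d → Fin d → ℝ) : Prop :=
  ∀ (α : Fin d) (φ : (Fin d → ℝ) → ℝ), ContDiff ℝ (⊤ : ℕ∞) φ → Per φ →
    (∫ x in cube d, K x α * φ x) = -∑ β, ∫ x in cube d, V x α β * pdv β φ x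

/-- Weak formulation of the McKean–Vlasov equation
`∂_t ρ = −∇·((K∗ρ)ρ) + Δρ` on `ℝ⁺ × T^d`: tested against smooth periodic `φ`,
`∫ ρ_t φ − ∫ ρ_0 φ = ∫₀ᵗ ∫ ρ_s ((K∗ρ_s)·∇φ + Δφ)`. -/
def WeakMKV {d : ℕ} (K : (Fin d → ℝ) → (Fin d → ℝ)) (ρ : ℝ → (Fin d → ℝ) → ℝ) : Prop :=
  ∀ φ : (Fin d → ℝ) → ℝ, ContDiff ℝ (⊤ : ℕ∞) φ → Per φ → ∀ t, 0 ≤ t →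
    (∫ x in cube d, ρ t x * φ x) - (∫ x in cube d, ρ 0 x * φ x)
      = ∫ s in (0:ℝ)..t, ∫ x in cube d, ρ s x *
          ((∑ α, tconv (fun y => K y α) (ρ s) x * pdv α φ x)
            + ∑ α, pdv α (pdv α φ) x)

/-!
Let `μ₀` take values in `[a, b]`, and let `χ` be a smooth cutoff with `χ(r) = r` on `[a, b]`. With
the flux `(K ∗ ρ) ρ` replaced by `(K ∗ χ(ρ)) χ(ρ)`, Duhamel's formula is a fixed point equation on
bounded continuous functions. As the gradient of the heat kernel at time `t` has mass of order
`t^(-1/2)`, this is a contraction for an exponentially weighted norm, whatever the length of the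
time interval. The fixed point depends smoothly on the data and commutes with translations in
space, so it is smooth in `x`, and the equation then trades space derivatives for time derivatives.
Because `K` is divergence free, so is `K ∗ χ(ρ)`; the nonlinearity is a pure drift term, and the
maximum principle keeps the solution in `[a, b]`, where the cutoff is invisible.

For uniqueness, the Fourier coefficients of the difference of two bounded weak solutions solve heat
equations forced by the divergence of a flux whose `L²` norm is controlled by that of the
difference. The dissipation absorbs this divergence, and Grönwall's inequality together with
Parseval's identity shows that the difference vanishes.
-/

open scoped ContDiff NNReal Topology BoundedContinuousFunction

/-! ### Periodic functions -/

section Periodic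

variable {d : ℕ}

theorem Per.fderiv {E : Type*} [NormedAddCommGroup E] [NormedSpace ℝ E] {f : (Fin d → ℝ) → E}
    (hf : Per f) : Per (fderiv ℝ f) := by
  intro k x
  rw [← fderiv_comp_add_right]
  congr 1
  exact funext (hf k)

theorem Per.pdv {f : (Fin d → ℝ) → ℝ} (hf : Per f) (i : Fin d) : Per (pdv i f) := fun k x =>
  congrArg (fun L : (Fin d → ℝ) →L[ℝ] ℝ => L (Pi.single i 1)) (hf.fderiv k x)

namespace McKeanVlasov

theorem isCompact_cube : IsCompact (cube d) := isCompact_Icc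

theorem exists_add_intCast_mem_cube (x : Fin d → ℝ) :
    ∃ k : Fin d → ℤ, (x + fun i => (k i : ℝ)) ∈ cube d := by
  refine ⟨fun i => -⌊x i⌋, fun i => ?_, fun i => ?_⟩
  · simp [Int.floor_le (x i)]
  · have := Int.lt_floor_add_one (x i)
    simp only [Pi.add_apply, Int.cast_neg, Pi.one_apply]
    linarith

theorem cube_subset_closure_interior : cube d ⊆ closure (interior (cube d)) := by
  have interior_nonempty : (interior (cube d)).Nonempty := by
    refine ⟨fun _ => 1 / 2, ?_⟩
    rw [cube, ← pi_univ_Icc, interior_pi_set finite_univ]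
    intro i _
    simp only [Pi.zero_apply, Pi.one_apply, interior_Icc]
    constructor <;> norm_num
  have cube_convex : Convex ℝ (cube d) := convex_Icc 0 1
  rw [cube_convex.closure_interior_eq_closure_of_nonempty_interior interior_nonempty]
  exact subset_closure

end McKeanVlasov

open McKeanVlasov

theorem Per.exists_norm_le {E : Type*} [NormedAddCommGroup E] {f : (Fin d → ℝ) → E}
    (hf : Per f) (hc : Continuous f) : ∃ C, ∀ x, ‖f x‖ ≤ C := by
  obtain ⟨C, hC⟩ := isCompact_cube.exists_bound_of_continuousOn hc.continuousOn
  refine ⟨C, fun x => ?_⟩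
  obtain ⟨k, hk⟩ := exists_add_intCast_mem_cube x
  exact hf k x ▸ hC _ hk

theorem Per.eq_of_ae_eq_cube {f g : (Fin d → ℝ) → ℝ} (hf : Per f) (hg : Per g)
    (continuous_f : Continuous f) (continuous_g : Continuous g)
    (h : ∀ᵐ x ∂volume.restrict (cube d), f x = g x) : f = g := by
  have eqOn_cube : EqOn f g (cube d) := Measure.eqOn_of_ae_eq h continuous_f.continuousOn
    continuous_g.continuousOn cube_subset_closure_interior
  ext x
  obtain ⟨k, hk⟩ := exists_add_intCast_mem_cube x
  rw [← hf k x, ← hg k x, eqOn_cube hk]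

namespace McKeanVlasov

theorem fderiv_apply_eq_sum_pdv (f : (Fin d → ℝ) → ℝ) (x v : Fin d → ℝ) :
    fderiv ℝ f x v = ∑ i, v i * pdv i f x := by
  conv_lhs => rw [← Finset.univ_sum_single v, map_sum]
  refine Finset.sum_congr rfl fun i _ => ?_
  rw [pdv, ← smul_eq_mul, ← map_smul, ← Pi.single_smul', smul_eq_mul, mul_one]

theorem contDiff_pdv {f : (Fin d → ℝ) → ℝ} (hf : ContDiff ℝ ∞ f) (i : Fin d) :
    ContDiff ℝ ∞ (pdv i f) :=
  (hf.fderiv_right (by simp)).clm_apply contDiff_const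

/-- Smooth functions on the torus, the test functions of the weak formulations. -/
structure SmoothPer (f : (Fin d → ℝ) → ℝ) : Prop where
  contDiff : ContDiff ℝ ∞ f
  per : Per f

namespace SmoothPer

variable {f : (Fin d → ℝ) → ℝ}

theorem pdv (hf : SmoothPer f) (i : Fin d) : SmoothPer (pdv i f) :=
  ⟨contDiff_pdv hf.contDiff i, hf.per.pdv i⟩

theorem continuous (hf : SmoothPer f) : Continuous f := hf.contDiff.continuous

theorem exists_norm_le (hf : SmoothPer f) : ∃ C, ∀ x, ‖f x‖ ≤ C :=
  hf.per.exists_norm_le hf.continuous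

end SmoothPer

end McKeanVlasov

end Periodic

namespace McKeanVlasov

/-! ### Smoothness of superposition operators -/

section Taylor

variable {E F : Type*} [NormedAddCommGroup E] [NormedSpace ℝ E]
  [NormedAddCommGroup F] [NormedSpace ℝ F]

theorem norm_sub_sub_fderiv_le_sq {f : E → F} (hf : Differentiable ℝ f) {C : ℝ≥0}
    (hC : LipschitzWith C (fderiv ℝ f)) (x h : E) :
    ‖f (x + h) - f x - fderiv ℝ f x h‖ ≤ C * ‖h‖ ^ 2 := by
  have fderiv_sub_le : ∀ z ∈ Metric.closedBall x ‖h‖, ‖fderiv ℝ f z - fderiv ℝ f x‖ ≤ C * ‖h‖ := by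
    intro z hz
    rw [mem_closedBall_iff_norm] at hz
    exact (hC.norm_sub_le z x).trans (by gcongr)
  have := (convex_closedBall x ‖h‖).norm_image_sub_le_of_norm_fderiv_le' (x := x)
    (y := x + h) (fun y _ => hf y) fderiv_sub_le (by simp) (by simp)
  rwa [add_sub_cancel_left, mul_assoc, ← sq] at this

theorem hasFDerivAt_of_norm_sub_le_sq {f : E → F} {f' : E →L[ℝ] F} {x : E} {C : ℝ}
    (h : ∀ k, ‖f (x + k) - f x - f' k‖ ≤ C * ‖k‖ ^ 2) : HasFDerivAt f f' x := by
  rw [hasFDerivAt_iff_isLittleO_nhds_zero]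
  have remainder_isBigO : (fun k => f (x + k) - f x - f' k) =O[𝓝 0] fun k => ‖k‖ ^ 2 :=
    .of_bound C (.of_forall fun k => by simpa using h k)
  have sq_isLittleO : (fun k : E => ‖k‖ ^ 2) =o[𝓝 0] fun k => ‖k‖ ^ 1 :=
    (Asymptotics.isLittleO_pow_pow one_lt_two).comp_tendsto tendsto_norm_zero
  simp only [pow_one] at sq_isLittleO
  exact (remainder_isBigO.trans_isLittleO sq_isLittleO).of_norm_right

end Taylor

section Nemytskii

/-- Smooth compactly supported nonlinearities: superposition with such a function is a smooth map
of every space of bounded continuous functions. -/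
structure IsCutoff (ψ : ℝ → ℝ) : Prop where
  contDiff : ContDiff ℝ ∞ ψ
  hasCompactSupport : HasCompactSupport ψ

namespace IsCutoff

variable {ψ : ℝ → ℝ} (hψ : IsCutoff ψ)
include hψ

protected theorem deriv : IsCutoff (deriv ψ) :=
  ⟨(contDiff_infty_iff_deriv.1 hψ.contDiff).2, hψ.hasCompactSupport.deriv⟩

theorem differentiable : Differentiable ℝ ψ := hψ.contDiff.differentiable (by simp)

theorem exists_norm_le : ∃ C, ∀ x, ‖ψ x‖ ≤ C :=
  hψ.hasCompactSupport.exists_bound_of_continuous hψ.contDiff.continuous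

theorem exists_lipschitzWith : ∃ C, LipschitzWith C ψ :=
  ContDiff.lipschitzWith_of_hasCompactSupport hψ.hasCompactSupport hψ.contDiff (by simp)

theorem exists_norm_sub_sub_deriv_le_sq :
    ∃ C : ℝ≥0, ∀ a b, ‖ψ (a + b) - ψ a - deriv ψ a * b‖ ≤ C * ‖b‖ ^ 2 := by
  obtain ⟨C, hC⟩ := ContDiff.lipschitzWith_of_hasCompactSupport (hψ.hasCompactSupport.fderiv ℝ)
    (hψ.contDiff.fderiv_right (m := ∞) (by simp)) (by simp)
  refine ⟨C, fun a b => ?_⟩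
  have := norm_sub_sub_fderiv_le_sq hψ.differentiable hC a b
  rwa [fderiv_eq_smul_deriv, smul_eq_mul, mul_comm b] at this

end IsCutoff

theorem exists_isCutoff_eq_on_Icc (a b : ℝ) :
    ∃ χ : ℝ → ℝ, IsCutoff χ ∧ ∀ r ∈ Icc a b, χ r = r := by
  let R := max |a| |b| + 1
  have hR : 0 < R := by positivity
  let η : ContDiffBump (0 : ℝ) := ⟨R, R + 1, hR, lt_add_one R⟩
  refine ⟨fun r => r * η r, ⟨contDiff_id.mul η.contDiff, η.hasCompactSupport.mul_left⟩,
    fun r hr => ?_⟩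
  have r_mem : r ∈ Metric.closedBall (0 : ℝ) R := by
    rw [mem_closedBall_zero_iff, norm_eq_abs]
    exact (abs_le_max_abs_abs hr.1 hr.2).trans (lt_add_one _).le
  simp only [η.one_of_mem_closedBall r_mem, mul_one]

variable {α : Type*} [TopologicalSpace α] {ψ : ℝ → ℝ}

/-- The superposition (Nemytskii) operator `v ↦ ψ ∘ v` on bounded continuous functions. -/
def nemytskii (hψ : IsCutoff ψ) (v : α →ᵇ ℝ) : α →ᵇ ℝ :=
  .ofNormedAddCommGroup (fun p => ψ (v p)) (hψ.contDiff.continuous.comp v.continuous)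
    hψ.exists_norm_le.choose fun _ => hψ.exists_norm_le.choose_spec _

theorem hasFDerivAt_nemytskii (hψ : IsCutoff ψ) (v : α →ᵇ ℝ) :
    HasFDerivAt (nemytskii hψ) (ContinuousLinearMap.mul ℝ (α →ᵇ ℝ) (nemytskii hψ.deriv v)) v := by
  obtain ⟨C, hC⟩ := hψ.exists_norm_sub_sub_deriv_le_sq
  refine hasFDerivAt_of_norm_sub_le_sq (C := C) fun k => ?_
  refine (BoundedContinuousFunction.norm_le (by positivity)).2 fun p => (hC (v p) (k p)).trans ?_
  gcongr
  exact k.norm_coe_le_norm p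

theorem contDiff_nemytskii (hψ : IsCutoff ψ) :
    ContDiff ℝ ∞ (nemytskii hψ : (α →ᵇ ℝ) → α →ᵇ ℝ) := by
  rw [contDiff_infty]
  intro n
  induction n generalizing ψ with
  | zero =>
    exact contDiff_zero.2 <| continuous_iff_continuousAt.2 fun v =>
      (hasFDerivAt_nemytskii hψ v).continuousAt
  | succ n ih =>
    refine contDiff_succ_iff_hasFDerivAt.2 ⟨_, ?_, hasFDerivAt_nemytskii hψ⟩
    have mul_bounded := (ContinuousLinearMap.mul ℝ (α →ᵇ ℝ)).isBoundedLinearMap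
    exact mul_bounded.contDiff.comp (ih hψ.deriv)

end Nemytskii

/-! ### Translations and smooth vectors -/

section Translations

/-- Space-time points `(t, x)`. -/
abbrev SpaceTime (d : ℕ) := ℝ × (Fin d → ℝ)

/-- The Banach algebra of bounded continuous functions on space-time, in which the equation is
solved. -/
abbrev BddFun (d : ℕ) := SpaceTime d →ᵇ ℝ

variable {d : ℕ}

/-- The spatial translation `w ↦ w(t, x + h)`. -/
def translate (h : Fin d → ℝ) : BddFun d →L[ℝ] BddFun d :=
  BoundedContinuousFunction.compContinuousCLM ℝ ℝ
    ⟨fun p : SpaceTime d => (p.1, p.2 + h), by fun_prop⟩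

@[simp] theorem translate_apply (h : Fin d → ℝ) (w : BddFun d) (p : SpaceTime d) :
    translate h w p = w (p.1, p.2 + h) := rfl

@[simp] theorem translate_zero (w : BddFun d) : translate 0 w = w := by ext; simp

theorem translate_translate (h k : Fin d → ℝ) (w : BddFun d) :
    translate h (translate k w) = translate (h + k) w := by
  ext; simp [add_assoc]

theorem translate_mul (h : Fin d → ℝ) (v w : BddFun d) :
    translate h (v * w) = translate h v * translate h w := rfl

theorem translate_nemytskii {ψ : ℝ → ℝ} (hψ : IsCutoff ψ) (h : Fin d → ℝ) (w : BddFun d) :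
    translate h (nemytskii hψ w) = nemytskii hψ (translate h w) := rfl

/-- Smooth vectors of the translation group: functions that are smooth in `x`, with derivatives
bounded and continuous on space-time. -/
def SpatiallySmooth (u : BddFun d) : Prop := ContDiff ℝ ∞ fun h => translate h u

/-- The partial derivative `∂ᵢ u` of a smooth vector, as an element of `BddFun d`. It is the
derivative at `0` of `h ↦ translate h u`, hence `0` if this map is not differentiable. -/
def spatialDeriv (i : Fin d) (u : BddFun d) : BddFun d :=
  fderiv ℝ (fun h => translate h u) 0 (Pi.single i 1)

/-- Operators commuting with all spatial translations. -/
def TranslationInvariant (L : BddFun d →L[ℝ] BddFun d) : Prop :=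
  ∀ h w, L (translate h w) = translate h (L w)

variable {u v : BddFun d}

namespace SpatiallySmooth

theorem differentiable (hu : SpatiallySmooth u) : Differentiable ℝ fun h => translate h u :=
  ContDiff.differentiable hu (by simp)

theorem hasFDerivAt_zero (hu : SpatiallySmooth u) :
    HasFDerivAt (fun h => translate h u) (fderiv ℝ (fun h => translate h u) 0) 0 :=
  (hu.differentiable 0).hasFDerivAt

theorem translate_spatialDeriv (hu : SpatiallySmooth u) (i : Fin d) (h : Fin d → ℝ) :
    translate h (spatialDeriv i u) = fderiv ℝ (fun h => translate h u) h (Pi.single i 1) := by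
  have deriv_translate : HasFDerivAt (fun k => translate (h + k) u)
      ((translate h).comp (fderiv ℝ (fun h => translate h u) 0)) 0 := by
    simpa only [Function.comp_def, translate_translate] using
      (translate h).hasFDerivAt.comp 0 hu.hasFDerivAt_zero
  have deriv_shift : HasFDerivAt (fun k => translate (h + k) u)
      (fderiv ℝ (fun h => translate h u) h) 0 := by
    have := (hasFDerivAt_comp_add_left (f := fun h => translate h u) (x := 0) h).2
      (hu.differentiable (h + 0)).hasFDerivAt
    simpa only [add_zero] using this
  rw [← deriv_translate.unique deriv_shift]
  rfl

protected theorem spatialDeriv (hu : SpatiallySmooth u) (i : Fin d) :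
    SpatiallySmooth (spatialDeriv i u) := by
  simp only [SpatiallySmooth, hu.translate_spatialDeriv i]
  exact (ContDiff.fderiv_right (m := ∞) hu (by simp)).clm_apply contDiff_const

theorem zero : SpatiallySmooth (0 : BddFun d) := by
  simp only [SpatiallySmooth, map_zero]
  exact contDiff_const

theorem add (hu : SpatiallySmooth u) (hv : SpatiallySmooth v) : SpatiallySmooth (u + v) := by
  simp only [SpatiallySmooth, map_add]
  exact ContDiff.add hu hv

theorem neg (hu : SpatiallySmooth u) : SpatiallySmooth (-u) := by
  simp only [SpatiallySmooth, map_neg]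
  exact ContDiff.neg hu

theorem sum {ι : Type*} {s : Finset ι} {u : ι → BddFun d}
    (hu : ∀ i ∈ s, SpatiallySmooth (u i)) : SpatiallySmooth (∑ i ∈ s, u i) := by
  simp only [SpatiallySmooth, map_sum]
  exact ContDiff.sum hu

theorem mul (hu : SpatiallySmooth u) (hv : SpatiallySmooth v) : SpatiallySmooth (u * v) := by
  simp only [SpatiallySmooth, translate_mul]
  exact ContDiff.mul hu hv

theorem map (hu : SpatiallySmooth u) {L : BddFun d →L[ℝ] BddFun d} (hL : TranslationInvariant L) :
    SpatiallySmooth (L u) := by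
  simp only [SpatiallySmooth, ← hL _ _]
  exact L.contDiff.comp hu

protected theorem nemytskii (hu : SpatiallySmooth u) {ψ : ℝ → ℝ} (hψ : IsCutoff ψ) :
    SpatiallySmooth (nemytskii hψ u) := by
  simp only [SpatiallySmooth, translate_nemytskii]
  exact (contDiff_nemytskii hψ).comp hu

end SpatiallySmooth

theorem spatialDeriv_neg (i : Fin d) (u : BddFun d) : spatialDeriv i (-u) = -spatialDeriv i u := by
  simp only [spatialDeriv, map_neg, fderiv_fun_neg]
  rfl

theorem spatialDeriv_add (hu : SpatiallySmooth u) (hv : SpatiallySmooth v) (i : Fin d) :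
    spatialDeriv i (u + v) = spatialDeriv i u + spatialDeriv i v := by
  simp only [spatialDeriv, map_add]
  rw [fderiv_fun_add (hu.differentiable 0) (hv.differentiable 0)]
  rfl

theorem spatialDeriv_mul (hu : SpatiallySmooth u) (hv : SpatiallySmooth v) (i : Fin d) :
    spatialDeriv i (u * v) = spatialDeriv i u * v + u * spatialDeriv i v := by
  simp only [spatialDeriv, translate_mul]
  rw [fderiv_fun_mul (hu.differentiable 0) (hv.differentiable 0)]
  simp only [translate_zero, add_apply, smul_apply, smul_eq_mul]
  ring

theorem spatialDeriv_map (hu : SpatiallySmooth u) {L : BddFun d →L[ℝ] BddFun d}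
    (hL : TranslationInvariant L) (i : Fin d) : spatialDeriv i (L u) = L (spatialDeriv i u) := by
  have := (L.hasFDerivAt.comp (0 : Fin d → ℝ) hu.hasFDerivAt_zero).fderiv
  simp only [spatialDeriv, ← hL _ _]
  exact congrArg (fun A => A (Pi.single i 1)) this

theorem spatialDeriv_nemytskii (hu : SpatiallySmooth u) {ψ : ℝ → ℝ} (hψ : IsCutoff ψ)
    (i : Fin d) :
    spatialDeriv i (nemytskii hψ u) = nemytskii hψ.deriv u * spatialDeriv i u := by
  have := ((hasFDerivAt_nemytskii hψ (translate 0 u)).comp (0 : Fin d → ℝ)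
    hu.hasFDerivAt_zero).fderiv
  rw [translate_zero] at this
  exact congrArg (fun A => A (Pi.single i 1)) this

namespace SpatiallySmooth

theorem contDiff_slice (hu : SpatiallySmooth u) (t : ℝ) : ContDiff ℝ ∞ fun x => u (t, x) := by
  have := (BoundedContinuousFunction.evalCLM ℝ (t, (0 : Fin d → ℝ))).contDiff.comp hu
  simpa [Function.comp_def] using this

theorem pdv_slice (hu : SpatiallySmooth u) (t : ℝ) (x : Fin d → ℝ) (i : Fin d) :
    pdv i (fun x => u (t, x)) x = spatialDeriv i u (t, x) := by
  have := (BoundedContinuousFunction.evalCLM ℝ (t, (0 : Fin d → ℝ))).hasFDerivAt.comp x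
    (hu.differentiable x).hasFDerivAt
  simp only [Function.comp_def, BoundedContinuousFunction.evalCLM_apply, translate_apply,
    zero_add] at this
  rw [pdv, this.fderiv, ContinuousLinearMap.comp_apply, ← hu.translate_spatialDeriv]
  simp

theorem fderiv_slice_apply (hu : SpatiallySmooth u) (t : ℝ) (x v : Fin d → ℝ) :
    fderiv ℝ (fun x => u (t, x)) x v = ∑ i, v i * spatialDeriv i u (t, x) := by
  simp only [fderiv_apply_eq_sum_pdv, hu.pdv_slice]

end SpatiallySmooth

/-! ### Smooth periodic functions are smooth vectors -/

namespace SmoothPer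

variable {f : (Fin d → ℝ) → ℝ}

/-- A smooth periodic function of `x`, regarded as a function of `(t, x)` that is constant in
time. -/
def toBddFun (hf : SmoothPer f) : BddFun d :=
  .ofNormedAddCommGroup (fun p => f p.2) (hf.continuous.comp continuous_snd)
    hf.exists_norm_le.choose fun _ => hf.exists_norm_le.choose_spec _

@[simp] theorem toBddFun_apply (hf : SmoothPer f) (p : SpaceTime d) : hf.toBddFun p = f p.2 := rfl

theorem exists_lipschitzWith_fderiv (hf : SmoothPer f) : ∃ C, LipschitzWith C (fderiv ℝ f) := by
  have fderiv_contDiff : ContDiff ℝ ∞ (fderiv ℝ f) := hf.contDiff.fderiv_right (by simp)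
  obtain ⟨C, hC⟩ :=
    hf.per.fderiv.fderiv.exists_norm_le (fderiv_contDiff.continuous_fderiv (by simp))
  exact ⟨C.toNNReal, lipschitzWith_of_nnnorm_fderiv_le (fderiv_contDiff.differentiable (by simp))
    fun x => NNReal.le_toNNReal_of_coe_le (hC x)⟩

theorem hasFDerivAt_translate (hf : SmoothPer f) (h : Fin d → ℝ) :
    HasFDerivAt (fun h => translate h hf.toBddFun)
      (∑ i, (ContinuousLinearMap.proj i : (Fin d → ℝ) →L[ℝ] ℝ).smulRight
        (translate h (hf.pdv i).toBddFun)) h := by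
  obtain ⟨C, hC⟩ := hf.exists_lipschitzWith_fderiv
  refine hasFDerivAt_of_norm_sub_le_sq (C := C) fun k => ?_
  refine (BoundedContinuousFunction.norm_le (by positivity)).2 fun p => ?_
  refine le_of_eq_of_le ?_
    (norm_sub_sub_fderiv_le_sq (hf.contDiff.differentiable (by simp)) hC (p.2 + h) k)
  simp [fderiv_apply_eq_sum_pdv, BoundedContinuousFunction.coe_sum, add_assoc]

theorem spatiallySmooth (hf : SmoothPer f) : SpatiallySmooth hf.toBddFun := by
  rw [SpatiallySmooth, contDiff_infty]
  intro n
  induction n generalizing f with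
  | zero =>
    exact contDiff_zero.2 <| continuous_iff_continuousAt.2 fun h =>
      (hf.hasFDerivAt_translate h).continuousAt
  | succ n ih =>
    refine contDiff_succ_iff_hasFDerivAt.2 ⟨_, ContDiff.sum fun i _ => ?_, hf.hasFDerivAt_translate⟩
    exact contDiff_const.smulRight (ih (hf.pdv i))

theorem spatialDeriv_toBddFun (hf : SmoothPer f) (i : Fin d) :
    spatialDeriv i hf.toBddFun = (hf.pdv i).toBddFun := by
  ext p
  rw [← hf.spatiallySmooth.pdv_slice p.1 p.2 i]
  rfl

end SmoothPer

end Translations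

/-! ### Integral operators on bounded continuous functions -/

section DominatedKernel

variable {P Ω : Type*} [TopologicalSpace P] [MeasurableSpace P] [MeasurableSpace Ω] {ν : Measure Ω}

/-- The data of an integral operator `w ↦ (p ↦ ∫ weight p z * w (point p z) ∂ν(z))` whose weight is
dominated by an integrable function, so that it acts on bounded continuous functions. -/
structure DominatedKernel (P : Type*) {Ω : Type*} [TopologicalSpace P] [MeasurableSpace P]
    [MeasurableSpace Ω] (ν : Measure Ω) where
  weight : P → Ω → ℝ
  point : P → Ω → P
  bound : Ω → ℝ
  integrable_bound : Integrable bound ν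
  continuous_weight : ∀ z, Continuous fun p => weight p z
  continuous_point : ∀ z, Continuous fun p => point p z
  aestronglyMeasurable_weight : ∀ p, AEStronglyMeasurable (weight p) ν
  measurable_point : ∀ p, Measurable (point p)
  norm_weight_le : ∀ p z, ‖weight p z‖ ≤ bound z

namespace DominatedKernel

variable (k : DominatedKernel P ν)

theorem norm_weight_mul_le (w : P →ᵇ ℝ) (p : P) (z : Ω) :
    ‖k.weight p z * w (k.point p z)‖ ≤ k.bound z * ‖w‖ := by
  have bound_nonneg : 0 ≤ k.bound z := (norm_nonneg _).trans (k.norm_weight_le p z)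
  rw [norm_mul]
  gcongr
  exacts [k.norm_weight_le p z, w.norm_coe_le_norm _]

theorem norm_integral_le (w : P →ᵇ ℝ) (p : P) :
    ‖∫ z, k.weight p z * w (k.point p z) ∂ν‖ ≤ (∫ z, k.bound z ∂ν) * ‖w‖ := by
  rw [← integral_mul_const]
  exact norm_integral_le_of_norm_le (k.integrable_bound.mul_const _)
    (.of_forall (k.norm_weight_mul_le w p))

variable [OpensMeasurableSpace P]

theorem aestronglyMeasurable_weight_mul (w : P →ᵇ ℝ) (p : P) :
    AEStronglyMeasurable (fun z => k.weight p z * w (k.point p z)) ν :=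
  (k.aestronglyMeasurable_weight p).mul
    (w.continuous.measurable.comp (k.measurable_point p)).aestronglyMeasurable

theorem integrable_weight_mul (w : P →ᵇ ℝ) (p : P) :
    Integrable (fun z => k.weight p z * w (k.point p z)) ν :=
  (k.integrable_bound.mul_const ‖w‖).mono' (k.aestronglyMeasurable_weight_mul w p)
    (.of_forall (k.norm_weight_mul_le w p))

variable [FirstCountableTopology P]

theorem continuous_integral (w : P →ᵇ ℝ) :
    Continuous fun p => ∫ z, k.weight p z * w (k.point p z) ∂ν :=
  continuous_of_dominated (k.aestronglyMeasurable_weight_mul w)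
    (fun p => .of_forall (k.norm_weight_mul_le w p)) (k.integrable_bound.mul_const _)
    (.of_forall fun z => (k.continuous_weight z).mul (w.continuous.comp (k.continuous_point z)))

/-- The bounded operator on `P →ᵇ ℝ` defined by a dominated kernel. -/
def operator : (P →ᵇ ℝ) →L[ℝ] P →ᵇ ℝ :=
  LinearMap.mkContinuousOfExistsBound
    { toFun := fun w => .ofNormedAddCommGroup (fun p => ∫ z, k.weight p z * w (k.point p z) ∂ν)
        (k.continuous_integral w) _ (k.norm_integral_le w)
      map_add' := fun v w => by
        ext p
        simpa [mul_add] using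
          integral_add (k.integrable_weight_mul v p) (k.integrable_weight_mul w p)
      map_smul' := fun c w => by
        ext p
        simp [mul_left_comm, integral_const_mul] }
    ⟨|∫ z, k.bound z ∂ν|, fun w => (BoundedContinuousFunction.norm_le (by positivity)).2 fun p =>
      (k.norm_integral_le w p).trans (by gcongr; exact le_abs_self _)⟩

theorem operator_apply (w : P →ᵇ ℝ) (p : P) :
    k.operator w p = ∫ z, k.weight p z * w (k.point p z) ∂ν := rfl

end DominatedKernel

theorem DominatedKernel.translationInvariant {d : ℕ} (k : DominatedKernel (SpaceTime d) ν)
    (hweight : ∀ t x h z, k.weight (t, x + h) z = k.weight (t, x) z)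
    (hpoint : ∀ t x h z, k.point (t, x + h) z =
      ((k.point (t, x) z).1, (k.point (t, x) z).2 + h)) :
    TranslationInvariant k.operator := by
  intro h w
  ext ⟨t, x⟩
  simp only [translate_apply, operator_apply, hweight, hpoint]

end DominatedKernel

/-! ### The Gaussian measure and the heat flow -/

section Gaussian

open ProbabilityTheory

variable {d : ℕ}

/-- The density `(2π)^(-d/2) exp(-|y|²/2)` of the standard Gaussian measure on `ℝ^d`. -/
def gaussianDensity (y : Fin d → ℝ) : ℝ := ∏ i, gaussianPDFReal 0 1 (y i)

theorem gaussianDensity_nonneg (y : Fin d → ℝ) : 0 ≤ gaussianDensity y :=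
  Finset.prod_nonneg fun _ _ => gaussianPDFReal_nonneg 0 1 _

theorem gaussianDensity_eq (y : Fin d → ℝ) :
    gaussianDensity y = (√(2 * π))⁻¹ ^ d * rexp (-(1 / 2) * ∑ i, y i ^ 2) := by
  simp only [gaussianDensity, gaussianPDFReal, NNReal.coe_one, mul_one, sub_zero,
    Finset.prod_mul_distrib, Finset.prod_const, Finset.card_univ, Fintype.card_fin, ← exp_sum,
    Finset.mul_sum]
  ring_nf

theorem hasFDerivAt_gaussianDensity (y : Fin d → ℝ) :
    HasFDerivAt gaussianDensity
      (-gaussianDensity y • ∑ i, y i • (ContinuousLinearMap.proj i : (Fin d → ℝ) →L[ℝ] ℝ)) y := by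
  have deriv_sum_sq : HasFDerivAt (fun y : Fin d → ℝ => ∑ i, y i ^ 2)
      (∑ i, (2 * y i) • (ContinuousLinearMap.proj i : (Fin d → ℝ) →L[ℝ] ℝ)) y :=
    (HasFDerivAt.fun_sum (u := Finset.univ) fun i _ =>
      HasFDerivAt.pow (hasFDerivAt_apply i y) 2).congr_fderiv (by ext v; simp)
  rw [gaussianDensity_eq, funext gaussianDensity_eq]
  refine ((deriv_sum_sq.const_mul (-(1 / 2))).exp.const_mul _).congr_fderiv ?_
  ext v
  simp only [Finset.smul_sum, FunLike.coe_sum, smul_apply,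
    Finset.sum_apply, ContinuousLinearMap.proj_apply, smul_eq_mul]
  exact Finset.sum_congr rfl fun i _ => by ring

theorem pdv_gaussianDensity (i : Fin d) (y : Fin d → ℝ) :
    pdv i gaussianDensity y = -(gaussianDensity y * y i) := by
  simp [pdv, (hasFDerivAt_gaussianDensity y).fderiv, Pi.single_apply]

theorem continuous_gaussianDensity : Continuous (gaussianDensity (d := d)) :=
  continuous_iff_continuousAt.2 fun y => (hasFDerivAt_gaussianDensity y).continuousAt

theorem integrable_gaussianDensity : Integrable (gaussianDensity (d := d)) :=
  .fintype_prod (f := fun _ => gaussianPDFReal 0 1) fun _ => integrable_gaussianPDFReal 0 1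

theorem integral_gaussianDensity : ∫ y : Fin d → ℝ, gaussianDensity y = 1 := by
  unfold gaussianDensity
  rw [integral_fintype_prod_volume_eq_prod fun _ => gaussianPDFReal 0 1]
  simp [integral_gaussianPDFReal_eq_one]

theorem integrable_mul_gaussianPDFReal : Integrable fun s => gaussianPDFReal 0 1 s * s := by
  refine ((integrable_mul_exp_neg_mul_sq (b := 1 / 2) (by norm_num)).const_mul
    (√(2 * π))⁻¹).congr (.of_forall fun s => ?_)
  simp only [gaussianPDFReal, NNReal.coe_one, mul_one, sub_zero]
  ring_nf

theorem integrable_gaussianDensity_mul_coord (i : Fin d) :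
    Integrable fun y : Fin d → ℝ => gaussianDensity y * y i := by
  have integrable_prod := Integrable.fintype_prod (ι := Fin d)
    (μ := fun _ => (volume : Measure ℝ))
    (f := fun j s => gaussianPDFReal 0 1 s * if j = i then s else 1) fun j => by
      by_cases hj : j = i
      · simpa only [hj, if_true] using integrable_mul_gaussianPDFReal
      · simpa only [hj, if_false, mul_one] using integrable_gaussianPDFReal 0 1
  refine integrable_prod.congr (.of_forall fun y => ?_)
  simp only [gaussianDensity, Finset.prod_mul_distrib, Finset.prod_ite_eq', Finset.mem_univ,
    if_true]

/-- The standard Gaussian measure on `Fin d → ℝ`. -/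
def gaussianMeasure (d : ℕ) : Measure (Fin d → ℝ) :=
  volume.withDensity fun y => ENNReal.ofReal (gaussianDensity y)

theorem integral_gaussianMeasure (f : (Fin d → ℝ) → ℝ) :
    ∫ y, f y ∂gaussianMeasure d = ∫ y, gaussianDensity y * f y := by
  rw [gaussianMeasure, integral_withDensity_eq_integral_toReal_smul
    continuous_gaussianDensity.measurable.ennreal_ofReal
    (.of_forall fun _ => ENNReal.ofReal_lt_top)]
  simp only [ENNReal.toReal_ofReal (gaussianDensity_nonneg _), smul_eq_mul]

theorem integrable_gaussianMeasure_iff {f : (Fin d → ℝ) → ℝ} :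
    Integrable f (gaussianMeasure d) ↔ Integrable fun y => gaussianDensity y * f y := by
  rw [gaussianMeasure, integrable_withDensity_iff_integrable_smul'
    continuous_gaussianDensity.measurable.ennreal_ofReal
    (.of_forall fun _ => ENNReal.ofReal_lt_top)]
  simp only [ENNReal.toReal_ofReal (gaussianDensity_nonneg _), smul_eq_mul]

instance : IsProbabilityMeasure (gaussianMeasure d) := by
  refine ⟨?_⟩
  rw [gaussianMeasure, withDensity_apply _ .univ, Measure.restrict_univ,
    ← ofReal_integral_eq_lintegral_ofReal integrable_gaussianDensity
      (.of_forall gaussianDensity_nonneg), integral_gaussianDensity, ENNReal.ofReal_one]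

theorem integrable_coord_gaussianMeasure (i : Fin d) :
    Integrable (fun y => y i) (gaussianMeasure d) :=
  integrable_gaussianMeasure_iff.2 (integrable_gaussianDensity_mul_coord i)

theorem integrable_slice_gaussianMeasure (w : BddFun d) (s r : ℝ) (x : Fin d → ℝ) :
    Integrable (fun y => w (s, x + r • y)) (gaussianMeasure d) :=
  .of_bound (by fun_prop : Continuous fun y => w (s, x + r • y)).aestronglyMeasurable ‖w‖
    (.of_forall fun _ => w.norm_coe_le_norm _)

theorem integrable_coord_mul_slice_gaussianMeasure (w : BddFun d) (s r : ℝ) (x : Fin d → ℝ)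
    (i : Fin d) : Integrable (fun y => y i * w (s, x + r • y)) (gaussianMeasure d) :=
  (integrable_coord_gaussianMeasure i).mul_bdd (c := ‖w‖)
    (by fun_prop : Continuous fun y => w (s, x + r • y)).aestronglyMeasurable
    (.of_forall fun _ => w.norm_coe_le_norm _)

theorem SpatiallySmooth.hasFDerivAt_comp_affine {w : BddFun d} (hw : SpatiallySmooth w) (s r : ℝ)
    (x y : Fin d → ℝ) :
    HasFDerivAt (fun y => w (s, x + r • y))
      (r • fderiv ℝ (fun x => w (s, x)) (x + r • y)) y := by
  have deriv_affine : HasFDerivAt (fun y : Fin d → ℝ => x + r • y)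
      (r • ContinuousLinearMap.id ℝ (Fin d → ℝ)) y :=
    ((hasFDerivAt_id y).const_smul r).const_add x
  have deriv_slice := ((hw.contDiff_slice s).differentiable (by simp) (x + r • y)).hasFDerivAt
  refine (deriv_slice.comp y deriv_affine).congr_fderiv ?_
  rw [ContinuousLinearMap.comp_smul, ContinuousLinearMap.comp_id]

/-- Stein's identity, that is, Gaussian integration by parts. -/
theorem integral_coord_mul_gaussianMeasure {w : BddFun d} (hw : SpatiallySmooth w) (s r : ℝ)
    (x : Fin d → ℝ) (i : Fin d) :
    ∫ y, y i * w (s, x + r • y) ∂gaussianMeasure d =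
      r * ∫ y, spatialDeriv i w (s, x + r • y) ∂gaussianMeasure d := by
  have pdv_comp (y : Fin d → ℝ) : pdv i (fun y => w (s, x + r • y)) y =
      r * spatialDeriv i w (s, x + r • y) := by
    rw [pdv, (hw.hasFDerivAt_comp_affine s r x y).fderiv, ← hw.pdv_slice]
    rfl
  have integrable_dw := (integrable_gaussianMeasure_iff.1
    (integrable_slice_gaussianMeasure (spatialDeriv i w) s r x)).const_mul r
  have integrable_yw := (integrable_gaussianMeasure_iff.1
    (integrable_coord_mul_slice_gaussianMeasure w s r x i)).neg
  have by_parts : ∫ y, gaussianDensity y * pdv i (fun y => w (s, x + r • y)) y =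
      -∫ y, pdv i gaussianDensity y * w (s, x + r • y) := by
    refine integral_mul_fderiv_eq_neg_fderiv_mul_of_integrable
      (integrable_yw.congr <| .of_forall fun y => ?_)
      (integrable_dw.congr <| .of_forall fun y => ?_)
      (integrable_gaussianMeasure_iff.1 (integrable_slice_gaussianMeasure w s r x))
      (fun y _ => (hasFDerivAt_gaussianDensity y).differentiableAt)
      (fun y _ => (hw.hasFDerivAt_comp_affine s r x y).differentiableAt)
    · change _ = pdv i gaussianDensity y * _
      simp only [pdv_gaussianDensity, Pi.neg_apply, neg_mul, mul_assoc]
    · change _ = _ * pdv i _ y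
      simp only [pdv_comp, mul_left_comm]
  simp only [pdv_comp, pdv_gaussianDensity, neg_mul, integral_neg, neg_neg,
    mul_left_comm _ r, mul_assoc, integral_const_mul] at by_parts
  simp only [integral_gaussianMeasure, by_parts]

/-- The Laplacian of a smooth vector. -/
def laplacian (u : BddFun d) : BddFun d := ∑ i, spatialDeriv i (spatialDeriv i u)

theorem laplacian_map {u : BddFun d} (hu : SpatiallySmooth u) {L : BddFun d →L[ℝ] BddFun d}
    (hL : TranslationInvariant L) : laplacian (L u) = L (laplacian u) := by
  simp only [laplacian, map_sum, spatialDeriv_map hu hL, spatialDeriv_map (hu.spatialDeriv _) hL]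

theorem laplacian_add {u v : BddFun d} (hu : SpatiallySmooth u) (hv : SpatiallySmooth v) :
    laplacian (u + v) = laplacian u + laplacian v := by
  simp only [laplacian, spatialDeriv_add hu hv,
    spatialDeriv_add (hu.spatialDeriv _) (hv.spatialDeriv _), Finset.sum_add_distrib]

/-- The heat flow `(e^{τΔ} g(s, ·))(x)`, written as a Gaussian average. -/
def heatFlow (g : BddFun d) (τ s : ℝ) (x : Fin d → ℝ) : ℝ :=
  ∫ y, g (s, x + √(2 * τ) • y) ∂gaussianMeasure d

theorem continuous_heatFlow (g : BddFun d) {Y : Type*} [TopologicalSpace Y]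
    [FirstCountableTopology Y] {τ s : Y → ℝ} {x : Y → Fin d → ℝ} (hτ : Continuous τ)
    (hs : Continuous s) (hx : Continuous x) : Continuous fun q => heatFlow g (τ q) (s q) (x q) :=
  continuous_of_dominated
    (fun q => (integrable_slice_gaussianMeasure g (s q) _ (x q)).aestronglyMeasurable)
    (fun _ => .of_forall fun _ => g.norm_coe_le_norm _) (integrable_const ‖g‖)
    (.of_forall fun _ => by fun_prop)

@[simp] theorem heatFlow_zero (g : BddFun d) (s : ℝ) (x : Fin d → ℝ) :
    heatFlow g 0 s x = g (s, x) := by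
  simp [heatFlow]

theorem hasDerivAt_integral_gaussianMeasure {g : BddFun d} (hg : SpatiallySmooth g) (s : ℝ)
    (x : Fin d → ℝ) (r : ℝ) :
    HasDerivAt (fun r => ∫ y, g (s, x + r • y) ∂gaussianMeasure d)
      (r * ∫ y, laplacian g (s, x + r • y) ∂gaussianMeasure d) r := by
  have integrable_summand (i : Fin d) :=
    integrable_coord_mul_slice_gaussianMeasure (spatialDeriv i g) s r x i
  have deriv_integrand (y : Fin d → ℝ) (a : ℝ) :
      HasDerivAt (fun a => g (s, x + a • y)) (∑ i, y i * spatialDeriv i g (s, x + a • y)) a := by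
    have deriv_line : HasDerivAt (fun a : ℝ => x + a • y) y a := by
      simpa using ((hasDerivAt_id a).smul_const y).const_add x
    rw [← hg.fderiv_slice_apply]
    exact ((hg.contDiff_slice s).differentiable (by simp) _).hasFDerivAt.comp_hasDerivAt a
      deriv_line
  refine (hasDerivAt_integral_of_dominated_loc_of_deriv_le (s := univ)
    (F := fun a y => g (s, x + a • y))
    (F' := fun a y => ∑ i, y i * spatialDeriv i g (s, x + a • y))
    (bound := fun y => ∑ i, |y i| * ‖spatialDeriv i g‖) Filter.univ_mem
    (.of_forall fun a => (integrable_slice_gaussianMeasure g s a x).aestronglyMeasurable)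
    (integrable_slice_gaussianMeasure g s r x)
    (integrable_finsetSum _ fun i _ => integrable_summand i).aestronglyMeasurable
    (.of_forall fun y a _ => norm_sum_le_of_le _ fun i _ => ?_)
    (integrable_finsetSum _ fun i _ => (integrable_coord_gaussianMeasure i).abs.mul_const _)
    (.of_forall fun y a _ => deriv_integrand y a)).2.congr_deriv ?_
  · rw [norm_mul, norm_eq_abs]
    gcongr
    exact (spatialDeriv i g).norm_coe_le_norm _
  · simp only [laplacian, BoundedContinuousFunction.coe_sum, Finset.sum_apply]
    rw [integral_finsetSum _ fun i _ => integrable_summand i,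
      integral_finsetSum _ fun i _ => integrable_slice_gaussianMeasure _ s r x, Finset.mul_sum]
    exact Finset.sum_congr rfl fun i _ =>
      integral_coord_mul_gaussianMeasure (hg.spatialDeriv i) s r x i

theorem hasDerivAt_heatFlow {g : BddFun d} (hg : SpatiallySmooth g) (s : ℝ) (x : Fin d → ℝ)
    {τ : ℝ} (hτ : 0 < τ) :
    HasDerivAt (fun τ => heatFlow g τ s x) (heatFlow (laplacian g) τ s x) τ := by
  have deriv_sqrt : HasDerivAt (fun τ => √(2 * τ)) (2 * 1 / (2 * √(2 * τ))) τ :=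
    ((hasDerivAt_id τ).const_mul 2).sqrt (by simp [hτ.ne'])
  refine ((hasDerivAt_integral_gaussianMeasure hg s x _).comp τ deriv_sqrt).congr_deriv ?_
  have : √(2 * τ) ≠ 0 := by positivity
  rw [heatFlow]
  field_simp

theorem integral_heatFlow_laplacian {g : BddFun d} (hg : SpatiallySmooth g) (s : ℝ)
    (x : Fin d → ℝ) {τ : ℝ} (hτ : 0 ≤ τ) :
    ∫ r in (0 : ℝ)..τ, heatFlow (laplacian g) r s x = heatFlow g τ s x - g (s, x) := by
  rw [← heatFlow_zero g s x]
  exact intervalIntegral.integral_eq_sub_of_hasDerivAt_of_le hτ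
    (continuous_heatFlow g continuous_id continuous_const continuous_const).continuousOn
    (fun r hr => hasDerivAt_heatFlow hg s x hr.1)
    ((continuous_heatFlow _ continuous_id continuous_const
      continuous_const).intervalIntegrable _ _)

end Gaussian

/-! ### The heat, Duhamel and convolution operators on a time interval -/

section Operators

variable {d : ℕ} (T : ℝ≥0)

/-- The projection of `ℝ` onto `[0, T]`. Precomposing with it lets the operators below act on
functions defined for all times, only the values on `[0, T]` being meaningful. -/
def clamp (t : ℝ) : ℝ := max 0 (min t T)

@[fun_prop] theorem continuous_clamp : Continuous (clamp T) := by
  unfold clamp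
  fun_prop

theorem clamp_nonneg (t : ℝ) : 0 ≤ clamp T t := le_max_left _ _

theorem clamp_le (t : ℝ) : clamp T t ≤ T := max_le T.2 (min_le_right _ _)

variable {T} in
theorem clamp_of_mem {t : ℝ} (ht : t ∈ Icc (0 : ℝ) T) : clamp T t = t := by
  simp [clamp, ht.1, ht.2]

/-- The measure on the parameters `(a, y)` of the Duhamel kernels; `a` is the elapsed fraction of
time and `y` the normalized displacement. -/
abbrev duhamelMeasure (d : ℕ) : Measure (ℝ × (Fin d → ℝ)) :=
  (volume.restrict (Ioo (0 : ℝ) 1)).prod (gaussianMeasure d)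

theorem ae_duhamelMeasure_fst_mem : ∀ᵐ z ∂duhamelMeasure d, z.1 ∈ Ioo (0 : ℝ) 1 :=
  Measure.quasiMeasurePreserving_fst.ae (ae_restrict_mem measurableSet_Ioo)

theorem integrable_rpow_Ioo {r : ℝ} (hr : -1 < r) :
    Integrable (fun a : ℝ => a ^ r) (volume.restrict (Ioo (0 : ℝ) 1)) :=
  (intervalIntegrable_iff_integrableOn_Ioo_of_le zero_le_one).1
    (intervalIntegral.intervalIntegrable_rpow' hr)

theorem integrable_inv_sqrt_Ioo :
    Integrable (fun a : ℝ => (√a)⁻¹) (volume.restrict (Ioo (0 : ℝ) 1)) :=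
  IntegrableOn.congr_fun (integrable_rpow_Ioo (r := -(1 / 2)) (by norm_num))
    (fun a ha => by rw [sqrt_eq_rpow, rpow_neg ha.1.le]) measurableSet_Ioo

/-- The kernel of the operator `f ↦ e^{tΔ} f(0, ·)`. -/
def heatKernel (d : ℕ) : DominatedKernel (SpaceTime d) (gaussianMeasure d) where
  weight _ _ := 1
  point p y := (0, p.2 + √(2 * clamp T p.1) • y)
  bound _ := 1
  integrable_bound := integrable_const 1
  continuous_weight _ := continuous_const
  continuous_point _ := by fun_prop
  aestronglyMeasurable_weight _ := aestronglyMeasurable_const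
  measurable_point _ := by fun_prop
  norm_weight_le _ _ := by simp

/-- The kernel of the Duhamel operator `q ↦ ∫₀ᵗ e^{(t-s)Δ} q(s, ·) ds`, after the substitution
`s = t(1 - a)`. -/
def duhamelKernel (d : ℕ) : DominatedKernel (SpaceTime d) (duhamelMeasure d) where
  weight p _ := clamp T p.1
  point p z := (clamp T p.1 * (1 - z.1), p.2 + √(2 * (clamp T p.1 * z.1)) • z.2)
  bound _ := T
  integrable_bound := integrable_const _
  continuous_weight _ := by fun_prop
  continuous_point _ := by fun_prop
  aestronglyMeasurable_weight _ := aestronglyMeasurable_const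
  measurable_point _ := by fun_prop
  norm_weight_le p _ := by
    rw [norm_of_nonneg (clamp_nonneg T p.1)]
    exact clamp_le T p.1

/-- The kernel of the operator `q ↦ ∫₀ᵗ ∂ᵢ e^{(t-s)Δ} q(s, ·) ds`, the derivative being moved onto
the Gaussian by integration by parts. -/
def duhamelGradKernel (i : Fin d) : DominatedKernel (SpaceTime d) (duhamelMeasure d) where
  weight p z := √(clamp T p.1 / 2) * (√z.1)⁻¹ * z.2 i
  point p z := (clamp T p.1 * (1 - z.1), p.2 + √(2 * (clamp T p.1 * z.1)) • z.2)
  bound z := √(T / 2) * (√z.1)⁻¹ * |z.2 i|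
  integrable_bound :=
    (integrable_inv_sqrt_Ioo.const_mul _).mul_prod (integrable_coord_gaussianMeasure i).abs
  continuous_weight _ := by fun_prop
  continuous_point _ := by fun_prop
  aestronglyMeasurable_weight _ :=
    (by fun_prop : Measurable fun z : ℝ × (Fin d → ℝ) => _ * (√z.1)⁻¹ * z.2 i).aestronglyMeasurable
  measurable_point _ := by fun_prop
  norm_weight_le p z := by
    rw [norm_mul, norm_of_nonneg (by positivity), norm_eq_abs]
    gcongr
    exact clamp_le T p.1

/-- The kernel of the spatial convolution with `k` on the torus. -/
def convKernel {k : (Fin d → ℝ) → ℝ} (hk : IntegrableOn k (cube d)) :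
    DominatedKernel (SpaceTime d) (volume.restrict (cube d)) where
  weight _ y := k y
  point p y := (p.1, p.2 - y)
  bound y := ‖k y‖
  integrable_bound := hk.norm
  continuous_weight _ := continuous_const
  continuous_point _ := by fun_prop
  aestronglyMeasurable_weight _ := hk.aestronglyMeasurable
  measurable_point _ := by fun_prop
  norm_weight_le _ _ := le_rfl

theorem translationInvariant_heatKernel : TranslationInvariant (heatKernel T d).operator :=
  (heatKernel T d).translationInvariant (fun _ _ _ _ => rfl) fun _ _ _ _ => by
    simp only [heatKernel, add_right_comm]

theorem translationInvariant_duhamelKernel :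
    TranslationInvariant (duhamelKernel T d).operator :=
  (duhamelKernel T d).translationInvariant (fun _ _ _ _ => rfl) fun _ _ _ _ => by
    simp only [duhamelKernel, add_right_comm]

theorem translationInvariant_duhamelGradKernel (i : Fin d) :
    TranslationInvariant (duhamelGradKernel T i).operator :=
  (duhamelGradKernel T i).translationInvariant (fun _ _ _ _ => rfl) fun _ _ _ _ => by
    simp only [duhamelGradKernel, add_right_comm]

theorem translationInvariant_convKernel {k : (Fin d → ℝ) → ℝ} (hk : IntegrableOn k (cube d)) :
    TranslationInvariant (convKernel hk).operator :=
  (convKernel hk).translationInvariant (fun _ _ _ _ => rfl) fun _ _ _ _ => by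
    simp only [convKernel, add_sub_right_comm]

theorem convKernel_operator_apply {k : (Fin d → ℝ) → ℝ} (hk : IntegrableOn k (cube d))
    (w : BddFun d) (t : ℝ) (x : Fin d → ℝ) :
    (convKernel hk).operator w (t, x) = ∫ y in cube d, k y * w (t, x - y) := rfl

theorem norm_convKernel_operator_le {k : (Fin d → ℝ) → ℝ} (hk : IntegrableOn k (cube d))
    {w : BddFun d} {t R : ℝ} (hw : ∀ y, ‖w (t, y)‖ ≤ R) (x : Fin d → ℝ) :
    ‖(convKernel hk).operator w (t, x)‖ ≤ (∫ y in cube d, ‖k y‖) * R := by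
  rw [convKernel_operator_apply, ← integral_mul_const]
  refine norm_integral_le_of_norm_le (hk.norm.mul_const R) (.of_forall fun y => ?_)
  rw [norm_mul]
  gcongr
  exact hw _

theorem heatKernel_operator_apply (f : BddFun d) {t : ℝ} (ht : t ∈ Icc (0 : ℝ) T)
    (x : Fin d → ℝ) : (heatKernel T d).operator f (t, x) = heatFlow f t 0 x := by
  simp only [DominatedKernel.operator_apply, heatKernel, one_mul, clamp_of_mem ht, heatFlow]

theorem duhamelKernel_operator_apply (q : BddFun d) {t : ℝ} (ht : t ∈ Icc (0 : ℝ) T)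
    (x : Fin d → ℝ) :
    (duhamelKernel T d).operator q (t, x) = ∫ s in (0 : ℝ)..t, heatFlow q (t - s) s x := by
  rw [DominatedKernel.operator_apply,
    integral_prod _ ((duhamelKernel T d).integrable_weight_mul q (t, x))]
  calc
    _ = ∫ a in (0 : ℝ)..1, t * heatFlow q (t * a) (t - t * a) x := by
      rw [intervalIntegral.integral_of_le zero_le_one, integral_Ioc_eq_integral_Ioo]
      simp only [duhamelKernel, clamp_of_mem ht, integral_const_mul, heatFlow, mul_sub, mul_one]
    _ = ∫ r in (0 : ℝ)..t, heatFlow q r (t - r) x := by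
      rw [intervalIntegral.integral_const_mul,
        intervalIntegral.mul_integral_comp_mul_left (f := fun r => heatFlow q r (t - r) x),
        mul_zero, mul_one]
    _ = _ := by
      simpa using (intervalIntegral.integral_comp_sub_left
        (fun r => heatFlow q r (t - r) x) t (a := 0) (b := t)).symm

theorem duhamelGradKernel_operator_eq (i : Fin d) {w : BddFun d} (hw : SpatiallySmooth w) :
    (duhamelGradKernel T i).operator w = (duhamelKernel T d).operator (spatialDeriv i w) := by
  ext ⟨t, x⟩
  rw [DominatedKernel.operator_apply, DominatedKernel.operator_apply,
    integral_prod _ ((duhamelGradKernel T i).integrable_weight_mul w (t, x)),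
    integral_prod _ ((duhamelKernel T d).integrable_weight_mul (spatialDeriv i w) (t, x))]
  refine setIntegral_congr_fun measurableSet_Ioo fun a ha => ?_
  have ha_pos : 0 < a := ha.1
  have hc := clamp_nonneg T t
  have scaling : √(clamp T t / 2) * (√a)⁻¹ * √(2 * (clamp T t * a)) = clamp T t := by
    rw [← sqrt_inv, ← sqrt_mul (by positivity), ← sqrt_mul (by positivity)]
    exact (congrArg sqrt (by field_simp)).trans (sqrt_mul_self hc)
  simp only [duhamelGradKernel, duhamelKernel, mul_assoc (_ * (√a)⁻¹), integral_const_mul,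
    integral_coord_mul_gaussianMeasure hw]
  rw [← mul_assoc, scaling]

theorem sqrt_mul_exp_neg_le {c u : ℝ} (hc : 0 ≤ c) (hu : 0 < u) :
    √c * rexp (-(u * c)) ≤ c ^ (1 / 4 : ℝ) * u ^ (-(1 / 4) : ℝ) := by
  have rpow_le : (u * c) ^ (1 / 4 : ℝ) ≤ rexp (u * c) := by
    calc (u * c) ^ (1 / 4 : ℝ) ≤ rexp (u * c) ^ (1 / 4 : ℝ) := by
          gcongr
          linarith [add_one_le_exp (u * c)]
      _ = rexp (u * c / 4) := by rw [← exp_mul]; ring_nf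
      _ ≤ rexp (u * c) := exp_le_exp.2 (div_le_self (by positivity) (by norm_num))
  rw [mul_rpow hu.le hc] at rpow_le
  have sqrt_eq : √c = c ^ (1 / 4 : ℝ) * c ^ (1 / 4 : ℝ) := by
    rw [← sq, ← rpow_mul_natCast hc, sqrt_eq_rpow]
    norm_num
  rw [exp_neg, rpow_neg hu.le, ← div_eq_mul_inv, ← div_eq_mul_inv,
    div_le_div_iff₀ (exp_pos _) (by positivity), sqrt_eq]
  calc c ^ (1 / 4 : ℝ) * c ^ (1 / 4 : ℝ) * u ^ (1 / 4 : ℝ)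
      = c ^ (1 / 4 : ℝ) * (u ^ (1 / 4 : ℝ) * c ^ (1 / 4 : ℝ)) := by ring
    _ ≤ c ^ (1 / 4 : ℝ) * rexp (u * c) := by gcongr

theorem norm_duhamelGradKernel_weight_mul_exp_le (i : Fin d) {γ a : ℝ} (hγ : 0 < γ) (ha : 0 < a)
    (p : SpaceTime d) (y : Fin d → ℝ) :
    ‖(duhamelGradKernel T i).weight p (a, y)‖ * rexp (γ * (clamp T p.1 * (1 - a))) ≤
      a ^ (-(3 / 4) : ℝ) * |y i| *
        (T ^ (1 / 4 : ℝ) * γ ^ (-(1 / 4) : ℝ) * rexp (γ * clamp T p.1)) := by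
  have hc := clamp_nonneg T p.1
  have exp_split : rexp (γ * (clamp T p.1 * (1 - a))) =
      rexp (γ * clamp T p.1) * rexp (-(γ * a * clamp T p.1)) := by
    rw [← exp_add]
    ring_nf
  have a_powers : (√a)⁻¹ * a ^ (-(1 / 4) : ℝ) = a ^ (-(3 / 4) : ℝ) := by
    rw [sqrt_eq_rpow, ← rpow_neg ha.le, ← rpow_add ha]
    norm_num
  rw [exp_split, ← a_powers, duhamelGradKernel, norm_mul, norm_of_nonneg (by positivity),
    norm_eq_abs]
  calc √(clamp T p.1 / 2) * (√a)⁻¹ * |y i| *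
        (rexp (γ * clamp T p.1) * rexp (-(γ * a * clamp T p.1)))
      = √(clamp T p.1 / 2) * rexp (-(γ * a * clamp T p.1)) *
        ((√a)⁻¹ * |y i| * rexp (γ * clamp T p.1)) := by ring
    _ ≤ √(clamp T p.1) * rexp (-(γ * a * clamp T p.1)) *
        ((√a)⁻¹ * |y i| * rexp (γ * clamp T p.1)) := by
      gcongr
      exact half_le_self hc
    _ ≤ (clamp T p.1 ^ (1 / 4 : ℝ) * (γ * a) ^ (-(1 / 4) : ℝ)) *
        ((√a)⁻¹ * |y i| * rexp (γ * clamp T p.1)) := by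
      gcongr ?_ * _
      exact sqrt_mul_exp_neg_le hc (by positivity)
    _ ≤ ((T : ℝ) ^ (1 / 4 : ℝ) * (γ * a) ^ (-(1 / 4) : ℝ)) *
        ((√a)⁻¹ * |y i| * rexp (γ * clamp T p.1)) := by
      gcongr
      exact clamp_le T p.1
    _ = _ := by
      rw [mul_rpow hγ.le ha.le]
      ring

theorem exists_norm_duhamelGradKernel_operator_le (i : Fin d) :
    ∃ C, 0 ≤ C ∧ ∀ γ : ℝ, 0 < γ → ∀ (w : BddFun d) (L : ℝ),
      (∀ s ∈ Icc (0 : ℝ) T, ∀ x, ‖w (s, x)‖ ≤ L * rexp (γ * s)) → ∀ t x,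
        ‖(duhamelGradKernel T i).operator w (t, x)‖ ≤
          C * γ ^ (-(1 / 4) : ℝ) * L * rexp (γ * clamp T t) := by
  have integrable_majorant : Integrable (fun z : ℝ × (Fin d → ℝ) =>
      z.1 ^ (-(3 / 4) : ℝ) * |z.2 i|) (duhamelMeasure d) :=
    (integrable_rpow_Ioo (by norm_num)).mul_prod (integrable_coord_gaussianMeasure i).abs
  have integral_nonneg : 0 ≤ ∫ z, z.1 ^ (-(3 / 4) : ℝ) * |z.2 i| ∂duhamelMeasure d := by
    refine integral_nonneg_of_ae ?_
    filter_upwards [ae_duhamelMeasure_fst_mem] with z hz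
    exact mul_nonneg (rpow_nonneg hz.1.le _) (abs_nonneg _)
  refine ⟨(∫ z, z.1 ^ (-(3 / 4) : ℝ) * |z.2 i| ∂duhamelMeasure d) * T ^ (1 / 4 : ℝ),
    by positivity, fun γ hγ w L hw t x => ?_⟩
  have L_nonneg : 0 ≤ L := by simpa using (norm_nonneg _).trans (hw 0 ⟨le_rfl, T.2⟩ 0)
  refine (norm_integral_le_of_norm_le (integrable_majorant.mul_const
    (T ^ (1 / 4 : ℝ) * γ ^ (-(1 / 4) : ℝ) * rexp (γ * clamp T t) * L)) ?_).trans_eq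
      (by rw [integral_mul_const]; ring)
  filter_upwards [ae_duhamelMeasure_fst_mem] with ⟨a, y⟩ ⟨ha_pos, ha_lt⟩
  have time_mem : clamp T t * (1 - a) ∈ Icc (0 : ℝ) T :=
    ⟨mul_nonneg (clamp_nonneg T t) (sub_nonneg.2 ha_lt.le),
      (mul_le_of_le_one_right (clamp_nonneg T t) (by linarith)).trans (clamp_le T t)⟩
  calc ‖(duhamelGradKernel T i).weight (t, x) (a, y) *
        w ((duhamelGradKernel T i).point (t, x) (a, y))‖
      ≤ ‖(duhamelGradKernel T i).weight (t, x) (a, y)‖ *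
        (L * rexp (γ * (clamp T t * (1 - a)))) := by
        rw [norm_mul]
        gcongr
        exact hw _ time_mem _
    _ = ‖(duhamelGradKernel T i).weight (t, x) (a, y)‖ *
        rexp (γ * (clamp T t * (1 - a))) * L := by ring
    _ ≤ _ := (mul_le_mul_of_nonneg_right (norm_duhamelGradKernel_weight_mul_exp_le T i hγ ha_pos
        (t, x) y) L_nonneg).trans_eq (mul_assoc _ _ _)

end Operators

/-! ### The truncated equation in mild form -/

section MildEquation

theorem exists_contDiff_inverse_id_add {E : Type*} [NormedAddCommGroup E] [NormedSpace ℝ E]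
    [CompleteSpace E] {M : E → E} {n : WithTop ℕ∞} (hM : ContDiff ℝ n M) (hn : n ≠ 0) {c : ℝ≥0}
    (hc : c < 1) (hL : LipschitzWith c M) :
    ∃ g : E → E, ContDiff ℝ n g ∧ (∀ y, g y + M (g y) = y) ∧ ∀ x, g (x + M x) = x := by
  have approximates_id : ApproximatesLinearOn (fun x => x + M x)
      ((ContinuousLinearEquiv.refl ℝ E : E ≃L[ℝ] E) : E →L[ℝ] E) univ c := fun x _ y _ => by
    simpa [add_sub_add_comm, dist_eq_norm] using hL.dist_le_mul x y
  have norm_condition : Subsingleton E ∨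
      c < ‖((ContinuousLinearEquiv.refl ℝ E).symm : E →L[ℝ] E)‖₊⁻¹ := by
    refine (subsingleton_or_nontrivial E).imp_right fun (_ : Nontrivial E) => ?_
    rwa [ContinuousLinearEquiv.refl_symm, ContinuousLinearEquiv.coe_refl,
      ContinuousLinearMap.nnnorm_id, inv_one]
  let e := approximates_id.toHomeomorph _ norm_condition
  have fderiv_invertible (x : E) :
      ∃ L : E ≃L[ℝ] E, (L : E →L[ℝ] E) = 1 + fderiv ℝ M x := by
    have norm_lt : ‖-fderiv ℝ M x‖ < 1 := by
      rw [norm_neg]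
      exact (norm_fderiv_le_of_lipschitz ℝ hL).trans_lt hc
    refine ⟨.unitsEquiv ℝ E (.oneSub _ norm_lt), ?_⟩
    ext v
    exact sub_neg_eq_add v (fderiv ℝ M x v)
  choose L hL using fderiv_invertible
  refine ⟨e.symm, e.contDiff_symm (f₀' := L) (fun x => ?_) (contDiff_id.add hM),
    e.apply_symm_apply, e.symm_apply_apply⟩
  rw [hL]
  exact (hasFDerivAt_id _).add (hM.differentiable hn _).hasFDerivAt

variable {d : ℕ}

section Flux

variable {k : (Fin d → ℝ) → ℝ} (hk : IntegrableOn k (cube d)) {χ : ℝ → ℝ} (hχ : IsCutoff χ)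

/-- The truncated flux `(k ∗ χ(u)) χ(u)`. -/
def flux (u : BddFun d) : BddFun d :=
  (convKernel hk).operator (nemytskii hχ u) * nemytskii hχ u

theorem translate_flux (h : Fin d → ℝ) (u : BddFun d) :
    translate h (flux hk hχ u) = flux hk hχ (translate h u) := by
  simp only [flux, translate_mul, ← translationInvariant_convKernel hk h, translate_nemytskii]

theorem contDiff_flux : ContDiff ℝ ∞ (flux hk hχ) :=
  ((convKernel hk).operator.contDiff.comp (contDiff_nemytskii hχ)).mul (contDiff_nemytskii hχ)

theorem SpatiallySmooth.flux {u : BddFun d} (hu : SpatiallySmooth u) :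
    SpatiallySmooth (flux hk hχ u) :=
  ((hu.nemytskii hχ).map (translationInvariant_convKernel hk)).mul (hu.nemytskii hχ)

theorem exists_norm_flux_sub_le : ∃ L, 0 ≤ L ∧ ∀ (u v : BddFun d) (t R : ℝ),
    (∀ x, ‖u (t, x) - v (t, x)‖ ≤ R) →
      ∀ x, ‖flux hk hχ u (t, x) - flux hk hχ v (t, x)‖ ≤ L * R := by
  obtain ⟨C, hC⟩ := hχ.exists_norm_le
  obtain ⟨C', hC'⟩ := hχ.exists_lipschitzWith
  have C_nonneg : 0 ≤ C := (norm_nonneg _).trans (hC 0)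
  refine ⟨2 * (∫ y in cube d, ‖k y‖) * C * C', by positivity, fun u v t R hR x => ?_⟩
  have nemytskii_sub_le (y : Fin d → ℝ) :
      ‖(nemytskii hχ u - nemytskii hχ v) (t, y)‖ ≤ C' * R := by
    refine (hC'.norm_sub_le _ _).trans ?_
    gcongr
    exact hR y
  have conv_sub_le := norm_convKernel_operator_le hk nemytskii_sub_le x
  have conv_le := norm_convKernel_operator_le hk (w := nemytskii hχ v) (t := t) (fun y => hC _) x
  rw [map_sub, BoundedContinuousFunction.sub_apply] at conv_sub_le
  simp only [flux, BoundedContinuousFunction.mul_apply]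
  calc
    _ = ‖((convKernel hk).operator (nemytskii hχ u) (t, x) -
          (convKernel hk).operator (nemytskii hχ v) (t, x)) * nemytskii hχ u (t, x) +
        (convKernel hk).operator (nemytskii hχ v) (t, x) *
          (nemytskii hχ u - nemytskii hχ v) (t, x)‖ := by
      rw [BoundedContinuousFunction.sub_apply]
      ring_nf
    _ ≤ (∫ y in cube d, ‖k y‖) * (C' * R) * C + (∫ y in cube d, ‖k y‖) * C * (C' * R) := by
      refine norm_add_le_of_le (norm_mul_le_of_le conv_sub_le (hC _))
        (norm_mul_le_of_le conv_le (nemytskii_sub_le x))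
    _ = _ := by ring

end Flux

section ExpWeight

variable (d) (T : ℝ≥0) (γ : ℝ)

/-- The weight `e^{γt}` on `[0, T]`, which makes the fixed-point map of the mild equation a
contraction for large `γ`, however long the time interval. -/
def expWeight : BddFun d :=
  .ofNormedAddCommGroup (fun p => rexp (γ * clamp T p.1)) (by fun_prop) (rexp (|γ| * T))
    fun p => by
      rw [norm_of_nonneg (exp_pos _).le]
      exact exp_le_exp.2 (mul_le_mul (le_abs_self γ) (clamp_le T _) (clamp_nonneg T _)
        (abs_nonneg γ))

@[simp] theorem expWeight_apply (p : SpaceTime d) :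
    expWeight d T γ p = rexp (γ * clamp T p.1) := rfl

@[simp] theorem translate_expWeight (h : Fin d → ℝ) :
    translate h (expWeight d T γ) = expWeight d T γ := rfl

theorem expWeight_mul_expWeight_neg : expWeight d T γ * expWeight d T (-γ) = 1 := by
  ext
  simp [← exp_add]

theorem spatiallySmooth_expWeight : SpatiallySmooth (expWeight d T γ) := by
  simpa only [SpatiallySmooth, translate_expWeight] using contDiff_const

end ExpWeight

/-- Periodicity in the space variable. -/
def SpatiallyPeriodic (u : BddFun d) : Prop :=
  ∀ n : Fin d → ℤ, translate (fun i => (n i : ℝ)) u = u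

theorem SpatiallyPeriodic.apply_add_intCast {u : BddFun d} (hu : SpatiallyPeriodic u) (t : ℝ)
    (n : Fin d → ℤ) (x : Fin d → ℝ) : u (t, x + fun i => (n i : ℝ)) = u (t, x) :=
  DFunLike.congr_fun (hu n) (t, x)

theorem SpatiallyPeriodic.per {u : BddFun d} (hu : SpatiallyPeriodic u) (t : ℝ) :
    Per fun x => u (t, x) := hu.apply_add_intCast t

theorem SmoothPer.spatiallyPeriodic {f : (Fin d → ℝ) → ℝ} (hf : SmoothPer f) :
    SpatiallyPeriodic hf.toBddFun := fun n => by
  ext p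
  exact hf.per n p.2

section MildSolution

variable {k : Fin d → (Fin d → ℝ) → ℝ} (hk : ∀ i, IntegrableOn (k i) (cube d)) {χ : ℝ → ℝ}
  (hχ : IsCutoff χ) (T : ℝ≥0) (γ : ℝ)

/-- The Duhamel term `∫₀ᵗ ∇·e^{(t-s)Δ} flux(u) ds` of the mild equation, in the unknown
`v = e^{-γt} u`. -/
def weightedDuhamel (v : BddFun d) : BddFun d :=
  expWeight d T (-γ) *
    ∑ i, (duhamelGradKernel T i).operator (flux (hk i) hχ (expWeight d T γ * v))

theorem translate_weightedDuhamel (h : Fin d → ℝ) (v : BddFun d) :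
    translate h (weightedDuhamel hk hχ T γ v) = weightedDuhamel hk hχ T γ (translate h v) := by
  simp only [weightedDuhamel, translate_mul, map_sum, translate_expWeight,
    ← translationInvariant_duhamelGradKernel T _ h, translate_flux]

theorem contDiff_weightedDuhamel : ContDiff ℝ ∞ (weightedDuhamel hk hχ T γ) :=
  contDiff_const.mul <| .sum fun i _ => (duhamelGradKernel T i).operator.contDiff.comp <|
    (contDiff_flux (hk i) hχ).comp (contDiff_const.mul contDiff_id)

theorem exists_norm_duhamelGradKernel_flux_sub_le (i : Fin d) :
    ∃ C, 0 ≤ C ∧ ∀ γ : ℝ, 0 < γ → ∀ (v w : BddFun d) t x,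
      ‖(duhamelGradKernel T i).operator (flux (hk i) hχ (expWeight d T γ * v) -
          flux (hk i) hχ (expWeight d T γ * w)) (t, x)‖ ≤
        C * γ ^ (-(1 / 4) : ℝ) * ‖v - w‖ * rexp (γ * clamp T t) := by
  obtain ⟨L, L_nonneg, hL⟩ := exists_norm_flux_sub_le (hk i) hχ
  obtain ⟨C, C_nonneg, hC⟩ := exists_norm_duhamelGradKernel_operator_le T i
  refine ⟨C * L, by positivity, fun γ hγ v w t x => ?_⟩
  refine (hC γ hγ _ (L * ‖v - w‖) (fun s hs x => ?_) t x).trans_eq (by ring)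
  rw [mul_assoc]
  refine hL _ _ s _ (fun x => ?_) x
  rw [BoundedContinuousFunction.mul_apply, BoundedContinuousFunction.mul_apply, ← mul_sub, norm_mul,
    expWeight_apply, clamp_of_mem hs, norm_of_nonneg (exp_pos _).le, mul_comm]
  gcongr
  exact (v - w).norm_coe_le_norm (s, x)

theorem exists_norm_weightedDuhamel_sub_le :
    ∃ C, ∀ γ : ℝ, 0 < γ → ∀ v w : BddFun d,
      ‖weightedDuhamel hk hχ T γ v - weightedDuhamel hk hχ T γ w‖ ≤
        C * γ ^ (-(1 / 4) : ℝ) * ‖v - w‖ := by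
  choose C C_nonneg hC using exists_norm_duhamelGradKernel_flux_sub_le hk hχ T
  have sum_nonneg : 0 ≤ ∑ i, C i := Finset.sum_nonneg fun i _ => C_nonneg i
  refine ⟨∑ i, C i, fun γ hγ v w =>
    (BoundedContinuousFunction.norm_le (by positivity)).2 fun ⟨t, x⟩ => ?_⟩
  rw [weightedDuhamel, weightedDuhamel, ← mul_sub, ← Finset.sum_sub_distrib]
  simp only [← map_sub, BoundedContinuousFunction.mul_apply, BoundedContinuousFunction.sum_apply,
    expWeight_apply, norm_mul, norm_of_nonneg (exp_pos _).le]
  calc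
    _ ≤ rexp (-γ * clamp T t) * ∑ i, C i * γ ^ (-(1 / 4) : ℝ) * ‖v - w‖ * rexp (γ * clamp T t) := by
      gcongr
      exact norm_sum_le_of_le _ fun i _ => hC i γ hγ v w t x
    _ = (∑ i, C i) * γ ^ (-(1 / 4) : ℝ) * ‖v - w‖ *
        (rexp (-γ * clamp T t) * rexp (γ * clamp T t)) := by
      simp only [← Finset.sum_mul]
      ring
    _ = _ := by rw [← exp_add, neg_mul, neg_add_cancel, exp_zero, mul_one]

theorem exists_lipschitzWith_weightedDuhamel :
    ∃ γ : ℝ, LipschitzWith (1 / 2) (weightedDuhamel hk hχ T γ) := by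
  obtain ⟨C, hC⟩ := exists_norm_weightedDuhamel_sub_le hk hχ T
  have tendsto_zero :
      Filter.Tendsto (fun γ : ℝ => C * γ ^ (-(1 / 4) : ℝ)) Filter.atTop (𝓝 0) := by
    simpa using (tendsto_rpow_neg_atTop (by norm_num : (0 : ℝ) < 1 / 4)).const_mul C
  obtain ⟨γ, small, hγ⟩ := ((tendsto_zero.eventually_le_const one_half_pos).and
    (Filter.eventually_gt_atTop 0)).exists
  refine ⟨γ, .of_dist_le_mul fun v w => ?_⟩
  rw [dist_eq_norm, dist_eq_norm, NNReal.coe_div, NNReal.coe_one, NNReal.coe_ofNat]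
  exact (hC γ hγ v w).trans (by gcongr)

/-- Since the fixed-point map commutes with translations, the smooth dependence of the fixed point
on the data gives its smoothness in `x`. -/
theorem exists_mild_solution {f : (Fin d → ℝ) → ℝ} (hf : SmoothPer f) :
    ∃ u : BddFun d, SpatiallySmooth u ∧ SpatiallyPeriodic u ∧
      u = (heatKernel T d).operator hf.toBddFun -
        ∑ i, (duhamelGradKernel T i).operator (flux (hk i) hχ u) := by
  obtain ⟨γ, lipschitz⟩ := exists_lipschitzWith_weightedDuhamel hk hχ T
  obtain ⟨g, contDiff_g, g_add, g_apply⟩ := exists_contDiff_inverse_id_add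
    (contDiff_weightedDuhamel hk hχ T γ) (by simp) (by norm_num [← NNReal.coe_lt_coe]) lipschitz
  let v (F : BddFun d) : BddFun d := g (expWeight d T (-γ) * (heatKernel T d).operator F)
  have translate_v (h : Fin d → ℝ) (F : BddFun d) : translate h (v F) = v (translate h F) := by
    rw [← g_apply (translate h (v F)), ← translate_weightedDuhamel, ← map_add, g_add,
      translate_mul, translate_expWeight, ← translationInvariant_heatKernel]
  have contDiff_v : ContDiff ℝ ∞ v :=
    contDiff_g.comp (contDiff_const.mul (heatKernel T d).operator.contDiff)
  refine ⟨expWeight d T γ * v hf.toBddFun, (spatiallySmooth_expWeight d T γ).mul ?_,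
    fun n => ?_, ?_⟩
  · simp only [SpatiallySmooth, translate_v]
    exact contDiff_v.comp hf.spatiallySmooth
  · rw [translate_mul, translate_expWeight, translate_v, hf.spatiallyPeriodic]
  · have := congrArg (expWeight d T γ * ·) (g_add (expWeight d T (-γ) *
      (heatKernel T d).operator hf.toBddFun))
    simp only [mul_add, weightedDuhamel, ← mul_assoc, expWeight_mul_expWeight_neg,
      one_mul] at this
    exact eq_sub_of_add_eq this

end MildSolution

end MildEquation

/-! ### From the mild to the integrated equation -/

section IntegratedEquation

theorem integral_integral_triangle {E : Type*} [NormedAddCommGroup E] [NormedSpace ℝ E]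
    {Ψ : ℝ → ℝ → E} (hΨ : Continuous fun p : ℝ × ℝ => Ψ p.1 p.2) {t : ℝ} (ht : 0 ≤ t) :
    ∫ s in (0 : ℝ)..t, ∫ r in (0 : ℝ)..s, Ψ s r = ∫ r in (0 : ℝ)..t, ∫ s in r..t, Ψ s r := by
  let Φ : ℝ × ℝ → E := {p : ℝ × ℝ | p.2 ≤ p.1}.indicator fun p => Ψ p.1 p.2
  have integrable_Φ :
      Integrable Φ ((volume.restrict (Ioc 0 t)).prod (volume.restrict (Ioc 0 t))) := by
    rw [Measure.prod_restrict]
    refine Integrable.indicator ?_ (isClosed_le continuous_snd continuous_fst).measurableSet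
    exact (hΨ.continuousOn.integrableOn_compact (isCompact_Icc.prod isCompact_Icc)).mono_set
      (prod_mono Ioc_subset_Icc_self Ioc_subset_Icc_self)
  have integral_below (s : ℝ) (hs : s ∈ Ioc 0 t) :
      ∫ r in (0 : ℝ)..s, Ψ s r = ∫ r in Ioc 0 t, Φ (s, r) := by
    change _ = ∫ r in Ioc 0 t, (Iic s).indicator (Ψ s) r
    rw [setIntegral_indicator measurableSet_Iic, Ioc_inter_Iic, min_eq_right hs.2,
      intervalIntegral.integral_of_le hs.1.le]
  have integral_above (r : ℝ) (hr : r ∈ Ioc 0 t) :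
      ∫ s in r..t, Ψ s r = ∫ s in Ioc 0 t, Φ (s, r) := by
    have Ioc_inter_Ici : Ioc 0 t ∩ Ici r = Icc r t := by
      ext s
      exact ⟨fun h => ⟨h.2, h.1.2⟩, fun h => ⟨⟨hr.1.trans_le h.1, h.2⟩, h.1⟩⟩
    change _ = ∫ s in Ioc 0 t, (Ici r).indicator (fun s => Ψ s r) s
    rw [setIntegral_indicator measurableSet_Ici, Ioc_inter_Ici, integral_Icc_eq_integral_Ioc,
      intervalIntegral.integral_of_le hr.2]
  rw [intervalIntegral.integral_of_le ht, intervalIntegral.integral_of_le ht,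
    setIntegral_congr_fun measurableSet_Ioc integral_below,
    setIntegral_congr_fun measurableSet_Ioc integral_above]
  exact integral_integral_swap integrable_Φ

variable {d : ℕ}

theorem continuous_timeSlice (u : BddFun d) (x : Fin d → ℝ) : Continuous fun s => u (s, x) := by
  fun_prop

section Duhamel

variable (T : ℝ≥0) {t : ℝ} (ht : t ∈ Icc (0 : ℝ) T)

include ht

theorem integral_heatKernel_operator_laplacian {f : BddFun d} (hf : SpatiallySmooth f)
    (x : Fin d → ℝ) :
    ∫ s in (0 : ℝ)..t, (heatKernel T d).operator (laplacian f) (s, x) =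
      (heatKernel T d).operator f (t, x) - f (0, x) := by
  rw [heatKernel_operator_apply T f ht, ← integral_heatFlow_laplacian hf 0 x ht.1]
  refine intervalIntegral.integral_congr fun s hs => ?_
  rw [uIcc_of_le ht.1] at hs
  exact heatKernel_operator_apply T _ ⟨hs.1, hs.2.trans ht.2⟩ x

theorem integral_duhamelKernel_operator_laplacian {q : BddFun d} (hq : SpatiallySmooth q)
    (x : Fin d → ℝ) :
    ∫ s in (0 : ℝ)..t, (duhamelKernel T d).operator (laplacian q) (s, x) =
      (duhamelKernel T d).operator q (t, x) - ∫ s in (0 : ℝ)..t, q (s, x) := by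
  have continuous_duhamel : Continuous fun r => heatFlow q (t - r) r x :=
    continuous_heatFlow _ (by fun_prop) continuous_id continuous_const
  have integral_from (r : ℝ) (hr : r ∈ uIcc 0 t) :
      ∫ s in r..t, heatFlow (laplacian q) (s - r) r x = heatFlow q (t - r) r x - q (r, x) := by
    rw [uIcc_of_le ht.1] at hr
    rw [← integral_heatFlow_laplacian hq r x (sub_nonneg.2 hr.2),
      intervalIntegral.integral_comp_sub_right (fun s => heatFlow (laplacian q) s r x) r, sub_self]
  calc
    _ = ∫ s in (0 : ℝ)..t, ∫ r in (0 : ℝ)..s, heatFlow (laplacian q) (s - r) r x := by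
      refine intervalIntegral.integral_congr fun s hs => ?_
      rw [uIcc_of_le ht.1] at hs
      exact duhamelKernel_operator_apply T _ ⟨hs.1, hs.2.trans ht.2⟩ x
    _ = ∫ r in (0 : ℝ)..t, ∫ s in r..t, heatFlow (laplacian q) (s - r) r x :=
      integral_integral_triangle
        (continuous_heatFlow _ (by fun_prop) continuous_snd continuous_const) ht.1
    _ = ∫ r in (0 : ℝ)..t, (heatFlow q (t - r) r x - q (r, x)) :=
      intervalIntegral.integral_congr integral_from
    _ = _ := by
      rw [intervalIntegral.integral_sub (continuous_duhamel.intervalIntegrable _ _)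
        ((continuous_timeSlice q x).intervalIntegrable _ _), duhamelKernel_operator_apply T q ht]

theorem duhamel_formula {f q u : BddFun d} (hf : SpatiallySmooth f) (hq : SpatiallySmooth q)
    (hu : u = (heatKernel T d).operator f + (duhamelKernel T d).operator q) (x : Fin d → ℝ) :
    u (t, x) = f (0, x) + ∫ s in (0 : ℝ)..t, (laplacian u + q) (s, x) := by
  have laplacian_eq : laplacian u = (heatKernel T d).operator (laplacian f) +
      (duhamelKernel T d).operator (laplacian q) := by
    rw [hu, laplacian_add (hf.map (translationInvariant_heatKernel T))
      (hq.map (translationInvariant_duhamelKernel T)),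
      laplacian_map hf (translationInvariant_heatKernel T),
      laplacian_map hq (translationInvariant_duhamelKernel T)]
  have intervalIntegrable (v : BddFun d) : IntervalIntegrable (fun s => v (s, x)) volume 0 t :=
    (continuous_timeSlice v x).intervalIntegrable _ _
  simp only [laplacian_eq, BoundedContinuousFunction.add_apply]
  rw [intervalIntegral.integral_add ((intervalIntegrable _).add (intervalIntegrable _))
      (intervalIntegrable _),
    intervalIntegral.integral_add (intervalIntegrable _) (intervalIntegrable _),
    integral_heatKernel_operator_laplacian T ht hf,
    integral_duhamelKernel_operator_laplacian T ht hq, hu, BoundedContinuousFunction.add_apply]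
  ring

end Duhamel

theorem exists_truncated_solution {k : Fin d → (Fin d → ℝ) → ℝ}
    (hk : ∀ i, IntegrableOn (k i) (cube d)) {χ : ℝ → ℝ} (hχ : IsCutoff χ) (T : ℝ≥0)
    {f : (Fin d → ℝ) → ℝ} (hf : SmoothPer f) :
    ∃ u : BddFun d, SpatiallySmooth u ∧ SpatiallyPeriodic u ∧
      ∀ t ∈ Icc (0 : ℝ) T, ∀ x, u (t, x) = f x +
        ∫ s in (0 : ℝ)..t, (laplacian u - ∑ i, spatialDeriv i (flux (hk i) hχ u)) (s, x) := by
  obtain ⟨u, hu, periodic_u, mild⟩ := exists_mild_solution hk hχ T hf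
  have smooth_divergence : SpatiallySmooth (∑ i, spatialDeriv i (flux (hk i) hχ u)) :=
    .sum fun i _ => (hu.flux (hk i) hχ).spatialDeriv i
  have duhamel_form : u = (heatKernel T d).operator hf.toBddFun +
      (duhamelKernel T d).operator (-∑ i, spatialDeriv i (flux (hk i) hχ u)) := by
    rw [map_neg, map_sum, ← sub_eq_add_neg]
    simpa only [duhamelGradKernel_operator_eq T _ (hu.flux (hk _) hχ)] using mild
  refine ⟨u, hu, periodic_u, fun t ht x => ?_⟩
  rw [sub_eq_add_neg]
  exact duhamel_formula T ht hf.spatiallySmooth smooth_divergence.neg duhamel_form x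

end IntegratedEquation

/-! ### The maximum principle and the removal of the cutoff -/

section Truncation

variable {d : ℕ}

theorem deriv_deriv_nonpos_of_isLocalMax {f : ℝ → ℝ} {a : ℝ} (h : IsLocalMax f a)
    (hf : ContinuousAt f a) : deriv (deriv f) a ≤ 0 := by
  by_contra! deriv_deriv_pos
  have isLocalMin := isLocalMin_of_deriv_deriv_pos deriv_deriv_pos h.deriv_eq_zero hf
  have eventually_const : f =ᶠ[𝓝 a] fun _ => f a := by
    filter_upwards [h, isLocalMin] with x le ge using le_antisymm le ge
  have := eventually_const.deriv.deriv_eq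
  simp_all

theorem SpatiallySmooth.hasDerivAt_line {v : BddFun d} (hv : SpatiallySmooth v) (t : ℝ)
    (x : Fin d → ℝ) (i : Fin d) (a : ℝ) :
    HasDerivAt (fun a : ℝ => v (t, x + a • Pi.single i (1 : ℝ)))
      (spatialDeriv i v (t, x + a • Pi.single i (1 : ℝ))) a := by
  have line : HasDerivAt (fun a : ℝ => x + a • (Pi.single i (1 : ℝ) : Fin d → ℝ))
      (Pi.single i (1 : ℝ)) a := by
    simpa using ((hasDerivAt_id a).smul_const (Pi.single i (1 : ℝ) : Fin d → ℝ)).const_add x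
  rw [← hv.pdv_slice]
  exact ((hv.contDiff_slice t).differentiable (by simp) _).hasFDerivAt.comp_hasDerivAt a line

theorem SpatiallySmooth.spatialDeriv_eq_zero_and_nonpos {v : BddFun d} (hv : SpatiallySmooth v)
    {t : ℝ} {x : Fin d → ℝ} (hmax : ∀ y, v (t, y) ≤ v (t, x)) (i : Fin d) :
    spatialDeriv i v (t, x) = 0 ∧ spatialDeriv i (spatialDeriv i v) (t, x) ≤ 0 := by
  let g (a : ℝ) : ℝ := v (t, x + a • Pi.single i (1 : ℝ))
  have isLocalMax : IsLocalMax g 0 := .of_forall fun a => by simpa [g] using hmax _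
  have deriv_g : deriv g = fun a => spatialDeriv i v (t, x + a • Pi.single i (1 : ℝ)) :=
    funext fun a => (hv.hasDerivAt_line t x i a).deriv
  have deriv_deriv_g : deriv (deriv g) 0 = spatialDeriv i (spatialDeriv i v) (t, x) := by
    rw [deriv_g, ((hv.spatialDeriv i).hasDerivAt_line t x i 0).deriv, zero_smul, add_zero]
  constructor
  · simpa [deriv_g] using isLocalMax.deriv_eq_zero
  · exact deriv_deriv_g ▸ deriv_deriv_nonpos_of_isLocalMax isLocalMax
      (hv.hasDerivAt_line t x i 0).continuousAt

theorem exists_lt_of_integral_deriv_lt {y r : ℝ → ℝ} {t ε : ℝ} (ht : 0 < t) (hr : Continuous r)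
    (hrt : r t < ε) (hy : ∀ s ∈ Ioo 0 t, y t - y s = ∫ a in s..t, r a) :
    ∃ s ∈ Ioo 0 t, y t - ε * t < y s - ε * s := by
  have near : ∀ᶠ s in 𝓝[<] t, r s < ε ∧ 0 < s := mem_nhdsWithin_of_mem_nhds <|
    (hr.continuousAt.eventually (gt_mem_nhds hrt)).and (lt_mem_nhds ht)
  obtain ⟨l, l_lt, near_l⟩ := (mem_nhdsLT_iff_exists_Ioo_subset).1 near
  obtain ⟨s, l_lt_s, s_lt⟩ := exists_between (mem_Iio.1 l_lt)
  have hs : s ∈ Ioo 0 t := ⟨(near_l ⟨l_lt_s, s_lt⟩).2, s_lt⟩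
  have integral_lt : ∫ a in s..t, r a < ∫ _ in s..t, ε := by
    refine intervalIntegral.integral_lt_integral_of_continuousOn_of_le_of_exists_lt s_lt
      hr.continuousOn continuousOn_const (fun a ha => ?_) ⟨t, right_mem_Icc.2 s_lt.le, hrt⟩
    rcases ha.2.eq_or_lt with rfl | a_lt
    · exact hrt.le
    · exact (near_l ⟨l_lt_s.trans ha.1, a_lt⟩).1.le
  rw [intervalIntegral.integral_const, smul_eq_mul, ← hy s hs] at integral_lt
  exact ⟨s, hs, by linarith⟩

theorem exists_isMax_sub_mul_time {v : BddFun d} (hv : SpatiallyPeriodic v) (T : ℝ≥0) (ε : ℝ) :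
    ∃ t₀ ∈ Icc (0 : ℝ) T, ∃ x₀, ∀ t ∈ Icc (0 : ℝ) T, ∀ x,
      v (t, x) - ε * t ≤ v (t₀, x₀) - ε * t₀ := by
  have nonempty : (Icc (0 : ℝ) T ×ˢ cube d).Nonempty :=
    ⟨(0, 0), left_mem_Icc.2 T.2, le_rfl, zero_le_one⟩
  obtain ⟨⟨t₀, x₀⟩, ⟨ht₀, -⟩, isMax⟩ := (isCompact_Icc.prod isCompact_cube).exists_isMaxOn nonempty
    (f := fun p : SpaceTime d => v p - ε * p.1) (by fun_prop)
  refine ⟨t₀, ht₀, x₀, fun t ht x => ?_⟩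
  obtain ⟨n, hn⟩ := exists_add_intCast_mem_cube x
  rw [← hv.apply_add_intCast t n x]
  exact isMax ⟨ht, hn⟩

theorem maximum_principle {v : BddFun d} (hv : SpatiallySmooth v) (periodic_v : SpatiallyPeriodic v)
    (c : Fin d → BddFun d) (T : ℝ≥0) {f : (Fin d → ℝ) → ℝ} {b : ℝ} (hf : ∀ x, f x ≤ b)
    (heq : ∀ t ∈ Icc (0 : ℝ) T, ∀ x, v (t, x) = f x +
      ∫ s in (0 : ℝ)..t, (laplacian v - ∑ i, c i * spatialDeriv i v) (s, x))
    {t : ℝ} (ht : t ∈ Icc (0 : ℝ) T) (x : Fin d → ℝ) : v (t, x) ≤ b := by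
  suffices perturbed : ∀ ε > 0, v (t, x) - ε * t ≤ b by
    refine le_of_forall_pos_le_add fun δ hδ => ?_
    have scaled : δ / (t + 1) * t ≤ δ := by
      have := ht.1
      rw [div_mul_eq_mul_div, div_le_iff₀ (by positivity)]
      nlinarith
    linarith [perturbed (δ / (t + 1)) (div_pos hδ (by linarith [ht.1]))]
  intro ε hε
  obtain ⟨t₀, ht₀, x₀, isMax⟩ := exists_isMax_sub_mul_time periodic_v T ε
  refine (isMax t ht x).trans ?_
  rcases ht₀.1.eq_or_lt with rfl | t₀_pos
  · simpa [heq 0 ht₀ x₀] using hf x₀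
  exfalso
  set r := laplacian v - ∑ i, c i * spatialDeriv i v with r_def
  have critical := hv.spatialDeriv_eq_zero_and_nonpos
    fun y => sub_le_sub_iff_right (ε * t₀) |>.1 (isMax t₀ ht₀ y)
  have r_nonpos : r (t₀, x₀) ≤ 0 := by
    simp only [r_def, laplacian, BoundedContinuousFunction.sub_apply,
      BoundedContinuousFunction.sum_apply, BoundedContinuousFunction.mul_apply, (critical _).1,
      mul_zero, Finset.sum_const_zero, sub_zero]
    exact Finset.sum_nonpos fun i _ => (critical i).2
  have continuous_r := continuous_timeSlice r x₀
  obtain ⟨s, hs, lt⟩ := exists_lt_of_integral_deriv_lt (y := fun s => v (s, x₀)) t₀_pos continuous_r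
    (r_nonpos.trans_lt hε) fun s hs => by
      rw [heq t₀ ht₀, heq s ⟨hs.1.le, hs.2.le.trans ht₀.2⟩, add_sub_add_left_eq_sub]
      exact intervalIntegral.integral_interval_sub_left (continuous_r.intervalIntegrable _ _)
        (continuous_r.intervalIntegrable _ _)
  exact lt.not_ge (isMax s ⟨hs.1.le, hs.2.le.trans ht₀.2⟩ x₀)

theorem SpatiallyPeriodic.neg {u : BddFun d} (hu : SpatiallyPeriodic u) :
    SpatiallyPeriodic (-u) := fun n => by rw [map_neg, hu]

theorem SpatiallyPeriodic.nemytskii {u : BddFun d} (hu : SpatiallyPeriodic u) {ψ : ℝ → ℝ}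
    (hψ : IsCutoff ψ) : SpatiallyPeriodic (nemytskii hψ u) := fun n => by
  rw [translate_nemytskii, hu]

section Divergence

variable {K : (Fin d → ℝ) → Fin d → ℝ} (hK : ∀ i, IntegrableOn (fun y => K y i) (cube d))
  (hdiv : DistDivFree K)

include hdiv

theorem sum_convKernel_operator_spatialDeriv {w : BddFun d} (hw : SpatiallySmooth w)
    (periodic_w : SpatiallyPeriodic w) :
    ∑ i, (convKernel (hK i)).operator (spatialDeriv i w) = 0 := by
  ext ⟨t, x⟩
  have pdv_reflect (i : Fin d) (y : Fin d → ℝ) :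
      pdv i (fun y => -w (t, x - y)) y = spatialDeriv i w (t, x - y) := by
    have := ((hw.contDiff_slice t).differentiable (by simp) (x - y)).hasFDerivAt.comp y
      ((hasFDerivAt_id y).const_sub x)
    rw [← hw.pdv_slice, pdv, pdv]
    exact (DFunLike.congr_fun this.neg.fderiv (Pi.single i 1)).trans (by simp)
  have contDiff_reflect : ContDiff ℝ ∞ fun y => -w (t, x - y) :=
    ((hw.contDiff_slice t).comp (contDiff_const.sub contDiff_id)).neg
  have per_reflect : Per fun y => -w (t, x - y) := fun n y => by
    simp only [sub_add_eq_sub_sub]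
    rw [← periodic_w.apply_add_intCast t n (x - y - _), sub_add_cancel]
  have tested := hdiv _ contDiff_reflect per_reflect
  simp only [pdv_reflect] at tested
  rw [BoundedContinuousFunction.sum_apply, BoundedContinuousFunction.coe_zero, Pi.zero_apply,
    ← tested]
  exact (integral_finsetSum _ fun i _ =>
    (convKernel (hK i)).integrable_weight_mul (spatialDeriv i w) (t, x)).symm

theorem sum_spatialDeriv_flux {χ : ℝ → ℝ} (hχ : IsCutoff χ) {u : BddFun d}
    (hu : SpatiallySmooth u) (periodic_u : SpatiallyPeriodic u) :
    ∑ i, spatialDeriv i (flux (hK i) hχ u) =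
      ∑ i, (convKernel (hK i)).operator (nemytskii hχ u) * spatialDeriv i (nemytskii hχ u) := by
  have smooth_cut := hu.nemytskii hχ
  simp only [flux, spatialDeriv_mul (smooth_cut.map (translationInvariant_convKernel _)) smooth_cut,
    spatialDeriv_map smooth_cut (translationInvariant_convKernel _), Finset.sum_add_distrib,
    ← Finset.sum_mul, zero_mul, zero_add,
    sum_convKernel_operator_spatialDeriv hK hdiv smooth_cut (periodic_u.nemytskii hχ)]

theorem truncated_solution_mem_Icc {χ : ℝ → ℝ} (hχ : IsCutoff χ) (T : ℝ≥0)
    {f : (Fin d → ℝ) → ℝ} {a b : ℝ} (hf : ∀ x, f x ∈ Icc a b) {u : BddFun d}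
    (hu : SpatiallySmooth u) (periodic_u : SpatiallyPeriodic u)
    (heq : ∀ t ∈ Icc (0 : ℝ) T, ∀ x, u (t, x) = f x +
      ∫ s in (0 : ℝ)..t, (laplacian u - ∑ i, spatialDeriv i (flux (hK i) hχ u)) (s, x))
    {t : ℝ} (ht : t ∈ Icc (0 : ℝ) T) (x : Fin d → ℝ) : u (t, x) ∈ Icc a b := by
  let drift (i : Fin d) : BddFun d :=
    (convKernel (hK i)).operator (nemytskii hχ u) * nemytskii hχ.deriv u
  have transport_form : ∑ i, spatialDeriv i (flux (hK i) hχ u) =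
      ∑ i, drift i * spatialDeriv i u := by
    simp only [sum_spatialDeriv_flux hK hdiv hχ hu periodic_u, spatialDeriv_nemytskii hu, drift,
      mul_assoc]
  rw [transport_form] at heq
  have neg_form : laplacian (-u) - ∑ i, drift i * spatialDeriv i (-u) =
      -(laplacian u - ∑ i, drift i * spatialDeriv i u) := by
    have mul_neg_spatialDeriv (i : Fin d) :
      drift i * -spatialDeriv i u = -(drift i * spatialDeriv i u) := by
      ext
      simp
    simp only [laplacian, spatialDeriv_neg, mul_neg_spatialDeriv, Finset.sum_neg_distrib, neg_sub']
  constructor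
  · refine neg_le_neg_iff.1 (maximum_principle hu.neg periodic_u.neg drift T
      (f := fun x => -f x) (fun x => neg_le_neg (hf x).1) (fun t ht x => ?_) ht x)
    simp only [neg_form, BoundedContinuousFunction.coe_neg, Pi.neg_apply,
      intervalIntegral.integral_neg, heq t ht x, neg_add]
  · exact maximum_principle hu periodic_u drift T (fun x => (hf x).2) heq ht x

theorem exists_bounded_solution (T : ℝ≥0) {f : (Fin d → ℝ) → ℝ} (hf : SmoothPer f) {a b : ℝ}
    (hab : ∀ x, f x ∈ Icc a b) :
    ∃ u : BddFun d, SpatiallySmooth u ∧ SpatiallyPeriodic u ∧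
      (∀ t ∈ Icc (0 : ℝ) T, ∀ x, u (t, x) ∈ Icc a b) ∧
      ∀ t ∈ Icc (0 : ℝ) T, ∀ x, u (t, x) = f x + ∫ s in (0 : ℝ)..t,
        (laplacian u - ∑ i, (convKernel (hK i)).operator u * spatialDeriv i u) (s, x) := by
  obtain ⟨χ, hχ, χ_eq⟩ := exists_isCutoff_eq_on_Icc a b
  obtain ⟨u, hu, periodic_u, heq⟩ := exists_truncated_solution hK hχ T hf
  have bounds (t : ℝ) (ht : t ∈ Icc (0 : ℝ) T) (x : Fin d → ℝ) : u (t, x) ∈ Icc a b :=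
    truncated_solution_mem_Icc hK hdiv hχ T hab hu periodic_u heq ht x
  refine ⟨u, hu, periodic_u, bounds, fun t ht x => ?_⟩
  rw [heq t ht x, sum_spatialDeriv_flux hK hdiv hχ hu periodic_u]
  congr 1
  refine intervalIntegral.integral_congr fun s hs => ?_
  rw [uIcc_of_le ht.1] at hs
  have cut_eq (x : Fin d → ℝ) : nemytskii hχ u (s, x) = u (s, x) :=
    χ_eq _ (bounds s ⟨hs.1, hs.2.trans ht.2⟩ x)
  simp only [BoundedContinuousFunction.sub_apply, BoundedContinuousFunction.sum_apply,
    BoundedContinuousFunction.mul_apply, convKernel_operator_apply, ← hu.pdv_slice,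
    ← (hu.nemytskii hχ).pdv_slice, cut_eq]

end Divergence

end Truncation

/-! ### Regularity in time -/

section TimeRegularity

variable {d : ℕ}

/-- The value at time `t`, regarded as a function of `(s, x)` that is constant in `s`. -/
def timeEval (t : ℝ) : BddFun d →L[ℝ] BddFun d :=
  BoundedContinuousFunction.compContinuousCLM ℝ ℝ ⟨fun p : SpaceTime d => (t, p.2), by fun_prop⟩

@[simp] theorem timeEval_apply (t : ℝ) (f : BddFun d) (p : SpaceTime d) :
    timeEval t f p = f (t, p.2) := rfl

theorem translationInvariant_timeEval (t : ℝ) :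
    TranslationInvariant (timeEval t : BddFun d →L[ℝ] BddFun d) := fun _ _ => rfl

/-- The kernel of the operator `g ↦ ∫₀ᵗ g(s, ·) ds`, after the substitution `s = t a`. -/
def timeIntegralKernel (d : ℕ) (t : ℝ) :
    DominatedKernel (SpaceTime d) (volume.restrict (Ioo (0 : ℝ) 1)) where
  weight _ _ := t
  point p a := (t * a, p.2)
  bound _ := ‖t‖
  integrable_bound := integrable_const _
  continuous_weight _ := continuous_const
  continuous_point _ := by fun_prop
  aestronglyMeasurable_weight _ := aestronglyMeasurable_const
  measurable_point _ := by fun_prop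
  norm_weight_le _ _ := le_rfl

@[simp] theorem timeIntegralKernel_operator_apply (t : ℝ) (g : BddFun d) (p : SpaceTime d) :
    (timeIntegralKernel d t).operator g p = ∫ s in (0 : ℝ)..t, g (s, p.2) := by
  change ∫ a in Ioo (0 : ℝ) 1, t * g (t * a, p.2) = _
  rw [← integral_Ioc_eq_integral_Ioo, ← intervalIntegral.integral_of_le zero_le_one,
    intervalIntegral.integral_const_mul,
    intervalIntegral.mul_integral_comp_mul_left (f := fun s => g (s, p.2)), mul_zero, mul_one]

theorem translationInvariant_timeIntegralKernel (t : ℝ) :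
    TranslationInvariant (timeIntegralKernel d t).operator :=
  (timeIntegralKernel d t).translationInvariant (fun _ _ _ _ => rfl) fun _ _ _ _ => rfl

theorem timeIntegralKernel_operator_convKernel {k : (Fin d → ℝ) → ℝ}
    (hk : IntegrableOn k (cube d)) (t : ℝ) (g : BddFun d) :
    (timeIntegralKernel d t).operator ((convKernel hk).operator g) =
      (convKernel hk).operator ((timeIntegralKernel d t).operator g) := by
  ext ⟨s, x⟩
  have integrable_joint : Integrable (fun z : ℝ × (Fin d → ℝ) => k z.2 * g (z.1, x - z.2))
      ((volume.restrict (uIoc 0 t)).prod (volume.restrict (cube d))) := by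
    have : IsFiniteMeasure (volume.restrict (uIoc 0 t)) := isFiniteMeasure_restrict_Ioc _ _
    refine (hk.comp_snd _).mul_bdd (c := ‖g‖) ?_ (.of_forall fun z => g.norm_coe_le_norm _)
    exact (by fun_prop : Continuous fun z : ℝ × (Fin d → ℝ) => g (z.1, x - z.2))
      |>.aestronglyMeasurable
  simp only [timeIntegralKernel_operator_apply, convKernel_operator_apply,
    ← intervalIntegral.integral_const_mul]
  exact intervalIntegral_integral_swap integrable_joint

/-- `g` is the time derivative of `f` on `[0, T]`, in integrated form. -/
def HasTimeDeriv (T : ℝ≥0) (f g : BddFun d) : Prop :=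
  ∀ t ∈ Icc (0 : ℝ) T, ∀ x, f (t, x) = f (0, x) + ∫ s in (0 : ℝ)..t, g (s, x)

variable {T : ℝ≥0} {f f' g g' : BddFun d}

theorem hasTimeDeriv_iff_timeEval_eq : HasTimeDeriv T f g ↔ ∀ t ∈ Icc (0 : ℝ) T,
    timeEval t f = timeEval 0 f + (timeIntegralKernel d t).operator g :=
  forall₂_congr fun t _ => ⟨fun h => by ext p; simpa using h p.2,
    fun h x => by simpa using DFunLike.congr_fun h (0, x)⟩

namespace HasTimeDeriv

theorem zero : HasTimeDeriv T (0 : BddFun d) 0 := fun _ _ _ => by simp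

theorem add (hf : HasTimeDeriv T f g) (hf' : HasTimeDeriv T f' g') :
    HasTimeDeriv T (f + f') (g + g') := by
  rw [hasTimeDeriv_iff_timeEval_eq] at *
  intro t ht
  rw [map_add, map_add, map_add, hf t ht, hf' t ht, add_add_add_comm]

theorem neg (hf : HasTimeDeriv T f g) : HasTimeDeriv T (-f) (-g) := by
  rw [hasTimeDeriv_iff_timeEval_eq] at *
  intro t ht
  rw [map_neg, map_neg, map_neg, hf t ht, neg_add]

protected theorem spatialDeriv (h : HasTimeDeriv T f g) (hf : SpatiallySmooth f)
    (hg : SpatiallySmooth g) (i : Fin d) :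
    HasTimeDeriv T (spatialDeriv i f) (spatialDeriv i g) := by
  rw [hasTimeDeriv_iff_timeEval_eq] at *
  intro t ht
  have eval (r : ℝ) := translationInvariant_timeEval (d := d) r
  have integral := translationInvariant_timeIntegralKernel (d := d) t
  rw [← spatialDeriv_map hf (eval t), ← spatialDeriv_map hf (eval 0),
    ← spatialDeriv_map hg integral, ← spatialDeriv_add (hf.map (eval 0)) (hg.map integral), h t ht]

protected theorem convKernel (h : HasTimeDeriv T f g) {k : (Fin d → ℝ) → ℝ}
    (hk : IntegrableOn k (cube d)) :
    HasTimeDeriv T ((convKernel hk).operator f) ((convKernel hk).operator g) := by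
  rw [hasTimeDeriv_iff_timeEval_eq] at *
  intro t ht
  have timeEval_convKernel (r : ℝ) :
      timeEval r ((convKernel hk).operator f) = (convKernel hk).operator (timeEval r f) := rfl
  rw [timeEval_convKernel, timeEval_convKernel, timeIntegralKernel_operator_convKernel, ← map_add,
    h t ht]

theorem mul (hf : HasTimeDeriv T f g) (hf' : HasTimeDeriv T f' g') :
    HasTimeDeriv T (f * f') (g * f' + f * g') := by
  intro t ht x
  let F (t : ℝ) := f (0, x) + ∫ s in (0 : ℝ)..t, g (s, x)
  let F' (t : ℝ) := f' (0, x) + ∫ s in (0 : ℝ)..t, g' (s, x)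
  have deriv_F (s : ℝ) : HasDerivAt F (g (s, x)) s :=
    ((continuous_timeSlice g x).integral_hasStrictDerivAt 0 s).hasDerivAt.const_add _
  have deriv_F' (s : ℝ) : HasDerivAt F' (g' (s, x)) s :=
    ((continuous_timeSlice g' x).integral_hasStrictDerivAt 0 s).hasDerivAt.const_add _
  have integral_eq : ∫ s in (0 : ℝ)..t, (g * f' + f * g') (s, x) = F t * F' t - F 0 * F' 0 := by
    rw [← intervalIntegral.integral_deriv_mul_eq_sub (fun s _ => deriv_F s) (fun s _ => deriv_F' s)
      ((continuous_timeSlice g x).intervalIntegrable _ _)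
      ((continuous_timeSlice g' x).intervalIntegrable _ _)]
    refine intervalIntegral.integral_congr fun s hs => ?_
    rw [uIcc_of_le ht.1] at hs
    simp [F, F', ← hf s ⟨hs.1, hs.2.trans ht.2⟩ x, ← hf' s ⟨hs.1, hs.2.trans ht.2⟩ x]
  rw [integral_eq]
  simp [F, F', ← hf t ht x, ← hf' t ht x]

end HasTimeDeriv

/-- Smooth vectors with `n` successive time derivatives on `[0, T]`, all of them smooth
vectors. -/
def TimeRegular (T : ℝ≥0) : ℕ → BddFun d → Prop
  | 0, f => SpatiallySmooth f
  | n + 1, f => SpatiallySmooth f ∧ ∃ g, TimeRegular T n g ∧ HasTimeDeriv T f g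

namespace TimeRegular

variable {n : ℕ}

protected theorem spatiallySmooth (h : TimeRegular T n f) : SpatiallySmooth f := by
  cases n with
  | zero => exact h
  | succ n => exact h.1

theorem of_succ (h : TimeRegular T (n + 1) f) : TimeRegular T n f := by
  induction n generalizing f with
  | zero => exact h.1
  | succ n ih => exact h.imp_right fun ⟨g, hg, hfg⟩ => ⟨g, ih hg, hfg⟩

theorem zero : TimeRegular T n (0 : BddFun d) := by
  induction n with
  | zero => exact SpatiallySmooth.zero
  | succ n ih => exact ⟨SpatiallySmooth.zero, 0, ih, HasTimeDeriv.zero⟩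

theorem add (hf : TimeRegular T n f) (hf' : TimeRegular T n f') : TimeRegular T n (f + f') := by
  induction n generalizing f f' with
  | zero => exact SpatiallySmooth.add hf hf'
  | succ n ih =>
    obtain ⟨smooth_f, g, hg, hfg⟩ := hf
    obtain ⟨smooth_f', g', hg', hfg'⟩ := hf'
    exact ⟨smooth_f.add smooth_f', g + g', ih hg hg', hfg.add hfg'⟩

theorem neg (hf : TimeRegular T n f) : TimeRegular T n (-f) := by
  induction n generalizing f with
  | zero => exact SpatiallySmooth.neg hf
  | succ n ih => exact ⟨hf.1.neg, hf.2.imp' Neg.neg fun _ h => ⟨ih h.1, h.2.neg⟩⟩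

theorem sum {ι : Type*} {s : Finset ι} {f : ι → BddFun d} (hf : ∀ i ∈ s, TimeRegular T n (f i)) :
    TimeRegular T n (∑ i ∈ s, f i) :=
  Finset.sum_induction _ (TimeRegular T n) (fun _ _ => add) zero hf

protected theorem spatialDeriv (hf : TimeRegular T n f) (i : Fin d) :
    TimeRegular T n (spatialDeriv i f) := by
  induction n generalizing f with
  | zero => exact SpatiallySmooth.spatialDeriv hf i
  | succ n ih =>
    obtain ⟨smooth_f, g, hg, hfg⟩ := hf
    exact ⟨smooth_f.spatialDeriv i, _, ih hg, hfg.spatialDeriv smooth_f hg.spatiallySmooth i⟩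

protected theorem convKernel (hf : TimeRegular T n f) {k : (Fin d → ℝ) → ℝ}
    (hk : IntegrableOn k (cube d)) : TimeRegular T n ((convKernel hk).operator f) := by
  induction n generalizing f with
  | zero => exact SpatiallySmooth.map hf (translationInvariant_convKernel hk)
  | succ n ih =>
    obtain ⟨smooth_f, g, hg, hfg⟩ := hf
    exact ⟨smooth_f.map (translationInvariant_convKernel hk), _, ih hg, hfg.convKernel hk⟩

theorem mul (hf : TimeRegular T n f) (hf' : TimeRegular T n f') : TimeRegular T n (f * f') := by
  induction n generalizing f f' with
  | zero => exact SpatiallySmooth.mul hf hf'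
  | succ n ih =>
    have ⟨smooth_f, g, hg, hfg⟩ := hf
    have ⟨smooth_f', g', hg', hfg'⟩ := hf'
    exact ⟨smooth_f.mul smooth_f', _, (ih hg hf'.of_succ).add (ih hf.of_succ hg'), hfg.mul hfg'⟩

end TimeRegular

theorem timeRegular_of_hasTimeDeriv {u : BddFun d} (hu : SpatiallySmooth u)
    {k : Fin d → (Fin d → ℝ) → ℝ} (hk : ∀ i, IntegrableOn (k i) (cube d))
    (h : HasTimeDeriv T u (laplacian u - ∑ i, (convKernel (hk i)).operator u * spatialDeriv i u))
    (n : ℕ) : TimeRegular T n u := by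
  induction n with
  | zero => exact hu
  | succ n ih =>
    refine ⟨hu, _, ?_, h⟩
    rw [sub_eq_add_neg]
    exact (TimeRegular.sum fun i _ => (ih.spatialDeriv i).spatialDeriv i).add
      (TimeRegular.sum fun i _ => (ih.convKernel (hk i)).mul (ih.spatialDeriv i)).neg

/-- The space-time differential with time component `a` and spatial components `v`. -/
def spaceTimeDifferential (a : ℝ) (v : Fin d → ℝ) : SpaceTime d →L[ℝ] ℝ :=
  a • .fst ℝ ℝ (Fin d → ℝ) + ∑ i, v i • (ContinuousLinearMap.proj i).comp (.snd ℝ ℝ (Fin d → ℝ))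

theorem coprod_eq_spaceTimeDifferential (a : ℝ) (v : Fin d → ℝ) :
    (a • ContinuousLinearMap.id ℝ ℝ).coprod
      (∑ i, v i • ContinuousLinearMap.proj (R := ℝ) (φ := fun _ : Fin d => ℝ) i) =
      spaceTimeDifferential a v := by
  ext <;> simp [spaceTimeDifferential]

theorem SpatiallySmooth.hasFDerivAt_slice {u : BddFun d} (hu : SpatiallySmooth u) (t : ℝ)
    (x : Fin d → ℝ) : HasFDerivAt (fun x => u (t, x))
      (∑ i, spatialDeriv i u (t, x) • ContinuousLinearMap.proj (R := ℝ) (φ := fun _ => ℝ) i) x := by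
  refine ((hu.contDiff_slice t).differentiable (by simp) x).hasFDerivAt.congr_fderiv ?_
  ext v
  simp [hu.fderiv_slice_apply, mul_comm]

theorem continuous_timeIntegral (g : BddFun d) :
    Continuous fun q : SpaceTime d => ∫ s in (0 : ℝ)..q.1, g (s, q.2) :=
  intervalIntegral.continuous_parametric_intervalIntegral_of_continuous
    (f := fun (q : SpaceTime d) s => g (s, q.2)) (by fun_prop) continuous_fst

theorem hasFDerivAt_add_timeIntegral (hf : SpatiallySmooth f) (hg : SpatiallySmooth g)
    (p : SpaceTime d) :
    HasFDerivAt (fun q : SpaceTime d => f (0, q.2) + ∫ s in (0 : ℝ)..q.1, g (s, q.2))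
      (spaceTimeDifferential (g p) fun i =>
        spatialDeriv i f (0, p.2) + ∫ s in (0 : ℝ)..p.1, spatialDeriv i g (s, p.2)) p := by
  rw [← coprod_eq_spaceTimeDifferential]
  refine (hasStrictFDerivAt_uncurry_coprod (𝕜 := ℝ) (u := p)
    (f := fun t x => f (0, x) + ∫ s in (0 : ℝ)..t, g (s, x))
    (f₁ := fun t x => g (t, x) • ContinuousLinearMap.id ℝ ℝ)
    (f₂ := fun t x => ∑ i, (spatialDeriv i f (0, x) + ∫ s in (0 : ℝ)..t, spatialDeriv i g (s, x)) •
      ContinuousLinearMap.proj (R := ℝ) (φ := fun _ : Fin d => ℝ) i)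
    (.of_forall fun q => ?_) (.of_forall fun q => ?_) ?_ ?_).hasFDerivAt
  · have deriv_integral := (continuous_timeSlice g q.2).integral_hasStrictDerivAt 0 q.1
    refine (deriv_integral.hasDerivAt.const_add (f (0, q.2))).hasFDerivAt.congr_fderiv ?_
    ext
    simp [Function.HasUncurry.uncurry]
  · have integral_smooth := hg.map (translationInvariant_timeIntegralKernel q.1)
    refine ((hf.hasFDerivAt_slice 0 q.2).add (integral_smooth.hasFDerivAt_slice 0 q.2)
      |>.congr_of_eventuallyEq (.of_forall fun x => ?_)).congr_fderiv ?_
    · simp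
    · simp [spatialDeriv_map hg (translationInvariant_timeIntegralKernel q.1), add_smul,
        Finset.sum_add_distrib, Function.HasUncurry.uncurry]
  · exact (g.continuous.smul continuous_const).continuousAt
  · have continuous_coeff (i : Fin d) : Continuous fun q : SpaceTime d =>
        spatialDeriv i f (0, q.2) + ∫ s in (0 : ℝ)..q.1, spatialDeriv i g (s, q.2) :=
      (by fun_prop : Continuous fun q : SpaceTime d => spatialDeriv i f (0, q.2)).add
        (continuous_timeIntegral _)
    have continuous_differential : Continuous fun q : SpaceTime d =>
        ∑ i, (spatialDeriv i f (0, q.2) + ∫ s in (0 : ℝ)..q.1, spatialDeriv i g (s, q.2)) •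
          ContinuousLinearMap.proj (R := ℝ) (φ := fun _ : Fin d => ℝ) i :=
      continuous_finsetSum _ fun i _ => (continuous_coeff i).smul continuous_const
    exact continuous_differential.continuousAt

theorem HasTimeDeriv.hasFDerivWithinAt (h : HasTimeDeriv T f g) (hf : SpatiallySmooth f)
    (hg : SpatiallySmooth g) {p : SpaceTime d} (hp : p ∈ Icc (0 : ℝ) T ×ˢ univ) :
    HasFDerivWithinAt f (spaceTimeDifferential (g p) fun i => spatialDeriv i f p)
      (Icc (0 : ℝ) T ×ˢ univ) p := by
  simp only [fun i => h.spatialDeriv hf hg i p.1 hp.1 p.2]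
  exact (hasFDerivAt_add_timeIntegral hf hg p).hasFDerivWithinAt.congr
    (fun q hq => h q.1 hq.1 q.2) (h p.1 hp.1 p.2)

theorem TimeRegular.contDiffOn (hT : 0 < T) {n : ℕ} (hf : TimeRegular T n f) :
    ContDiffOn ℝ n f (Icc (0 : ℝ) T ×ˢ univ) := by
  have unique_diff : UniqueDiffOn ℝ (Icc (0 : ℝ) T ×ˢ (univ : Set (Fin d → ℝ))) :=
    (uniqueDiffOn_Icc (by exact_mod_cast hT)).prod uniqueDiffOn_univ
  induction n generalizing f with
  | zero => exact contDiffOn_zero.2 f.continuous.continuousOn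
  | succ n ih =>
    have ⟨smooth_f, g, hg, hfg⟩ := hf
    rw [Nat.cast_add, Nat.cast_one,
      contDiffOn_succ_iff_hasFDerivWithinAt_of_uniqueDiffOn unique_diff]
    refine ⟨by simp, _, ?_, fun p hp => hfg.hasFDerivWithinAt smooth_f hg.spatiallySmooth hp⟩
    exact ((ih hg).smul contDiffOn_const).add
      (ContDiffOn.sum fun i _ => (ih (hf.of_succ.spatialDeriv i)).smul contDiffOn_const)

end TimeRegularity

/-! ### The torus and integration by parts -/

section IntegrationByParts

attribute [local instance] instMeasureSpaceUnitAddCircle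
attribute [local instance] instIsAddHaarMeasureUnitAddCircleVolume
attribute [local instance] instIsProbabilityMeasureUnitAddCircleVolume

variable {d : ℕ}

section Torus

/-- The representative in `(0, 1]^d` of a point of the torus. -/
def torusRepr (z : UnitAddTorus (Fin d)) : Fin d → ℝ :=
  fun i => (AddCircle.equivIoc (1 : ℝ) 0 (z i)).1

/-- The projection of `ℝ^d` onto the torus. -/
def toTorus (x : Fin d → ℝ) : UnitAddTorus (Fin d) := fun i => (x i : UnitAddCircle)

@[simp] theorem toTorus_torusRepr (z : UnitAddTorus (Fin d)) : toTorus (torusRepr z) = z :=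
  funext fun i => (AddCircle.equivIoc (1 : ℝ) 0).symm_apply_apply (z i)

theorem toTorus_add (x y : Fin d → ℝ) : toTorus (x + y) = toTorus x + toTorus y := rfl

theorem toTorus_sub (x y : Fin d → ℝ) : toTorus (x - y) = toTorus x - toTorus y := rfl

theorem measurableSet_halfOpenCube :
    MeasurableSet {x : Fin d → ℝ | ∀ i, x i ∈ Ioc (0 : ℝ) (0 + 1)} :=
  .univ_pi' fun _ => measurableSet_Ioc

theorem halfOpenCube_ae_eq_cube :
    {x : Fin d → ℝ | ∀ i, x i ∈ Ioc (0 : ℝ) (0 + 1)} =ᵐ[volume] cube d := by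
  have eq_pi : {x : Fin d → ℝ | ∀ i, x i ∈ Ioc (0 : ℝ) (0 + 1)} =
      univ.pi fun i => Ioc ((0 : Fin d → ℝ) i) ((1 : Fin d → ℝ) i) := by
    ext
    simp
  rw [eq_pi]
  exact Measure.univ_pi_Ioc_ae_eq_Icc (μ := fun _ : Fin d => (volume : Measure ℝ))

theorem measurePreserving_torusRepr :
    MeasurePreserving (torusRepr (d := d)) volume (volume.restrict (cube d)) := by
  have := (measurePreserving_subtype_coe measurableSet_halfOpenCube).comp
    (UnitAddTorus.measurePreserving_equivPiIoc (d := Fin d) fun _ => (0 : ℝ))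
  rwa [Measure.restrict_congr_set halfOpenCube_ae_eq_cube] at this

theorem measurableEmbedding_torusRepr : MeasurableEmbedding (torusRepr (d := d)) :=
  (MeasurableEmbedding.subtype_coe measurableSet_halfOpenCube).comp
    (UnitAddTorus.measurableEquivPiIoc fun _ : Fin d => (0 : ℝ)).measurableEmbedding

theorem _root_.Per.eq_of_toTorus_eq {E : Type*} {f : (Fin d → ℝ) → E} (hf : Per f) {x y : Fin d → ℝ}
    (h : toTorus x = toTorus y) : f x = f y := by
  have exists_intCast (i : Fin d) : ∃ n : ℤ, x i = y i + n := by
    obtain ⟨n, hn⟩ := AddSubgroup.mem_zmultiples_iff.1 (QuotientAddGroup.eq.1 (congrFun h i))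
    refine ⟨-n, ?_⟩
    simp only [zsmul_eq_mul, mul_one] at hn
    push_cast
    linarith
  choose n hn using exists_intCast
  rw [show x = y + fun i => (n i : ℝ) from funext hn, hf]

theorem integral_cube_eq {E : Type*} [NormedAddCommGroup E] [NormedSpace ℝ E]
    (f : (Fin d → ℝ) → E) : ∫ x in cube d, f x = ∫ z, f (torusRepr z) :=
  (measurePreserving_torusRepr.integral_comp measurableEmbedding_torusRepr f).symm

theorem integral_cube_comp_add_right {E : Type*} [NormedAddCommGroup E] [NormedSpace ℝ E]
    {f : (Fin d → ℝ) → E} (hf : Per f) (h : Fin d → ℝ) :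
    ∫ x in cube d, f (x + h) = ∫ x in cube d, f x := by
  rw [integral_cube_eq, integral_cube_eq,
    ← integral_add_right_eq_self (fun z => f (torusRepr z)) (toTorus h)]
  refine integral_congr_ae (.of_forall fun z => hf.eq_of_toTorus_eq ?_)
  simp only [toTorus_torusRepr, toTorus_add]

theorem tconv_eq {k g : (Fin d → ℝ) → ℝ} (hk : Per k) (hg : Per g) (x : Fin d → ℝ) :
    tconv k g x = ∫ y in cube d, k y * g (x - y) := by
  have : (volume : Measure UnitAddCircle).IsNegInvariant := inferInstance
  have : (volume : Measure (UnitAddTorus (Fin d))).IsNegInvariant := inferInstance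
  rw [tconv, integral_cube_eq, integral_cube_eq,
    ← integral_sub_left_eq_self (fun z => k (torusRepr z) * g (x - torusRepr z)) _ (toTorus x)]
  refine integral_congr_ae (.of_forall fun z => congrArg₂ (· * ·)
    (hk.eq_of_toTorus_eq ?_) (hg.eq_of_toTorus_eq ?_))
  all_goals simp only [toTorus_torusRepr, toTorus_sub, sub_sub_cancel]

theorem convKernel_operator_eq_tconv {k : (Fin d → ℝ) → ℝ} (hk : IntegrableOn k (cube d))
    (periodic_k : Per k) {u : BddFun d} (hu : SpatiallyPeriodic u) (p : SpaceTime d) :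
    (convKernel hk).operator u p = tconv k (fun x => u (p.1, x)) p.2 :=
  (tconv_eq periodic_k (hu.per p.1) p.2).symm

end Torus

namespace SpatiallyPeriodic

variable {u v : BddFun d}

theorem map (hu : SpatiallyPeriodic u) {L : BddFun d →L[ℝ] BddFun d}
    (hL : TranslationInvariant L) : SpatiallyPeriodic (L u) := fun n => by
  rw [← hL, hu]

theorem mul (hu : SpatiallyPeriodic u) (hv : SpatiallyPeriodic v) :
    SpatiallyPeriodic (u * v) := fun n => by
  rw [translate_mul, hu, hv]

end SpatiallyPeriodic

/-! ### Integration by parts and the weak formulation -/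

instance : IsProbabilityMeasure (volume.restrict (cube d)) :=
  ⟨by simp [cube, Real.volume_Icc_pi]⟩

/-- The kernel of the operator `w ↦ ∫_{cube d} w(·, y) dy`. -/
def cubeIntegralKernel (d : ℕ) : DominatedKernel (SpaceTime d) (volume.restrict (cube d)) where
  weight _ _ := 1
  point p y := (p.1, y)
  bound _ := 1
  integrable_bound := integrable_const _
  continuous_weight _ := continuous_const
  continuous_point _ := by fun_prop
  aestronglyMeasurable_weight _ := aestronglyMeasurable_const
  measurable_point _ := by fun_prop
  norm_weight_le _ _ := by simp

/-- The integral over the torus at time `s`, as a functional on bounded continuous functions. -/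
def cubeIntegral (s : ℝ) : BddFun d →L[ℝ] ℝ :=
  (BoundedContinuousFunction.evalCLM ℝ (s, 0)).comp (cubeIntegralKernel d).operator

theorem cubeIntegral_apply (s : ℝ) (w : BddFun d) :
    cubeIntegral s w = ∫ x in cube d, w (s, x) := by
  simp [cubeIntegral, DominatedKernel.operator_apply, cubeIntegralKernel]

variable {u v : BddFun d}

theorem cubeIntegral_translate (hu : SpatiallyPeriodic u) (s : ℝ) (h : Fin d → ℝ) :
    cubeIntegral s (translate h u) = cubeIntegral s u := by
  simp only [cubeIntegral_apply]
  exact integral_cube_comp_add_right (hu.per s) h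

theorem cubeIntegral_spatialDeriv (hu : SpatiallySmooth u) (periodic_u : SpatiallyPeriodic u)
    (s : ℝ) (i : Fin d) : cubeIntegral s (spatialDeriv i u) = 0 := by
  have hasFDerivAt := (cubeIntegral s).hasFDerivAt.comp (0 : Fin d → ℝ) hu.hasFDerivAt_zero
  simp only [Function.comp_def, cubeIntegral_translate periodic_u] at hasFDerivAt
  exact DFunLike.congr_fun (hasFDerivAt.unique (hasFDerivAt_const _ _)) (Pi.single i 1)

theorem cubeIntegral_spatialDeriv_mul (hu : SpatiallySmooth u) (periodic_u : SpatiallyPeriodic u)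
    (hv : SpatiallySmooth v) (periodic_v : SpatiallyPeriodic v) (s : ℝ) (i : Fin d) :
    cubeIntegral s (spatialDeriv i u * v) = -cubeIntegral s (u * spatialDeriv i v) := by
  have := cubeIntegral_spatialDeriv (hu.mul hv) (periodic_u.mul periodic_v) s i
  rw [spatialDeriv_mul hu hv, map_add] at this
  exact eq_neg_of_add_eq_zero_left this

theorem SpatiallyPeriodic.spatialDeriv (hu : SpatiallySmooth u) (periodic_u : SpatiallyPeriodic u)
    (i : Fin d) : SpatiallyPeriodic (spatialDeriv i u) := fun n => by
  rw [← spatialDeriv_map hu (fun h w => by simp only [translate_translate, add_comm]), periodic_u]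

theorem cubeIntegral_laplacian_mul (hu : SpatiallySmooth u) (periodic_u : SpatiallyPeriodic u)
    (hv : SpatiallySmooth v) (periodic_v : SpatiallyPeriodic v) (s : ℝ) :
    cubeIntegral s (laplacian u * v) = cubeIntegral s (u * laplacian v) := by
  simp only [laplacian, Finset.sum_mul, Finset.mul_sum, map_sum]
  refine Finset.sum_congr rfl fun i _ => ?_
  rw [cubeIntegral_spatialDeriv_mul (hu.spatialDeriv i) (.spatialDeriv hu periodic_u i) hv
      periodic_v, cubeIntegral_spatialDeriv_mul hu periodic_u (hv.spatialDeriv i)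
      (.spatialDeriv hv periodic_v i), neg_neg]

theorem cubeIntegral_transport_mul {c : Fin d → BddFun d} (hc : ∀ i, SpatiallySmooth (c i))
    (periodic_c : ∀ i, SpatiallyPeriodic (c i)) (hdiv : ∑ i, spatialDeriv i (c i) = 0)
    (hu : SpatiallySmooth u) (periodic_u : SpatiallyPeriodic u)
    (hv : SpatiallySmooth v) (periodic_v : SpatiallyPeriodic v) (s : ℝ) :
    cubeIntegral s ((∑ i, c i * spatialDeriv i u) * v) =
      -cubeIntegral s (u * ∑ i, c i * spatialDeriv i v) := by
  have divergence_form : ∑ i, c i * spatialDeriv i u = ∑ i, spatialDeriv i (c i * u) := by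
    simp only [spatialDeriv_mul (hc _) hu, Finset.sum_add_distrib, ← Finset.sum_mul, hdiv,
      zero_mul, zero_add]
  simp only [divergence_form, Finset.sum_mul, Finset.mul_sum, map_sum, ← Finset.sum_neg_distrib]
  refine Finset.sum_congr rfl fun i _ => ?_
  rw [cubeIntegral_spatialDeriv_mul ((hc i).mul hu) ((periodic_c i).mul periodic_u) hv periodic_v,
    mul_comm (c i) u, mul_assoc]

section WeakForm

variable {K : (Fin d → ℝ) → Fin d → ℝ} (hK : ∀ i, IntegrableOn (fun y => K y i) (cube d))
  {φ : (Fin d → ℝ) → ℝ}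

theorem integral_transport_mul_eq (periodic_K : Per K) (hdiv : DistDivFree K)
    (hu : SpatiallySmooth u) (periodic_u : SpatiallyPeriodic u) (hφ : SmoothPer φ) (s : ℝ) :
    ∫ x in cube d,
        (laplacian u - ∑ i, (convKernel (hK i)).operator u * spatialDeriv i u) (s, x) * φ x =
      ∫ x in cube d, u (s, x) * ((∑ i, tconv (fun y => K y i) (fun x => u (s, x)) x * pdv i φ x) +
        ∑ i, pdv i (pdv i φ) x) := by
  let c (i : Fin d) : BddFun d := (convKernel (hK i)).operator u
  have invariant (i : Fin d) := translationInvariant_convKernel (hK i)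
  have div_c : ∑ i, spatialDeriv i (c i) = 0 := by
    simp only [c, spatialDeriv_map hu (invariant _)]
    exact sum_convKernel_operator_spatialDeriv hK hdiv hu periodic_u
  have adjoint : cubeIntegral s ((laplacian u - ∑ i, c i * spatialDeriv i u) * hφ.toBddFun) =
      cubeIntegral s (u * (∑ i, c i * spatialDeriv i hφ.toBddFun + laplacian hφ.toBddFun)) := by
    rw [sub_mul, map_sub, cubeIntegral_laplacian_mul hu periodic_u hφ.spatiallySmooth
        hφ.spatiallyPeriodic, cubeIntegral_transport_mul (fun i => hu.map (invariant i))
        (fun i => periodic_u.map (invariant i)) div_c hu periodic_u hφ.spatiallySmooth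
        hφ.spatiallyPeriodic, sub_neg_eq_add, ← map_add, ← mul_add, add_comm]
  have periodic_component (i : Fin d) : Per fun y => K y i := fun n x => congrFun (periodic_K n x) i
  simpa only [cubeIntegral_apply, BoundedContinuousFunction.mul_apply,
    BoundedContinuousFunction.add_apply, BoundedContinuousFunction.sum_apply, laplacian, c,
    SmoothPer.spatialDeriv_toBddFun, SmoothPer.toBddFun_apply,
    convKernel_operator_eq_tconv (hK _) (periodic_component _) periodic_u] using adjoint

theorem HasTimeDeriv.integral_mul_sub {T : ℝ≥0} {g : BddFun d} (h : HasTimeDeriv T u g)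
    (hφ : Continuous φ) {t : ℝ} (ht : t ∈ Icc (0 : ℝ) T) :
    (∫ x in cube d, u (t, x) * φ x) - ∫ x in cube d, u (0, x) * φ x =
      ∫ s in (0 : ℝ)..t, ∫ x in cube d, g (s, x) * φ x := by
  have integrable_slice (s : ℝ) : IntegrableOn (fun x => u (s, x) * φ x) (cube d) :=
    (by fun_prop : Continuous fun x => u (s, x) * φ x).continuousOn.integrableOn_compact
      isCompact_cube
  have integrable_joint : Integrable (fun z : ℝ × (Fin d → ℝ) => g (z.1, z.2) * φ z.2)
      ((volume.restrict (uIoc 0 t)).prod (volume.restrict (cube d))) := by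
    rw [Measure.prod_restrict]
    refine IntegrableOn.mono_set (t := uIcc 0 t ×ˢ cube d) ?_
      (prod_mono uIoc_subset_uIcc subset_rfl)
    exact (by fun_prop : Continuous fun z : ℝ × (Fin d → ℝ) => g (z.1, z.2) * φ z.2)
      |>.continuousOn.integrableOn_compact (isCompact_uIcc.prod isCompact_cube)
  rw [← integral_sub (integrable_slice t) (integrable_slice 0),
    intervalIntegral_integral_swap integrable_joint]
  refine integral_congr_ae (.of_forall fun x => ?_)
  simp only [intervalIntegral.integral_mul_const, h t ht x]
  ring

end WeakForm

end IntegrationByParts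

/-! ### Bounded periodic functions and Fourier coefficients -/

section BoundedFunctions

attribute [local instance] instMeasureSpaceUnitAddCircle
attribute [local instance] instIsAddHaarMeasureUnitAddCircleVolume
attribute [local instance] instIsProbabilityMeasureUnitAddCircleVolume

variable {d : ℕ}

/-- Measurable functions on the torus bounded by `M`, the class containing the time slices of
bounded solutions. -/
structure BoundedPer (M : ℝ) (f : (Fin d → ℝ) → ℝ) : Prop where
  per : Per f
  aestronglyMeasurable : AEStronglyMeasurable f (volume.restrict (cube d))
  abs_le : ∀ x, |f x| ≤ M

theorem aestronglyMeasurable_comp_torusRepr_iff {f : (Fin d → ℝ) → ℝ} :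
    AEStronglyMeasurable (fun z => f (torusRepr z)) volume ↔
      AEStronglyMeasurable f (volume.restrict (cube d)) :=
  measurePreserving_torusRepr.aestronglyMeasurable_comp_iff measurableEmbedding_torusRepr

theorem integrable_comp_torusRepr {f : (Fin d → ℝ) → ℝ} (hf : IntegrableOn f (cube d)) :
    Integrable (fun z => f (torusRepr z)) volume :=
  (measurePreserving_torusRepr.integrable_comp_emb measurableEmbedding_torusRepr).2 hf

namespace BoundedPer

variable {M N : ℝ} {f g : (Fin d → ℝ) → ℝ}

theorem integrable (hf : BoundedPer M f) : IntegrableOn f (cube d) :=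
  Integrable.of_bound hf.aestronglyMeasurable M (.of_forall hf.abs_le)

theorem abs_integral_le (hf : BoundedPer M f) : |∫ x in cube d, f x| ≤ M := by
  have norm_le : ∀ᵐ x ∂volume.restrict (cube d), ‖f x‖ ≤ M := .of_forall hf.abs_le
  simpa using norm_integral_le_of_norm_le_const norm_le

theorem mul (hf : BoundedPer M f) (hg : BoundedPer N g) :
    BoundedPer (M * N) fun x => f x * g x where
  per n x := by simp only [hf.per n x, hg.per n x]
  aestronglyMeasurable := hf.aestronglyMeasurable.mul hg.aestronglyMeasurable
  abs_le x := by
    rw [abs_mul]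
    exact mul_le_mul (hf.abs_le x) (hg.abs_le x) (abs_nonneg _) ((abs_nonneg _).trans (hf.abs_le x))

theorem sub (hf : BoundedPer M f) (hg : BoundedPer N g) :
    BoundedPer (M + N) fun x => f x - g x where
  per n x := by simp only [hf.per n x, hg.per n x]
  aestronglyMeasurable := hf.aestronglyMeasurable.sub hg.aestronglyMeasurable
  abs_le x := (abs_sub _ _).trans (add_le_add (hf.abs_le x) (hg.abs_le x))

theorem comp_sub_left (hf : BoundedPer M f) (x : Fin d → ℝ) :
    BoundedPer M fun y => f (x - y) where
  per n y := by
    beta_reduce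
    rw [← hf.per n (x - _), sub_add_eq_sub_sub, sub_add_cancel]
  aestronglyMeasurable := by
    have : (volume : Measure UnitAddCircle).IsNegInvariant := inferInstance
    have : (volume : Measure (UnitAddTorus (Fin d))).IsNegInvariant := inferInstance
    refine aestronglyMeasurable_comp_torusRepr_iff.1 <|
      ((aestronglyMeasurable_comp_torusRepr_iff.2 hf.aestronglyMeasurable).comp_measurePreserving
        (Measure.measurePreserving_sub_left volume (toTorus x))).congr (.of_forall fun z => ?_)
    exact hf.per.eq_of_toTorus_eq (by simp only [toTorus_torusRepr, toTorus_sub])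
  abs_le y := hf.abs_le (x - y)

end BoundedPer

section Convolution

variable {M : ℝ} {k f : (Fin d → ℝ) → ℝ}

theorem tconv_torusRepr (hk : Per k) (hf : Per f) (z : UnitAddTorus (Fin d)) :
    tconv k f (torusRepr z) = convolution (fun w => k (torusRepr w)) (fun w => f (torusRepr w))
      (ContinuousLinearMap.mul ℝ ℝ) volume z := by
  rw [tconv_eq hk hf, integral_cube_eq]
  refine integral_congr_ae (.of_forall fun w => congrArg (k (torusRepr w) * ·) ?_)
  exact hf.eq_of_toTorus_eq (by simp only [toTorus_torusRepr, toTorus_sub])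

theorem integral_tconv (hk : IntegrableOn k (cube d)) (periodic_k : Per k)
    (hf : IntegrableOn f (cube d)) (periodic_f : Per f) :
    ∫ x in cube d, tconv k f x = (∫ x in cube d, k x) * ∫ x in cube d, f x := by
  simp only [integral_cube_eq, tconv_torusRepr periodic_k periodic_f]
  exact integral_convolution (ContinuousLinearMap.mul ℝ ℝ) (integrable_comp_torusRepr hk)
    (integrable_comp_torusRepr hf)

theorem abs_integral_mul_le {Ω : Type*} [MeasurableSpace Ω] {ν : Measure Ω} {k f : Ω → ℝ}
    (hk : Integrable k ν) (hf : ∀ x, |f x| ≤ M) :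
    |∫ x, k x * f x ∂ν| ≤ (∫ x, |k x| ∂ν) * M := by
  rw [← integral_mul_const, ← norm_eq_abs]
  refine norm_integral_le_of_norm_le (hk.abs.mul_const M) (.of_forall fun x => ?_)
  rw [norm_mul]
  exact mul_le_mul_of_nonneg_left (hf x) (abs_nonneg _)

theorem BoundedPer.integrable_mul_comp_sub_left (hf : BoundedPer M f)
    (hk : IntegrableOn k (cube d)) (x : Fin d → ℝ) :
    IntegrableOn (fun y => k y * f (x - y)) (cube d) :=
  hk.mul_bdd (hf.comp_sub_left x).aestronglyMeasurable (.of_forall (hf.comp_sub_left x).abs_le)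

theorem tconv_sub {N : ℝ} {g : (Fin d → ℝ) → ℝ} (hk : IntegrableOn k (cube d)) (periodic_k : Per k)
    (hf : BoundedPer M f) (hg : BoundedPer N g) (x : Fin d → ℝ) :
    tconv k (fun y => f y - g y) x = tconv k f x - tconv k g x := by
  rw [tconv_eq periodic_k (hf.sub hg).per, tconv_eq periodic_k hf.per, tconv_eq periodic_k hg.per,
    ← integral_sub (hf.integrable_mul_comp_sub_left hk x) (hg.integrable_mul_comp_sub_left hk x)]
  simp only [mul_sub]

theorem BoundedPer.tconv (hf : BoundedPer M f) (hk : IntegrableOn k (cube d))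
    (periodic_k : Per k) : BoundedPer ((∫ y in cube d, |k y|) * M) (tconv k f) where
  per n x := by
    refine integral_congr_ae (.of_forall fun y => congrArg (· * f y) ?_)
    rw [← periodic_k n (x - y), sub_add_eq_add_sub]
  aestronglyMeasurable := by
    refine aestronglyMeasurable_comp_torusRepr_iff.1 ?_
    simp only [tconv_torusRepr periodic_k hf.per]
    exact ((integrable_comp_torusRepr hk).integrable_convolution _
      (integrable_comp_torusRepr hf.integrable)).aestronglyMeasurable
  abs_le x := by
    rw [tconv_eq periodic_k hf.per]
    exact abs_integral_mul_le hk fun y => hf.abs_le _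

theorem sq_integral_mul_le {Ω : Type*} [MeasurableSpace Ω] {ν : Measure Ω} {k f : Ω → ℝ}
    (hk : Integrable k ν) (hf : AEStronglyMeasurable f ν) (bound : ∀ x, |f x| ≤ M) :
    (∫ x, k x * f x ∂ν) ^ 2 ≤ (∫ x, |k x| ∂ν) * ∫ x, |k x| * f x ^ 2 ∂ν := by
  have integrable_mul_abs : Integrable (fun x => |k x| * |f x|) ν :=
    hk.abs.mul_bdd (c := M) hf.norm (.of_forall fun x => by simpa using bound x)
  have integrable_mul_sq : Integrable (fun x => |k x| * f x ^ 2) ν :=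
    hk.abs.mul_bdd (c := M ^ 2) (hf.pow 2) (.of_forall fun x => by
      simpa using pow_le_pow_left₀ (abs_nonneg _) (bound x) 2)
  have nonneg_quadratic (c : ℝ) : 0 ≤ (∫ x, |k x| ∂ν) * (c * c) +
      -2 * (∫ x, |k x| * |f x| ∂ν) * c + ∫ x, |k x| * f x ^ 2 ∂ν := by
    calc 0 ≤ ∫ x, |k x| * (c - |f x|) ^ 2 ∂ν := integral_nonneg fun x => by positivity
      _ = ∫ x, (|k x| * (c * c) + -2 * (|k x| * |f x|) * c + |k x| * f x ^ 2) ∂ν := by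
        refine integral_congr_ae (.of_forall fun x => ?_)
        simp only [← sq_abs (f x)]
        ring
      _ = _ := by
        have integrable_cross := (integrable_mul_abs.const_mul (-2)).mul_const c
        have integrable_linear :
            Integrable (fun x => |k x| * (c * c) + -2 * (|k x| * |f x|) * c) ν :=
          (hk.abs.mul_const _).add integrable_cross
        rw [integral_add integrable_linear integrable_mul_sq,
          integral_add (hk.abs.mul_const _) integrable_cross, integral_mul_const,
          integral_mul_const, integral_const_mul]
  have abs_le : |∫ x, k x * f x ∂ν| ≤ ∫ x, |k x| * |f x| ∂ν :=
    abs_integral_le_integral_abs.trans_eq (by simp only [abs_mul])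
  have := discrim_le_zero nonneg_quadratic
  rw [discrim] at this
  nlinarith [sq_le_sq' (abs_le.trans' (neg_le_abs _) |> neg_le.1) (abs_le.trans' (le_abs_self _))]

theorem integral_tconv_sq_le (hk : IntegrableOn k (cube d)) (periodic_k : Per k)
    (hf : BoundedPer M f) :
    ∫ x in cube d, tconv k f x ^ 2 ≤ (∫ y in cube d, |k y|) ^ 2 * ∫ x in cube d, f x ^ 2 := by
  have hf_sq : BoundedPer (M * M) fun x => f x ^ 2 := by simpa only [sq] using hf.mul hf
  have periodic_abs : Per fun y => |k y| := fun n x => congrArg abs (periodic_k n x)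
  have hconv := hf.tconv hk periodic_k
  have hconv_sq := hf_sq.tconv hk.abs periodic_abs
  calc ∫ x in cube d, tconv k f x ^ 2
      ≤ ∫ x in cube d, (∫ y in cube d, |k y|) * tconv (fun y => |k y|) (fun x => f x ^ 2) x := by
        refine integral_mono (by simpa only [sq, IntegrableOn] using (hconv.mul hconv).integrable)
          (hconv_sq.integrable.const_mul _) fun x => ?_
        simp only [tconv_eq periodic_k hf.per, tconv_eq periodic_abs hf_sq.per]
        exact sq_integral_mul_le hk (hf.comp_sub_left x).aestronglyMeasurable
          (hf.comp_sub_left x).abs_le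
    _ = (∫ y in cube d, |k y|) ^ 2 * ∫ x in cube d, f x ^ 2 := by
        rw [integral_const_mul, integral_tconv hk.abs periodic_abs hf_sq.integrable hf_sq.per]
        ring

end Convolution

section Fourier

/-- The phase `2π n · x` of the Fourier mode of frequency `n`. -/
def phase (n : Fin d → ℤ) (x : Fin d → ℝ) : ℝ := 2 * π * ∑ i, n i * x i

/-- The plane wave of frequency `n`, shifted in phase by `θ`: the cosine mode for `θ = 0` and minus
the sine mode for `θ = π / 2`. -/
def wave (n : Fin d → ℤ) (θ : ℝ) (x : Fin d → ℝ) : ℝ := cos (phase n x + θ)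

/-- The coefficient of `f` against a plane wave. -/
def waveCoeff (n : Fin d → ℤ) (θ : ℝ) (f : (Fin d → ℝ) → ℝ) : ℝ :=
  ∫ x in cube d, f x * wave n θ x

variable (n : Fin d → ℤ) (θ : ℝ)

theorem hasFDerivAt_phase (x : Fin d → ℝ) :
    HasFDerivAt (phase n) ((2 * π) • ∑ i, (n i : ℝ) •
      ContinuousLinearMap.proj (R := ℝ) (φ := fun _ : Fin d => ℝ) i) x :=
  (HasFDerivAt.fun_sum fun i _ => (ContinuousLinearMap.proj (R := ℝ)
    (φ := fun _ : Fin d => ℝ) i).hasFDerivAt.const_mul _).const_mul _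

theorem phase_add_intCast (m : Fin d → ℤ) (x : Fin d → ℝ) :
    phase n (x + fun i => (m i : ℝ)) = phase n x + (∑ i, n i * m i : ℤ) * (2 * π) := by
  simp only [phase, Pi.add_apply, mul_add, Finset.sum_add_distrib]
  push_cast
  ring

theorem wave_add (x y : Fin d → ℝ) : wave n θ (x + y) =
    wave n θ x * wave n 0 y - wave n (θ + π / 2) x * wave n (π / 2) y := by
  have phase_add : phase n (x + y) = phase n x + phase n y := by
    simp only [phase, Pi.add_apply, mul_add, Finset.sum_add_distrib]
  simp only [wave, ← add_assoc, cos_add_pi_div_two, add_zero, phase_add]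
  rw [show phase n x + phase n y + θ = phase n x + θ + phase n y by ring, cos_add]
  ring

theorem wave_mul_wave (m : Fin d → ℤ) (η : ℝ) (x : Fin d → ℝ) : wave m η x * wave n θ x =
    (wave (m + n) (η + θ) x + wave (m - n) (η - θ) x) / 2 := by
  have phase_add : phase (m + n) x + (η + θ) = (phase m x + η) + (phase n x + θ) := by
    simp only [phase, Pi.add_apply, Int.cast_add, add_mul, mul_add, Finset.sum_add_distrib]
    ring
  have phase_sub : phase (m - n) x + (η - θ) = (phase m x + η) - (phase n x + θ) := by
    simp only [phase, Pi.sub_apply, Int.cast_sub, sub_mul, mul_sub, Finset.sum_sub_distrib]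
    ring
  rw [wave, wave, wave, wave, phase_add, phase_sub, cos_add (phase m x + η), cos_sub]
  ring

theorem smoothPer_wave : SmoothPer (wave n θ) where
  contDiff := by
    unfold wave phase
    fun_prop
  per m x := by
    rw [wave, phase_add_intCast, add_right_comm, cos_add_int_mul_two_pi, wave]

theorem boundedPer_wave : BoundedPer 1 (wave n θ) where
  per := (smoothPer_wave n θ).per
  aestronglyMeasurable := (smoothPer_wave n θ).continuous.aestronglyMeasurable
  abs_le _ := abs_cos_le_one _

theorem pdv_wave (i : Fin d) :
    pdv i (wave n θ) = fun x => 2 * π * n i * wave n (θ + π / 2) x := by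
  ext x
  have hasFDerivAt : HasFDerivAt (wave n θ) _ x := ((hasFDerivAt_phase n x).add_const θ).cos
  rw [pdv, hasFDerivAt.fderiv, wave, ← add_assoc, cos_add_pi_div_two]
  simp [Pi.single_apply]
  ring

theorem pdv_pdv_wave (i : Fin d) :
    pdv i (pdv i (wave n θ)) = fun x => -(2 * π * n i) ^ 2 * wave n θ x := by
  ext x
  have differentiable := (smoothPer_wave n (θ + π / 2)).contDiff.differentiable (by simp) x
  rw [pdv_wave, pdv, fderiv_const_mul differentiable, smul_apply, ← pdv, pdv_wave]
  simp only [add_assoc, add_halves, wave, smul_eq_mul]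
  rw [← add_assoc, cos_add_pi]
  ring

theorem integrable_mul_wave {f : (Fin d → ℝ) → ℝ} (hf : IntegrableOn f (cube d)) :
    IntegrableOn (fun x => f x * wave n θ x) (cube d) :=
  hf.mul_bdd (boundedPer_wave n θ).aestronglyMeasurable (.of_forall (boundedPer_wave n θ).abs_le)

theorem waveCoeff_sub {f g : (Fin d → ℝ) → ℝ} (hf : IntegrableOn f (cube d))
    (hg : IntegrableOn g (cube d)) :
    waveCoeff n θ (fun x => f x - g x) = waveCoeff n θ f - waveCoeff n θ g := by
  simp only [waveCoeff, sub_mul]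
  exact integral_sub (integrable_mul_wave n θ hf) (integrable_mul_wave n θ hg)

theorem BoundedPer.abs_waveCoeff_le {M : ℝ} {f : (Fin d → ℝ) → ℝ} (hf : BoundedPer M f) :
    |waveCoeff n θ f| ≤ M :=
  (hf.mul (boundedPer_wave n θ)).abs_integral_le.trans_eq (mul_one M)

theorem waveCoeff_mul_wave {f : (Fin d → ℝ) → ℝ} (hf : IntegrableOn f (cube d)) (m : Fin d → ℤ)
    (η : ℝ) : waveCoeff m η (fun x => f x * wave n θ x) =
      (waveCoeff (m + n) (η + θ) f + waveCoeff (m - n) (η - θ) f) / 2 := by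
  simp only [waveCoeff]
  rw [← integral_add (integrable_mul_wave _ _ hf) (integrable_mul_wave _ _ hf), ← integral_div]
  refine integral_congr_ae (.of_forall fun x => ?_)
  beta_reduce
  rw [mul_assoc, mul_comm (wave n θ x), wave_mul_wave]
  ring

theorem waveCoeff_tconv {M : ℝ} {k f : (Fin d → ℝ) → ℝ} (hk : IntegrableOn k (cube d))
    (periodic_k : Per k) (hf : BoundedPer M f) : waveCoeff n θ (tconv k f) =
      waveCoeff n θ k * waveCoeff n 0 f - waveCoeff n (θ + π / 2) k * waveCoeff n (π / 2) f := by
  have periodic_mul_wave (η : ℝ) : Per fun y => k y * wave n η y := fun m x => by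
    simp only [periodic_k m x, (smoothPer_wave n η).per m x]
  have bounded_mul_wave (η : ℝ) := hf.mul (boundedPer_wave n η)
  have bounded_tconv (η ζ : ℝ) := (bounded_mul_wave η).tconv (integrable_mul_wave n ζ hk)
    (periodic_mul_wave ζ)
  have tconv_mul_wave (x : Fin d → ℝ) : tconv k f x * wave n θ x =
      tconv (fun y => k y * wave n θ y) (fun y => f y * wave n 0 y) x -
        tconv (fun y => k y * wave n (θ + π / 2) y) (fun y => f y * wave n (π / 2) y) x := by
    simp only [tconv_eq, periodic_k, hf.per, periodic_mul_wave, (bounded_mul_wave _).per]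
    rw [← integral_mul_const, ← integral_sub
      ((bounded_mul_wave _).integrable_mul_comp_sub_left (integrable_mul_wave n _ hk) x)
      ((bounded_mul_wave _).integrable_mul_comp_sub_left (integrable_mul_wave n _ hk) x)]
    refine integral_congr_ae (.of_forall fun y => ?_)
    have wave_split := wave_add n θ y (x - y)
    rw [add_sub_cancel] at wave_split
    beta_reduce
    rw [wave_split]
    ring
  simp only [waveCoeff, tconv_mul_wave]
  rw [integral_sub (bounded_tconv _ _).integrable (bounded_tconv _ _).integrable]
  simp only [integral_tconv, integrable_mul_wave, hk, periodic_mul_wave,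
    (bounded_mul_wave _).integrable, (bounded_mul_wave _).per]

theorem waveCoeff_add_pi (f : (Fin d → ℝ) → ℝ) : waveCoeff n (θ + π) f = -waveCoeff n θ f := by
  simp only [waveCoeff, wave, ← add_assoc, cos_add_pi, mul_neg, integral_neg]

theorem mFourier_neg_eq (z : UnitAddTorus (Fin d)) :
    UnitAddTorus.mFourier (-n) z =
      wave n 0 (torusRepr z) + wave n (π / 2) (torusRepr z) * Complex.I := by
  have exponent : ∑ i, 2 * (π : ℂ) * Complex.I * ((-n) i : ℤ) * torusRepr z i / (1 : ℝ) =
      (-phase n (torusRepr z) : ℝ) * Complex.I := by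
    simp only [phase, Finset.mul_sum]
    push_cast
    rw [← Finset.sum_neg_distrib, Finset.sum_mul]
    refine Finset.sum_congr rfl fun i _ => ?_
    simp only [Pi.neg_apply]
    push_cast
    ring
  calc UnitAddTorus.mFourier (-n) z
      = ∏ i, fourier ((-n) i) (torusRepr z i : UnitAddCircle) :=
        congrArg (UnitAddTorus.mFourier (-n)) (toTorus_torusRepr z).symm
    _ = Complex.exp ((-phase n (torusRepr z) : ℝ) * Complex.I) := by
        simp only [fourier_coe_apply, ← Complex.exp_sum, exponent]
    _ = _ := by
        rw [Complex.exp_mul_I, ← Complex.ofReal_cos, ← Complex.ofReal_sin, wave, wave,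
          cos_add_pi_div_two, cos_neg, sin_neg, add_zero]

theorem mFourierCoeff_eq {f : (Fin d → ℝ) → ℝ} (hf : IntegrableOn f (cube d)) :
    UnitAddTorus.mFourierCoeff (fun z => (f (torusRepr z) : ℂ)) n =
      waveCoeff n 0 f + waveCoeff n (π / 2) f * Complex.I := by
  have integrable_wave (θ : ℝ) : IntegrableOn (fun x => ((f x * wave n θ x : ℝ) : ℂ)) (cube d) :=
    (integrable_mul_wave n θ hf).ofReal
  calc UnitAddTorus.mFourierCoeff (fun z => (f (torusRepr z) : ℂ)) n
      = ∫ x in cube d, (((f x * wave n 0 x : ℝ) : ℂ) +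
          ((f x * wave n (π / 2) x : ℝ) : ℂ) * Complex.I) := by
        rw [integral_cube_eq]
        refine integral_congr_ae (.of_forall fun z => ?_)
        simp only [mFourier_neg_eq, smul_eq_mul]
        push_cast
        ring
    _ = _ := by
        rw [integral_add (integrable_wave 0) ((integrable_wave _).mul_const _),
          integral_mul_const, integral_complex_ofReal, integral_complex_ofReal, waveCoeff,
          waveCoeff]

theorem BoundedPer.memLp {M : ℝ} {f : (Fin d → ℝ) → ℝ} (hf : BoundedPer M f) :
    MemLp (fun z => (f (torusRepr z) : ℂ)) 2 volume :=
  .of_bound (integrable_comp_torusRepr hf.integrable).ofReal.aestronglyMeasurable M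
    (.of_forall fun z => by simpa using hf.abs_le (torusRepr z))

theorem mFourierCoeff_toLp {f : UnitAddTorus (Fin d) → ℂ} (hf : MemLp f 2 volume) :
    UnitAddTorus.mFourierCoeff (hf.toLp f) n = UnitAddTorus.mFourierCoeff f n :=
  integral_congr_ae (by filter_upwards [hf.coeFn_toLp] with z hz; rw [hz])

theorem hasSum_waveCoeff_mul_waveCoeff {M N : ℝ} {f g : (Fin d → ℝ) → ℝ} (hf : BoundedPer M f)
    (hg : BoundedPer N g) :
    HasSum (fun n => waveCoeff n 0 f * waveCoeff n 0 g +
      waveCoeff n (π / 2) f * waveCoeff n (π / 2) g) (∫ x in cube d, f x * g x) := by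
  have parseval := Complex.hasSum_re <|
    UnitAddTorus.hasSum_prod_mFourierCoeff (hf.memLp.toLp _) (hg.memLp.toLp _)
  have integral_eq : ∫ z, (starRingEnd ℂ) (hf.memLp.toLp _ z) * hg.memLp.toLp _ z =
      ((∫ x in cube d, f x * g x : ℝ) : ℂ) := by
    rw [integral_cube_eq, ← integral_complex_ofReal]
    refine integral_congr_ae ?_
    filter_upwards [hf.memLp.coeFn_toLp, hg.memLp.coeFn_toLp] with z hfz hgz
    simp [hfz, hgz]
  rw [integral_eq, Complex.ofReal_re] at parseval
  refine parseval.congr_fun fun n => ?_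
  simp [mFourierCoeff_toLp, mFourierCoeff_eq n hf.integrable, mFourierCoeff_eq n hg.integrable]

end Fourier

end BoundedFunctions

/-! ### Primitives, energy estimates and Grönwall's inequality -/

theorem intervalIntegrable_of_integrableOn_Icc {E : Type*} [NormedAddCommGroup E] {q : ℝ → E}
    {a b t : ℝ} (hq : IntegrableOn q (Icc a b)) (ht : t ∈ Icc a b) :
    IntervalIntegrable q volume a t :=
  (intervalIntegrable_iff_integrableOn_Icc_of_le ht.1).2 (hq.mono_set (Icc_subset_Icc_right ht.2))

section Primitive

variable {E : Type*} [NormedAddCommGroup E] {q : ℝ → E} {a : ℝ}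

theorem ordConnected_setOf_intervalIntegrable :
    OrdConnected {t | a ≤ t ∧ IntervalIntegrable q volume a t} where
  out' := by
    rintro s ⟨has, -⟩ t ⟨hat, hq⟩ r ⟨hsr, hrt⟩
    refine ⟨has.trans hsr, hq.mono_set ?_⟩
    rw [uIcc_of_le (has.trans hsr), uIcc_of_le hat]
    exact Icc_subset_Icc_right hrt

variable [NormedSpace ℝ E]

theorem continuousOn_primitive_setOf_intervalIntegrable :
    ContinuousOn (fun t => ∫ s in a..t, q s) {t | a ≤ t ∧ IntervalIntegrable q volume a t} := by
  rintro t ⟨hat, hq⟩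
  have continuousOn_Icc {b : ℝ} (hab : a ≤ b) (hb : IntervalIntegrable q volume a b) :
      ContinuousOn (fun t => ∫ s in a..t, q s) (Icc a b) := by
    simpa only [uIcc_of_le hab] using
      intervalIntegral.continuousOn_primitive_interval' hb left_mem_uIcc
  by_cases later : ∃ b, (a ≤ b ∧ IntervalIntegrable q volume a b) ∧ t < b
  · obtain ⟨b, ⟨hab, hb⟩, htb⟩ := later
    refine (continuousOn_Icc hab hb t ⟨hat, htb.le⟩).mono_of_mem_nhdsWithin ?_
    filter_upwards [mem_nhdsWithin_of_mem_nhds (Iio_mem_nhds htb), self_mem_nhdsWithin]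
      with s hsb hs using ⟨hs.1, (mem_Iio.1 hsb).le⟩
  · push Not at later
    exact (continuousOn_Icc hat hq t ⟨hat, le_rfl⟩).mono fun s hs => ⟨hs.1, later s hs⟩

/-- No integrability of `q` is assumed: past its maximal interval of integrability the primitive
takes the junk value `0`. -/
theorem aestronglyMeasurable_primitive (q : ℝ → E) (a : ℝ) :
    AEStronglyMeasurable (fun t => ∫ s in a..t, q s) (volume.restrict (Ici a)) := by
  classical
  set A : Set ℝ := {t | a ≤ t ∧ IntervalIntegrable q volume a t}
  have measurableSet_A : MeasurableSet A := ordConnected_setOf_intervalIntegrable.measurableSet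
  have measurable_indicator : AEStronglyMeasurable (A.indicator fun t => ∫ s in a..t, q s) volume :=
    (aestronglyMeasurable_indicator_iff measurableSet_A).2
      (continuousOn_primitive_setOf_intervalIntegrable.aestronglyMeasurable measurableSet_A)
  refine measurable_indicator.restrict.congr (ae_restrict_of_forall_mem measurableSet_Ici ?_)
  intro t hat
  by_cases ht : t ∈ A
  · exact indicator_of_mem ht _
  · rw [indicator_of_notMem ht]
    exact (intervalIntegral.integral_undef fun hq => ht ⟨hat, hq⟩).symm

end Primitive

theorem sq_intervalIntegral_eq {h : ℝ → ℝ} {a b : ℝ} (hh : IntervalIntegrable h volume a b) :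
    (∫ s in a..b, h s) ^ 2 = ∫ s in a..b, 2 * (h s * ∫ r in a..s, h r) := by
  have continuous_primitive :=
    hh.absolutelyContinuousOnInterval_intervalIntegral left_mem_uIcc
  have by_parts := continuous_primitive.integral_deriv_mul_eq_sub continuous_primitive
  simp only [intervalIntegral.integral_same, mul_zero, sub_zero] at by_parts
  rw [sq, ← by_parts]
  refine intervalIntegral.integral_congr_ae ?_
  filter_upwards [hh.ae_hasDerivAt_integral] with s hs hs_mem
  rw [(hs (uIoc_subset_uIcc hs_mem) a left_mem_uIcc).deriv]
  ring

theorem sq_le_integral_sum_sq {ι : Type*} [Fintype ι] {A : ℝ → ℝ} {m : ι → ℝ} {p : ι → ℝ → ℝ}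
    {a b : ℝ} (hab : a ≤ b) (hp : ∀ i, IntervalIntegrable (p i) volume a b)
    (hp_sq : ∀ i, IntervalIntegrable (fun s => p i s ^ 2) volume a b)
    (hA : IntervalIntegrable A volume a b)
    (eq_integral : ∀ t ∈ Icc a b,
      A t = ∫ s in a..t, (∑ i, m i * p i s - (∑ i, m i ^ 2) * A s)) :
    A b ^ 2 ≤ ∫ s in a..b, ∑ i, p i s ^ 2 := by
  have integrable_rate :
      IntervalIntegrable (fun s => ∑ i, m i * p i s - (∑ i, m i ^ 2) * A s) volume a b := by
    refine .sub ?_ (hA.const_mul _)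
    simpa only [Finset.sum_fn] using IntervalIntegrable.sum _ fun i _ => (hp i).const_mul (m i)
  have integrable_sum_sq : IntervalIntegrable (fun s => ∑ i, p i s ^ 2) volume a b := by
    simpa only [Finset.sum_fn] using IntervalIntegrable.sum _ fun i _ => hp_sq i
  rw [eq_integral b ⟨hab, le_rfl⟩, sq_intervalIntegral_eq integrable_rate]
  refine intervalIntegral.integral_mono_on hab ((integrable_rate.mul_continuousOn
    (intervalIntegral.continuousOn_primitive_interval' integrable_rate left_mem_uIcc)).const_mul _)
    integrable_sum_sq fun s hs => ?_
  rw [← eq_integral s hs]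
  simp only [sub_mul, Finset.sum_mul, ← Finset.sum_sub_distrib, Finset.mul_sum]
  refine Finset.sum_le_sum fun i _ => ?_
  nlinarith [sq_nonneg (m i * A s - p i s), sq_nonneg (m i * A s)]

section Gronwall

variable {N : ℝ → ℝ} {B C T : ℝ} (hC : 0 ≤ C) (hN : IntegrableOn N (Icc 0 T))
  (le_bound : ∀ t ∈ Icc 0 T, N t ≤ B)
  (le_integral : ∀ t ∈ Icc 0 T, N t ≤ C * ∫ s in (0 : ℝ)..t, N s)

include hC hN le_bound le_integral

theorem le_pow_div_factorial_of_le_integral (k : ℕ) :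
    ∀ t ∈ Icc 0 T, N t ≤ B * ((C * t) ^ k / k.factorial) := by
  induction k with
  | zero => simpa using le_bound
  | succ k ih =>
    intro t ht
    calc N t ≤ C * ∫ s in (0 : ℝ)..t, N s := le_integral t ht
      _ ≤ C * ∫ s in (0 : ℝ)..t, B * C ^ k / k.factorial * s ^ k := by
        refine mul_le_mul_of_nonneg_left (intervalIntegral.integral_mono_on ht.1
          (intervalIntegrable_of_integrableOn_Icc hN ht)
          (Continuous.intervalIntegrable (by fun_prop) _ _) fun s hs => ?_) hC
        refine (ih s ⟨hs.1, hs.2.trans ht.2⟩).trans_eq ?_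
        rw [mul_pow]
        ring
      _ = B * ((C * t) ^ (k + 1) / (k + 1).factorial) := by
        rw [intervalIntegral.integral_const_mul, integral_pow, Nat.factorial_succ]
        push_cast
        field_simp
        ring

theorem nonpos_of_le_integral {t : ℝ} (ht : t ∈ Icc 0 T) : N t ≤ 0 := by
  have tendsto_zero := (FloorSemiring.tendsto_pow_div_factorial_atTop (C * t)).const_mul B
  rw [mul_zero] at tendsto_zero
  exact ge_of_tendsto' tendsto_zero fun k =>
    le_pow_div_factorial_of_le_integral hC hN le_bound le_integral k t ht

end Gronwall

section Energy

variable {d : ℕ}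

/-- A bounded family of functions on the torus, measurable in time in the weak sense that each of
its Fourier coefficients is. -/
structure BoundedPath (T M : ℝ) (g : ℝ → (Fin d → ℝ) → ℝ) : Prop where
  boundedPer : ∀ t ∈ Icc 0 T, BoundedPer M (g t)
  aestronglyMeasurable_waveCoeff : ∀ n θ,
    AEStronglyMeasurable (fun t => waveCoeff n θ (g t)) (volume.restrict (Icc 0 T))

namespace BoundedPath

variable {T M N : ℝ} {f g : ℝ → (Fin d → ℝ) → ℝ}

theorem sub (hf : BoundedPath T M f) (hg : BoundedPath T N g) :
    BoundedPath T (M + N) fun t x => f t x - g t x where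
  boundedPer t ht := (hf.boundedPer t ht).sub (hg.boundedPer t ht)
  aestronglyMeasurable_waveCoeff n θ :=
    ((hf.aestronglyMeasurable_waveCoeff n θ).sub (hg.aestronglyMeasurable_waveCoeff n θ)).congr <|
      ae_restrict_of_forall_mem measurableSet_Icc fun t ht =>
        (waveCoeff_sub n θ (hf.boundedPer t ht).integrable (hg.boundedPer t ht).integrable).symm

theorem mul_wave (hf : BoundedPath T M f) (n : Fin d → ℤ) (θ : ℝ) :
    BoundedPath T (M * 1) fun t x => f t x * wave n θ x where
  boundedPer t ht := (hf.boundedPer t ht).mul (boundedPer_wave n θ)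
  aestronglyMeasurable_waveCoeff m η :=
    (((hf.aestronglyMeasurable_waveCoeff _ _).add
      (hf.aestronglyMeasurable_waveCoeff _ _)).mul_const _).congr <|
      ae_restrict_of_forall_mem measurableSet_Icc fun t ht =>
        (waveCoeff_mul_wave n θ (hf.boundedPer t ht).integrable m η).symm

theorem aestronglyMeasurable_integral_mul (hf : BoundedPath T M f) (hg : BoundedPath T N g) :
    AEStronglyMeasurable (fun t => ∫ x in cube d, f t x * g t x) (volume.restrict (Icc 0 T)) :=
  aestronglyMeasurable_of_tendsto_ae Filter.atTop
    (fun F => F.aestronglyMeasurable_fun_sum fun n _ =>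
      ((hf.aestronglyMeasurable_waveCoeff n _).mul (hg.aestronglyMeasurable_waveCoeff n _)).add
        ((hf.aestronglyMeasurable_waveCoeff n _).mul (hg.aestronglyMeasurable_waveCoeff n _)))
    (ae_restrict_of_forall_mem measurableSet_Icc fun t ht =>
      hasSum_waveCoeff_mul_waveCoeff (hf.boundedPer t ht) (hg.boundedPer t ht))

theorem mul (hf : BoundedPath T M f) (hg : BoundedPath T N g) :
    BoundedPath T (M * N) fun t x => f t x * g t x where
  boundedPer t ht := (hf.boundedPer t ht).mul (hg.boundedPer t ht)
  aestronglyMeasurable_waveCoeff n θ := by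
    simpa only [waveCoeff, mul_assoc] using hf.aestronglyMeasurable_integral_mul (hg.mul_wave n θ)

theorem tconv {k : (Fin d → ℝ) → ℝ} (hf : BoundedPath T M f) (hk : IntegrableOn k (cube d))
    (periodic_k : Per k) :
    BoundedPath T ((∫ y in cube d, |k y|) * M) fun t => _root_.tconv k (f t) where
  boundedPer t ht := (hf.boundedPer t ht).tconv hk periodic_k
  aestronglyMeasurable_waveCoeff n θ :=
    (((hf.aestronglyMeasurable_waveCoeff n _).const_mul _).sub
      ((hf.aestronglyMeasurable_waveCoeff n _).const_mul _)).congr <|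
      ae_restrict_of_forall_mem measurableSet_Icc fun t ht =>
        (waveCoeff_tconv n θ hk periodic_k (hf.boundedPer t ht)).symm

theorem integrableOn_waveCoeff (hf : BoundedPath T M f) (n : Fin d → ℤ) (θ : ℝ) :
    IntegrableOn (fun t => waveCoeff n θ (f t)) (Icc 0 T) :=
  Integrable.of_bound (hf.aestronglyMeasurable_waveCoeff n θ) M <|
    ae_restrict_of_forall_mem measurableSet_Icc fun t ht =>
      (hf.boundedPer t ht).abs_waveCoeff_le n θ

theorem integrableOn_waveCoeff_sq (hf : BoundedPath T M f) (n : Fin d → ℤ) (θ : ℝ) :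
    IntegrableOn (fun t => waveCoeff n θ (f t) ^ 2) (Icc 0 T) := by
  simp only [sq]
  exact (hf.integrableOn_waveCoeff n θ).mul_bdd (hf.aestronglyMeasurable_waveCoeff n θ) <|
    ae_restrict_of_forall_mem measurableSet_Icc fun t ht =>
      (hf.boundedPer t ht).abs_waveCoeff_le n θ

theorem integrableOn_integral_sq (hf : BoundedPath T M f) :
    IntegrableOn (fun t => ∫ x in cube d, f t x ^ 2) (Icc 0 T) := by
  simp only [sq]
  exact Integrable.of_bound (hf.aestronglyMeasurable_integral_mul hf) (M * M) <|
    ae_restrict_of_forall_mem measurableSet_Icc fun t ht =>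
      ((hf.boundedPer t ht).mul (hf.boundedPer t ht)).abs_integral_le

end BoundedPath

/-- The Fourier-side form, integrated in time, of the inhomogeneous heat equation
`∂_t w = Δ w - ∇ · G` on `[0, T]`. -/
def SolvesHeatModes (T : ℝ) (w : ℝ → (Fin d → ℝ) → ℝ) (G : Fin d → ℝ → (Fin d → ℝ) → ℝ) : Prop :=
  ∀ n θ, ∀ t ∈ Icc 0 T, waveCoeff n θ (w t) - waveCoeff n θ (w 0) =
    ∫ s in (0 : ℝ)..t, (∑ i, 2 * π * n i * waveCoeff n (θ + π / 2) (G i s) -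
      (∑ i, (2 * π * n i) ^ 2) * waveCoeff n θ (w s))

/-- The energy carried by the Fourier modes of frequency `± n`. -/
def modeEnergy (n : Fin d → ℤ) (f : (Fin d → ℝ) → ℝ) : ℝ :=
  waveCoeff n 0 f ^ 2 + waveCoeff n (π / 2) f ^ 2

theorem hasSum_modeEnergy {M : ℝ} {f : (Fin d → ℝ) → ℝ} (hf : BoundedPer M f) :
    HasSum (fun n => modeEnergy n f) (∫ x in cube d, f x ^ 2) := by
  simpa only [modeEnergy, sq] using hasSum_waveCoeff_mul_waveCoeff hf hf

theorem BoundedPath.integrableOn_modeEnergy {T M : ℝ} {f : ℝ → (Fin d → ℝ) → ℝ}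
    (hf : BoundedPath T M f) (n : Fin d → ℤ) :
    IntegrableOn (fun t => modeEnergy n (f t)) (Icc 0 T) :=
  Integrable.add (hf.integrableOn_waveCoeff_sq n _) (hf.integrableOn_waveCoeff_sq n _)

namespace SolvesHeatModes

variable {T M : ℝ} {w : ℝ → (Fin d → ℝ) → ℝ} {C : Fin d → ℝ} {G : Fin d → ℝ → (Fin d → ℝ) → ℝ}

theorem integrableOn_rate (hw : BoundedPath T M w) (hG : ∀ i, BoundedPath T (C i) (G i))
    (n : Fin d → ℤ) (θ : ℝ) :
    IntegrableOn (fun s => ∑ i, 2 * π * n i * waveCoeff n (θ + π / 2) (G i s) -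
      (∑ i, (2 * π * n i) ^ 2) * waveCoeff n θ (w s)) (Icc 0 T) :=
  Integrable.sub
    (integrable_finsetSum _ fun i _ => ((hG i).integrableOn_waveCoeff n _).const_mul _)
    ((hw.integrableOn_waveCoeff n θ).const_mul _)

theorem sub {N : ℝ} {v : ℝ → (Fin d → ℝ) → ℝ} {D : Fin d → ℝ} {H : Fin d → ℝ → (Fin d → ℝ) → ℝ}
    (solves_w : SolvesHeatModes T w G) (hw : BoundedPath T M w)
    (hG : ∀ i, BoundedPath T (C i) (G i)) (solves_v : SolvesHeatModes T v H)
    (hv : BoundedPath T N v) (hH : ∀ i, BoundedPath T (D i) (H i)) :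
    SolvesHeatModes T (fun t x => w t x - v t x) fun i t x => G i t x - H i t x := by
  intro n θ t ht
  have waveCoeff_sub_eq {s : ℝ} (hs : s ∈ Icc 0 T) (η : ℝ) :
      waveCoeff n η (fun x => w s x - v s x) = waveCoeff n η (w s) - waveCoeff n η (v s) :=
    waveCoeff_sub n η (hw.boundedPer s hs).integrable (hv.boundedPer s hs).integrable
  rw [waveCoeff_sub_eq ht, waveCoeff_sub_eq ⟨le_rfl, ht.1.trans ht.2⟩, sub_sub_sub_comm,
    solves_w n θ t ht, solves_v n θ t ht, ← intervalIntegral.integral_sub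
      (intervalIntegrable_of_integrableOn_Icc (integrableOn_rate hw hG n θ) ht)
      (intervalIntegrable_of_integrableOn_Icc (integrableOn_rate hv hH n θ) ht)]
  refine intervalIntegral.integral_congr fun s hs => ?_
  rw [uIcc_of_le ht.1] at hs
  have hsT : s ∈ Icc 0 T := ⟨hs.1, hs.2.trans ht.2⟩
  simp only [waveCoeff_sub_eq hsT, waveCoeff_sub n _ ((hG _).boundedPer s hsT).integrable
    ((hH _).boundedPer s hsT).integrable, mul_sub, Finset.sum_sub_distrib]
  ring

variable (solves_w : SolvesHeatModes T w G) (hw : BoundedPath T M w)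
  (hG : ∀ i, BoundedPath T (C i) (G i)) (init : w 0 = 0) {t : ℝ} (ht : t ∈ Icc 0 T)

include solves_w hw hG init ht

theorem waveCoeff_sq_le (n : Fin d → ℤ) (θ : ℝ) : waveCoeff n θ (w t) ^ 2 ≤
    ∫ s in (0 : ℝ)..t, ∑ i, waveCoeff n (θ + π / 2) (G i s) ^ 2 := by
  refine sq_le_integral_sum_sq (m := fun i => 2 * π * n i) ht.1
    (fun i => intervalIntegrable_of_integrableOn_Icc ((hG i).integrableOn_waveCoeff n _) ht)
    (fun i => intervalIntegrable_of_integrableOn_Icc ((hG i).integrableOn_waveCoeff_sq n _) ht)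
    (intervalIntegrable_of_integrableOn_Icc (hw.integrableOn_waveCoeff n θ) ht) fun s hs => ?_
  have waveCoeff_init : waveCoeff n θ (w 0) = 0 := by simp [waveCoeff, init]
  rw [← solves_w n θ s ⟨hs.1, hs.2.trans ht.2⟩, waveCoeff_init, sub_zero]

theorem modeEnergy_le (n : Fin d → ℤ) :
    modeEnergy n (w t) ≤ ∫ s in (0 : ℝ)..t, ∑ i, modeEnergy n (G i s) := by
  have integrable_sum_sq (θ : ℝ) :
      IntervalIntegrable (fun s => ∑ i, waveCoeff n θ (G i s) ^ 2) volume 0 t :=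
    intervalIntegrable_of_integrableOn_Icc
      (integrable_finsetSum _ fun i _ => (hG i).integrableOn_waveCoeff_sq n θ) ht
  have waveCoeff_pi (f : (Fin d → ℝ) → ℝ) : waveCoeff n π f = -waveCoeff n 0 f := by
    rw [← waveCoeff_add_pi, zero_add]
  have cos_le := waveCoeff_sq_le solves_w hw hG init ht n 0
  have sin_le := waveCoeff_sq_le solves_w hw hG init ht n (π / 2)
  simp only [zero_add, add_halves, waveCoeff_pi, neg_sq] at cos_le sin_le
  simp only [modeEnergy, Finset.sum_add_distrib]
  rw [intervalIntegral.integral_add (integrable_sum_sq _) (integrable_sum_sq _)]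
  linarith

theorem integral_sq_le : ∫ x in cube d, w t x ^ 2 ≤
    ∫ s in (0 : ℝ)..t, ∑ i, ∫ x in cube d, G i s x ^ 2 := by
  have integrable_modeEnergy (n : Fin d → ℤ) :
      IntegrableOn (fun s => ∑ i, modeEnergy n (G i s)) (Icc 0 T) :=
    integrable_finsetSum _ fun i _ => (hG i).integrableOn_modeEnergy n
  refine hasSum_le_of_sum_le (hasSum_modeEnergy (hw.boundedPer t ht)) fun F => ?_
  calc ∑ n ∈ F, modeEnergy n (w t)
      ≤ ∑ n ∈ F, ∫ s in (0 : ℝ)..t, ∑ i, modeEnergy n (G i s) :=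
        Finset.sum_le_sum fun n _ => modeEnergy_le solves_w hw hG init ht n
    _ = ∫ s in (0 : ℝ)..t, ∑ n ∈ F, ∑ i, modeEnergy n (G i s) :=
        (intervalIntegral.integral_finsetSum fun n _ =>
          intervalIntegrable_of_integrableOn_Icc (integrable_modeEnergy n) ht).symm
    _ ≤ ∫ s in (0 : ℝ)..t, ∑ i, ∫ x in cube d, G i s x ^ 2 := by
        refine intervalIntegral.integral_mono_on ht.1
          (intervalIntegrable_of_integrableOn_Icc
            (integrable_finsetSum _ fun n _ => integrable_modeEnergy n) ht)
          (intervalIntegrable_of_integrableOn_Icc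
            (integrable_finsetSum _ fun i _ => (hG i).integrableOn_integral_sq) ht) fun s hs => ?_
        rw [Finset.sum_comm]
        refine Finset.sum_le_sum fun i _ => sum_le_hasSum F (fun n _ => ?_)
          (hasSum_modeEnergy ((hG i).boundedPer s ⟨hs.1, hs.2.trans ht.2⟩))
        exact add_nonneg (sq_nonneg _) (sq_nonneg _)

end SolvesHeatModes

end Energy

/-! ### Uniqueness -/

section Uniqueness

variable {d : ℕ} {K : (Fin d → ℝ) → (Fin d → ℝ)}

/-- The weak McKean–Vlasov equation `WeakMKV`, restricted to the time interval `[0, T]`. -/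
def WeakMKVOn (T : ℝ) (K : (Fin d → ℝ) → (Fin d → ℝ)) (ρ : ℝ → (Fin d → ℝ) → ℝ) : Prop :=
  ∀ φ, SmoothPer φ → ∀ t ∈ Icc 0 T,
    (∫ x in cube d, ρ t x * φ x) - (∫ x in cube d, ρ 0 x * φ x) =
      ∫ s in (0 : ℝ)..t, ∫ x in cube d, ρ s x *
        ((∑ i, tconv (fun y => K y i) (ρ s) x * pdv i φ x) + ∑ i, pdv i (pdv i φ) x)

/-- A weak solution on `[0, T]` bounded by `M`: the class in which uniqueness is proved. -/
structure BoundedWeakSolution (T M : ℝ) (K : (Fin d → ℝ) → (Fin d → ℝ))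
    (ρ : ℝ → (Fin d → ℝ) → ℝ) : Prop where
  boundedPer : ∀ t ∈ Icc 0 T, BoundedPer M (ρ t)
  weak : WeakMKVOn T K ρ

/-- The `i`-th component of the flux `(K ∗ f) f`. -/
def mkvFlux (K : (Fin d → ℝ) → (Fin d → ℝ)) (i : Fin d) (f : (Fin d → ℝ) → ℝ)
    (x : Fin d → ℝ) : ℝ :=
  tconv (fun y => K y i) f x * f x

/-- The `L¹` norm of the `i`-th component of the kernel. -/
def kernelMass (K : (Fin d → ℝ) → (Fin d → ℝ)) (i : Fin d) : ℝ := ∫ y in cube d, |K y i|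

theorem BoundedWeakSolution.boundedPath {T M : ℝ} {ρ : ℝ → (Fin d → ℝ) → ℝ}
    (hρ : BoundedWeakSolution T M K ρ) : BoundedPath T M ρ where
  boundedPer := hρ.boundedPer
  aestronglyMeasurable_waveCoeff n θ := by
    refine (aestronglyMeasurable_const.add ((aestronglyMeasurable_primitive _ 0).mono_set
      Icc_subset_Ici_self)).congr <| ae_restrict_of_forall_mem measurableSet_Icc fun t ht =>
        (sub_eq_iff_eq_add'.1 (hρ.weak _ (smoothPer_wave n θ) t ht)).symm

section Flux

variable (hK : ∀ i, IntegrableOn (fun y => K y i) (cube d)) (periodic_K : Per K)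
include hK periodic_K

theorem BoundedPer.mkvFlux {M : ℝ} {f : (Fin d → ℝ) → ℝ} (hf : BoundedPer M f) (i : Fin d) :
    BoundedPer (kernelMass K i * M * M) (mkvFlux K i f) :=
  (hf.tconv (hK i) fun n x => congrFun (periodic_K n x) i).mul hf

theorem BoundedPath.mkvFlux {T M : ℝ} {ρ : ℝ → (Fin d → ℝ) → ℝ} (hρ : BoundedPath T M ρ)
    (i : Fin d) : BoundedPath T (kernelMass K i * M * M) fun t => mkvFlux K i (ρ t) :=
  (hρ.tconv (hK i) fun n x => congrFun (periodic_K n x) i).mul hρ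

theorem integral_mul_transport_wave {M : ℝ} {f : (Fin d → ℝ) → ℝ} (hf : BoundedPer M f)
    (n : Fin d → ℤ) (θ : ℝ) :
    ∫ x in cube d, f x * ((∑ i, tconv (fun y => K y i) f x * pdv i (wave n θ) x) +
        ∑ i, pdv i (pdv i (wave n θ)) x) =
      ∑ i, 2 * π * n i * waveCoeff n (θ + π / 2) (mkvFlux K i f) -
        (∑ i, (2 * π * n i) ^ 2) * waveCoeff n θ f := by
  have integrable_flux (i : Fin d) := (integrable_mul_wave n (θ + π / 2)
    (hf.mkvFlux hK periodic_K i).integrable).const_mul (2 * π * n i)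
  simp only [waveCoeff, ← integral_const_mul]
  rw [← integral_finsetSum _ fun i _ => integrable_flux i,
    ← integral_sub (integrable_finsetSum _ fun i _ => integrable_flux i)
      ((integrable_mul_wave n θ hf.integrable).const_mul _)]
  refine integral_congr_ae (.of_forall fun x => ?_)
  simp only [pdv_pdv_wave]
  simp only [pdv_wave, mkvFlux, mul_add, Finset.mul_sum, Finset.sum_mul,
    sub_eq_add_neg, ← Finset.sum_neg_distrib]
  congr 1 <;> exact Finset.sum_congr rfl fun i _ => by ring

theorem BoundedWeakSolution.solvesHeatModes {T M : ℝ} {ρ : ℝ → (Fin d → ℝ) → ℝ}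
    (hρ : BoundedWeakSolution T M K ρ) :
    SolvesHeatModes T ρ fun i t => mkvFlux K i (ρ t) := by
  intro n θ t ht
  rw [waveCoeff, waveCoeff, hρ.weak _ (smoothPer_wave n θ) t ht]
  refine intervalIntegral.integral_congr fun s hs => ?_
  rw [uIcc_of_le ht.1] at hs
  exact integral_mul_transport_wave hK periodic_K (hρ.boundedPer s ⟨hs.1, hs.2.trans ht.2⟩) n θ

theorem sq_mkvFlux_sub_le {M : ℝ} {f g : (Fin d → ℝ) → ℝ} (hf : BoundedPer M f)
    (hg : BoundedPer M g) (i : Fin d) (x : Fin d → ℝ) :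
    (mkvFlux K i f x - mkvFlux K i g x) ^ 2 ≤
      2 * (kernelMass K i * M) ^ 2 * (f x - g x) ^ 2 +
        2 * M ^ 2 * tconv (fun y => K y i) (fun y => f y - g y) x ^ 2 := by
  have periodic_Ki : Per fun y => K y i := fun n x => congrFun (periodic_K n x) i
  have velocity_sq_le := sq_le_sq.2 (((hf.tconv (hK i) periodic_Ki).abs_le x).trans (le_abs_self _))
  have density_sq_le := sq_le_sq.2 ((hg.abs_le x).trans (le_abs_self M))
  have product_rule : mkvFlux K i f x - mkvFlux K i g x =
      tconv (fun y => K y i) f x * (f x - g x) +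
        tconv (fun y => K y i) (fun y => f y - g y) x * g x := by
    rw [mkvFlux, mkvFlux, tconv_sub (hK i) periodic_Ki hf hg]
    ring
  rw [product_rule]
  rw [kernelMass]
  nlinarith [add_sq_le (a := tconv (fun y => K y i) f x * (f x - g x))
      (b := tconv (fun y => K y i) (fun y => f y - g y) x * g x),
    mul_le_mul_of_nonneg_right velocity_sq_le (sq_nonneg (f x - g x)),
    mul_le_mul_of_nonneg_right density_sq_le
      (sq_nonneg (tconv (fun y => K y i) (fun y => f y - g y) x))]

theorem integral_sq_mkvFlux_sub_le {M : ℝ} {f g : (Fin d → ℝ) → ℝ} (hf : BoundedPer M f)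
    (hg : BoundedPer M g) (i : Fin d) :
    ∫ x in cube d, (mkvFlux K i f x - mkvFlux K i g x) ^ 2 ≤
      4 * (kernelMass K i * M) ^ 2 * ∫ x in cube d, (f x - g x) ^ 2 := by
  have periodic_Ki : Per fun y => K y i := fun n x => congrFun (periodic_K n x) i
  have integrable_sq {N : ℝ} {h : (Fin d → ℝ) → ℝ} (hh : BoundedPer N h) :
      IntegrableOn (fun x => h x ^ 2) (cube d) := by
    simpa only [sq] using (hh.mul hh).integrable
  have integrable_sub := (integrable_sq (hf.sub hg)).const_mul (2 * (kernelMass K i * M) ^ 2)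
  have integrable_tconv :=
    (integrable_sq ((hf.sub hg).tconv (hK i) periodic_Ki)).const_mul (2 * M ^ 2)
  refine (integral_mono
    (integrable_sq ((hf.mkvFlux hK periodic_K i).sub (hg.mkvFlux hK periodic_K i)))
    (integrable_sub.add integrable_tconv)
    (sq_mkvFlux_sub_le hK periodic_K hf hg i)).trans ?_
  rw [integral_add' integrable_sub integrable_tconv, integral_const_mul, integral_const_mul]
  have young := mul_le_mul_of_nonneg_left (integral_tconv_sq_le (hK i) periodic_Ki (hf.sub hg))
    (show 0 ≤ 2 * M ^ 2 by positivity)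
  rw [← kernelMass] at young
  linarith

theorem BoundedWeakSolution.integral_sq_sub_le {T M : ℝ} {σ ρ : ℝ → (Fin d → ℝ) → ℝ}
    (hσ : BoundedWeakSolution T M K σ) (hρ : BoundedWeakSolution T M K ρ) (init : σ 0 = ρ 0)
    {t : ℝ} (ht : t ∈ Icc 0 T) : ∫ x in cube d, (σ t x - ρ t x) ^ 2 ≤
      (∑ i, 4 * (kernelMass K i * M) ^ 2) *
        ∫ s in (0 : ℝ)..t, ∫ x in cube d, (σ s x - ρ s x) ^ 2 := by
  have path_flux {τ : ℝ → (Fin d → ℝ) → ℝ} (hτ : BoundedWeakSolution T M K τ) (i : Fin d) :=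
    hτ.boundedPath.mkvFlux hK periodic_K i
  have path_sub := hσ.boundedPath.sub hρ.boundedPath
  have path_flux_sub (i : Fin d) := (path_flux hσ i).sub (path_flux hρ i)
  have solves_sub := (hσ.solvesHeatModes hK periodic_K).sub hσ.boundedPath (path_flux hσ)
    (hρ.solvesHeatModes hK periodic_K) hρ.boundedPath (path_flux hρ)
  refine (solves_sub.integral_sq_le path_sub path_flux_sub (by ext x; simp [init]) ht).trans ?_
  rw [← intervalIntegral.integral_const_mul]
  refine intervalIntegral.integral_mono_on ht.1
    (intervalIntegrable_of_integrableOn_Icc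
      (integrable_finsetSum _ fun i _ => (path_flux_sub i).integrableOn_integral_sq) ht)
    ((intervalIntegrable_of_integrableOn_Icc path_sub.integrableOn_integral_sq ht).const_mul _)
    fun s hs => ?_
  have hsT : s ∈ Icc 0 T := ⟨hs.1, hs.2.trans ht.2⟩
  rw [Finset.sum_mul]
  exact Finset.sum_le_sum fun i _ =>
    integral_sq_mkvFlux_sub_le hK periodic_K (hσ.boundedPer s hsT) (hρ.boundedPer s hsT) i

theorem BoundedWeakSolution.ae_eq {T M : ℝ} {σ ρ : ℝ → (Fin d → ℝ) → ℝ}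
    (hσ : BoundedWeakSolution T M K σ) (hρ : BoundedWeakSolution T M K ρ) (init : σ 0 = ρ 0)
    {t : ℝ} (ht : t ∈ Icc 0 T) : ∀ᵐ x ∂volume.restrict (cube d), σ t x = ρ t x := by
  have path_sub := hσ.boundedPath.sub hρ.boundedPath
  have bounded_sq {s : ℝ} (hs : s ∈ Icc 0 T) :
      BoundedPer ((M + M) * (M + M)) fun x => (σ s x - ρ s x) ^ 2 := by
    simpa only [sq] using (path_sub.boundedPer s hs).mul (path_sub.boundedPer s hs)
  have distance_nonpos : ∫ x in cube d, (σ t x - ρ t x) ^ 2 ≤ 0 :=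
    nonpos_of_le_integral (N := fun s => ∫ x in cube d, (σ s x - ρ s x) ^ 2)
      (Finset.sum_nonneg fun i _ => by positivity) path_sub.integrableOn_integral_sq
      (fun s hs => (le_abs_self _).trans (bounded_sq hs).abs_integral_le)
      (fun s hs => hσ.integral_sq_sub_le hK periodic_K hρ init hs) ht
  have distance_eq_zero := distance_nonpos.antisymm (integral_nonneg fun x => sq_nonneg _)
  filter_upwards [(integral_eq_zero_iff_of_nonneg (fun x => sq_nonneg _)
    (bounded_sq ht).integrable).1 distance_eq_zero] with x hx
  exact sub_eq_zero.1 (sq_eq_zero_iff.1 hx)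

end Flux

end Uniqueness

/-! ### Global solutions -/

section GlobalSolutions

variable {d : ℕ} {K : (Fin d → ℝ) → (Fin d → ℝ)}

/-- A smooth solution on `[0, T]` of the McKean–Vlasov equation with kernel `K` and initial datum
`f`, with values in `[a, b]`. -/
structure SmoothSolution (T a b : ℝ) (K : (Fin d → ℝ) → (Fin d → ℝ)) (f : (Fin d → ℝ) → ℝ)
    (ρ : ℝ → (Fin d → ℝ) → ℝ) : Prop where
  init : ρ 0 = f
  per : ∀ t ∈ Icc 0 T, Per (ρ t)
  mem_Icc : ∀ t ∈ Icc 0 T, ∀ x, ρ t x ∈ Icc a b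
  contDiffOn : ContDiffOn ℝ ∞ (fun p : ℝ × (Fin d → ℝ) => ρ p.1 p.2) (Icc 0 T ×ˢ univ)
  weak : WeakMKVOn T K ρ

theorem exists_smoothSolution (hK : ∀ i, IntegrableOn (fun y => K y i) (cube d))
    (periodic_K : Per K) (hdiv : DistDivFree K) {T : ℝ} (hT : 0 < T) {f : (Fin d → ℝ) → ℝ}
    (hf : SmoothPer f) {a b : ℝ} (hab : ∀ x, f x ∈ Icc a b) : ∃ ρ, SmoothSolution T a b K f ρ := by
  lift T to ℝ≥0 using hT.le
  obtain ⟨u, hu, periodic_u, bounds, duhamel⟩ := exists_bounded_solution hK hdiv T hf hab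
  have init (x : Fin d → ℝ) : u (0, x) = f x := by
    simpa using duhamel 0 ⟨le_rfl, T.2⟩ x
  have hasTimeDeriv : HasTimeDeriv T u
      (laplacian u - ∑ i, (convKernel (hK i)).operator u * spatialDeriv i u) := by
    simpa only [HasTimeDeriv, init] using duhamel
  refine ⟨fun t x => u (t, x), funext init, fun t _ => periodic_u.per t, bounds,
    contDiffOn_infty.2 fun n => TimeRegular.contDiffOn (by exact_mod_cast hT)
      (timeRegular_of_hasTimeDeriv hu hK hasTimeDeriv n), fun φ hφ t ht => ?_⟩
  rw [hasTimeDeriv.integral_mul_sub hφ.continuous ht]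
  simp only [integral_transport_mul_eq hK periodic_K hdiv hu periodic_u hφ]

namespace SmoothSolution

variable {T S a b : ℝ} {f : (Fin d → ℝ) → ℝ} {ρ ρ' : ℝ → (Fin d → ℝ) → ℝ}

theorem congr (h : SmoothSolution T a b K f ρ) (hT : 0 ≤ T) (heq : EqOn ρ' ρ (Icc 0 T)) :
    SmoothSolution T a b K f ρ' where
  init := (heq ⟨le_rfl, hT⟩).trans h.init
  per t ht := heq ht ▸ h.per t ht
  mem_Icc t ht := heq ht ▸ h.mem_Icc t ht
  contDiffOn := h.contDiffOn.congr fun p hp => congrFun (heq hp.1) p.2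
  weak φ hφ t ht := by
    rw [heq ht, heq ⟨le_rfl, hT⟩, h.weak φ hφ t ht]
    refine intervalIntegral.integral_congr fun s hs => ?_
    rw [uIcc_of_le ht.1] at hs
    simp only [heq ⟨hs.1, hs.2.trans ht.2⟩]

theorem continuous (h : SmoothSolution T a b K f ρ) {t : ℝ} (ht : t ∈ Icc 0 T) :
    Continuous (ρ t) :=
  h.contDiffOn.continuousOn.comp_continuous (f := fun x => (t, x)) (by fun_prop)
    fun _ => ⟨ht, mem_univ _⟩

theorem mono (h : SmoothSolution T a b K f ρ) (hST : S ≤ T) : SmoothSolution S a b K f ρ where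
  init := h.init
  per t ht := h.per t ⟨ht.1, ht.2.trans hST⟩
  mem_Icc t ht := h.mem_Icc t ⟨ht.1, ht.2.trans hST⟩
  contDiffOn := h.contDiffOn.mono (prod_mono_left (Icc_subset_Icc_right hST))
  weak φ hφ t ht := h.weak φ hφ t ⟨ht.1, ht.2.trans hST⟩

theorem boundedWeakSolution (h : SmoothSolution T a b K f ρ) {M : ℝ} (hM : max |a| |b| ≤ M) :
    BoundedWeakSolution T M K ρ where
  boundedPer t ht :=
    { per := h.per t ht
      aestronglyMeasurable := (h.continuous ht).aestronglyMeasurable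
      abs_le := fun x =>
        (abs_le_max_abs_abs (h.mem_Icc t ht x).1 (h.mem_Icc t ht x).2).trans hM }
  weak := h.weak

theorem eqOn (hK : ∀ i, IntegrableOn (fun y => K y i) (cube d)) (periodic_K : Per K)
    (h : SmoothSolution T a b K f ρ) (h' : SmoothSolution T a b K f ρ') : EqOn ρ ρ' (Icc 0 T) :=
  fun t ht => (h.per t ht).eq_of_ae_eq_cube (h'.per t ht) (h.continuous ht) (h'.continuous ht) <|
    (h.boundedWeakSolution le_rfl).ae_eq hK periodic_K (h'.boundedWeakSolution le_rfl)
      (h.init.trans h'.init.symm) ht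

end SmoothSolution

theorem exists_global_smoothSolution (hK : ∀ i, IntegrableOn (fun y => K y i) (cube d))
    (periodic_K : Per K) (hdiv : DistDivFree K) {f : (Fin d → ℝ) → ℝ} (hf : SmoothPer f)
    {a b : ℝ} (hab : ∀ x, f x ∈ Icc a b) : ∃ ρ, ∀ T, 0 ≤ T → SmoothSolution T a b K f ρ := by
  choose u hu using fun T : ℝ =>
    exists_smoothSolution hK periodic_K hdiv (T := max T 1) (by positivity) hf hab
  have solution (T : ℝ) : SmoothSolution T a b K f (u T) := (hu T).mono (le_max_left T 1)
  refine ⟨fun t => u t t, fun T hT => (solution T).congr hT fun t ht => ?_⟩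
  exact (solution t).eqOn hK periodic_K ((solution T).mono ht.2) ⟨ht.1, le_rfl⟩

theorem contDiffOn_Ici_prod_of_forall_Icc {E F : Type*} [NormedAddCommGroup E] [NormedSpace ℝ E]
    [NormedAddCommGroup F] [NormedSpace ℝ F] {n : WithTop ℕ∞} {g : ℝ × E → F} {a : ℝ}
    (hg : ∀ T, a ≤ T → ContDiffOn ℝ n g (Icc a T ×ˢ univ)) : ContDiffOn ℝ n g (Ici a ×ˢ univ) := by
  rintro ⟨t, x⟩ ⟨ht, -⟩
  rw [mem_Ici] at ht
  refine (hg (t + 1) (by linarith) (t, x) ⟨⟨ht, by simp⟩, mem_univ _⟩).mono_of_mem_nhdsWithin ?_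
  have before : (Iio (t + 1) ×ˢ univ : Set (ℝ × E)) ∈ 𝓝 (t, x) :=
    (isOpen_Iio.prod isOpen_univ).mem_nhds ⟨by simp, mem_univ _⟩
  filter_upwards [mem_nhdsWithin_of_mem_nhds before, self_mem_nhdsWithin] with p hp hpa
  exact ⟨⟨hpa.1, hp.1.le⟩, mem_univ _⟩

theorem ae_eq_of_weakMKV (hK : ∀ i, IntegrableOn (fun y => K y i) (cube d)) (periodic_K : Per K)
    {a b M : ℝ} {σ ρ : ℝ → (Fin d → ℝ) → ℝ} {t : ℝ} (ht : 0 ≤ t)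
    (hρ : SmoothSolution t a b K (σ 0) ρ) (weak_σ : WeakMKV K σ)
    (hσ : ∀ s, 0 ≤ s → BoundedPer M (σ s)) : ∀ᵐ x ∂volume.restrict (cube d), σ t x = ρ t x := by
  have bounded_σ : BoundedWeakSolution t (max M (max |a| |b|)) K σ :=
    { boundedPer := fun s hs => { hσ s hs.1 with
        abs_le := fun x => ((hσ s hs.1).abs_le x).trans (le_max_left _ _) }
      weak := fun φ hφ s hs => weak_σ φ hφ.contDiff hφ.per s hs.1 }
  exact bounded_σ.ae_eq hK periodic_K (hρ.boundedWeakSolution (le_max_right _ _))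
    hρ.init.symm ⟨ht, le_rfl⟩

end GlobalSolutions

end McKeanVlasov

open McKeanVlasov in
theorem mckean_vlasov_wellposedness_general {d : ℕ} {K : (Fin d → ℝ) → (Fin d → ℝ)}
    (hK : IntegrableOn K (cube d)) (periodic_K : Per K) (hdiv : DistDivFree K)
    {μ₀ : (Fin d → ℝ) → ℝ} (smooth_μ₀ : ContDiff ℝ (⊤ : ℕ∞) μ₀) (periodic_μ₀ : Per μ₀) {a b : ℝ}
    (hab : ∀ x, a ≤ μ₀ x ∧ μ₀ x ≤ b) :
    ∃ ρ : ℝ → (Fin d → ℝ) → ℝ,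
      ρ 0 = μ₀ ∧
      WeakMKV K ρ ∧
      ContDiffOn ℝ (⊤ : ℕ∞) (fun p : ℝ × (Fin d → ℝ) => ρ p.1 p.2) (Ici 0 ×ˢ univ) ∧
      (∀ t, 0 ≤ t → Per (ρ t)) ∧
      (∀ t, 0 ≤ t → ∀ x, a ≤ ρ t x ∧ ρ t x ≤ b) ∧
      (∀ σ : ℝ → (Fin d → ℝ) → ℝ, σ 0 = μ₀ → WeakMKV K σ →
        (∀ t, 0 ≤ t → Per (σ t)) →
        (∀ t, 0 ≤ t → AEStronglyMeasurable (σ t) (volume.restrict (cube d))) →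
        (∃ M, ∀ t, 0 ≤ t → ∀ x, |σ t x| ≤ M) →
        ∀ t, 0 ≤ t → ∀ᵐ x ∂(volume.restrict (cube d)), σ t x = ρ t x) := by
  have integrable_component (i : Fin d) : IntegrableOn (fun y => K y i) (cube d) := hK.eval i
  obtain ⟨ρ, hρ⟩ := exists_global_smoothSolution integrable_component periodic_K hdiv
    ⟨smooth_μ₀, periodic_μ₀⟩ hab
  refine ⟨ρ, (hρ 0 le_rfl).init,
    fun φ smooth_φ periodic_φ t ht => (hρ t ht).weak φ ⟨smooth_φ, periodic_φ⟩ t ⟨ht, le_rfl⟩,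
    contDiffOn_Ici_prod_of_forall_Icc fun T hT => (hρ T hT).contDiffOn,
    fun t ht => (hρ t ht).per t ⟨ht, le_rfl⟩, fun t ht => (hρ t ht).mem_Icc t ⟨ht, le_rfl⟩, ?_⟩
  rintro σ rfl weak_σ periodic_σ measurable_σ ⟨M, hM⟩ t ht
  exact ae_eq_of_weakMKV integrable_component periodic_K ht (hρ t ht) weak_σ
    fun s hs => ⟨periodic_σ s hs, measurable_σ s hs, hM s hs⟩

/-- well-posedness of the nonlinear McKean–Vlasov equation, Theorem 2:
under the assumptions on `K` (in `L¹`, divergence free, `K = ∇·V` with `V ∈ L^∞`),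
for a smooth initial probability density `μ₀` on `T^d` with `1/λ ≤ μ₀ ≤ λ`, the
equation `∂_t ρ = −∇·((K∗ρ)ρ) + Δρ`, `ρ(0) = μ₀`, has a unique bounded solution; this
solution is smooth on `ℝ⁺ × T^d` and satisfies `1/λ ≤ ρ(t,x) ≤ λ` for all `t ≥ 0`. -/
theorem mckean_vlasov_wellposedness (d : ℕ) (hd : 2 ≤ d)
    (K : (Fin d → ℝ) → (Fin d → ℝ))
    (hK_L1 : IntegrableOn K (cube d)) (hK_per : Per K)
    (hK_div : DistDivFree K)
    (V : (Fin d → ℝ) → Fin d → Fin d → ℝ)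
    (hV_per : Per V) (hV_bdd : ∃ M, ∀ x, ‖V x‖ ≤ M)
    (hKV : IsDistDivOf K V)
    (lam : ℝ) (hlam : 1 < lam)
    (μ₀ : (Fin d → ℝ) → ℝ)
    (hμ₀_smooth : ContDiff ℝ (⊤ : ℕ∞) μ₀) (hμ₀_per : Per μ₀)
    (hμ₀_bounds : ∀ x, 1 / lam ≤ μ₀ x ∧ μ₀ x ≤ lam)
    (hμ₀_prob : ∫ x in cube d, μ₀ x = 1) :
    ∃ ρ : ℝ → (Fin d → ℝ) → ℝ,
      ρ 0 = μ₀ ∧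
      WeakMKV K ρ ∧
      ContDiffOn ℝ (⊤ : ℕ∞) (fun p : ℝ × (Fin d → ℝ) => ρ p.1 p.2) (Set.Ici 0 ×ˢ Set.univ) ∧
      (∀ t, 0 ≤ t → Per (ρ t)) ∧
      (∀ t, 0 ≤ t → ∀ x, 1 / lam ≤ ρ t x ∧ ρ t x ≤ lam) ∧
      (∀ σ : ℝ → (Fin d → ℝ) → ℝ, σ 0 = μ₀ → WeakMKV K σ →
        (∀ t, 0 ≤ t → Per (σ t)) →
        (∀ t, 0 ≤ t → AEStronglyMeasurable (σ t) (volume.restrict (cube d))) →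
        (∃ M, ∀ t, 0 ≤ t → ∀ x, |σ t x| ≤ M) →
        ∀ t, 0 ≤ t → ∀ᵐ x ∂(volume.restrict (cube d)), σ t x = ρ t x) :=
  mckean_vlasov_wellposedness_general hK_L1 hK_per hK_div hμ₀_smooth hμ₀_per hμ₀_bounds

end
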